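/- There exist an integer q₁ ≥ 2 and a C^∞ diffeomorphism T of the torus 𝕋² preserving the Haar–Lebesgue probability measure λ such that T is weakly mixing with respect to λ and the upper topological slow entropy of T with respect to the intermediate scaling family a^{int2,8}_m(t) (with base q₁) equals 1. -/

import Mathlib

open MeasureTheory Filter Set
open scoped Topology ENNReal NNReal

noncomputable section

/-- The Bowen metric `d_n^T(x,y) = max_{0 ≤ i ≤ n-1} d(T^i x, T^i y)`. -/
def bowenDist {X : Type*} [PseudoMetricSpace X] (T : X → X) (n : ℕ) (x y : X) : ℝ :=
  (((Finset.range n).sup fun i => nndist (T^[i] x) (T^[i] y)) : ℝ≥0)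

/-- `N_{d_n^T}(ε)`: the minimal number of `(ε,n)`-Bowen balls of `T` needed to cover the
whole space. -/
def bowenCoverNum {X : Type*} [PseudoMetricSpace X] (T : X → X) (n : ℕ) (ε : ℝ) : ℕ :=
  sInf {N : ℕ | ∃ F : Finset X, F.card = N ∧ ∀ y : X, ∃ x ∈ F, bowenDist T n x y < ε}

/-- `N(ε)`: the supremum (`0` if the set is empty, by the `Real.sSup` convention) of all
`t > 0` such that `limsup_n N_{d_n^T}(ε) / a_n(t) > 0`. -/
def topSlowEntFun {X : Type*} [PseudoMetricSpace X] (T : X → X) (a : ℕ → ℝ → ℝ) (ε : ℝ) : ℝ :=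
  sSup {t : ℝ | 0 < t ∧
    0 < Filter.atTop.limsup fun n => (bowenCoverNum T n ε : ℝ≥0∞) / ENNReal.ofReal (a n t)}

/-- The upper topological slow entropy of `T` with respect to the scaling family `a`
equals `E`, i.e. `N(ε) → E` as `ε → 0⁺`. -/
def HasUpperTopSlowEntropy {X : Type*} [PseudoMetricSpace X] (T : X → X)
    (a : ℕ → ℝ → ℝ) (E : ℝ) : Prop :=
  Filter.Tendsto (topSlowEntFun T a) (𝓝[>] (0 : ℝ)) (𝓝 E)

/-- The circle `𝕋¹ = ℝ/ℤ` with its quotient metric and Haar–Lebesgue probability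
measure `volume`. -/
abbrev Torus1 : Type := AddCircle (1 : ℝ)

/-- The 2-torus `𝕋² = ℝ²/ℤ²`, with its quotient (flat) metric, its Borel σ-algebra and
its Haar–Lebesgue probability measure `volume`. -/
abbrev Torus2 : Type := AddCircle (1 : ℝ) × AddCircle (1 : ℝ)

/-- Canonical projection `ℝ² → 𝕋²`. -/
def torusProj : ℝ × ℝ → Torus2 := fun p => ((p.1 : Torus1), (p.2 : Torus1))

/-- `F : ℝ² → ℝ²` is a lift of `T : 𝕋² → 𝕋²`. -/
def IsLiftOf (F : ℝ × ℝ → ℝ × ℝ) (T : Torus2 → Torus2) : Prop :=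
  ∀ p, torusProj (F p) = T (torusProj p)

/-- `T` is a `C^k` diffeomorphism of the torus: it is a bijection and both `T` and `T⁻¹`
admit `C^k` lifts to the universal cover `ℝ²`. -/
def IsCkTorusDiffeo (k : ℕ∞) (T : Torus2 → Torus2) : Prop :=
  Function.Bijective T ∧
  (∃ F : ℝ × ℝ → ℝ × ℝ, ContDiff ℝ k F ∧ IsLiftOf F T) ∧
  (∃ G : ℝ × ℝ → ℝ × ℝ, ContDiff ℝ k G ∧ IsLiftOf G (Function.invFun T))

/-- `T` is weakly mixing w.r.t. the measure `μ`: `T × T` is ergodic for `μ × μ`. -/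
def WeaklyMixing {X : Type*} [MeasurableSpace X] (T : X → X) (μ : Measure X) : Prop :=
  Ergodic (fun p : X × X => (T p.1, T p.2)) (μ.prod μ)

/-- `T` is uniquely ergodic with the Haar–Lebesgue measure `volume` as its unique
invariant Borel probability measure. -/
def UniquelyErgodicWithVolume (T : Torus2 → Torus2) : Prop :=
  MeasurePreserving T volume volume ∧
  ∀ μ : Measure Torus2, IsProbabilityMeasure μ → MeasurePreserving T μ μ → μ = volume

/-- `T` (preserving the Haar measure `volume` on `𝕋²`) is measure-theoretically isomorphic
to the rotation of the circle `𝕋¹ = ℝ/ℤ` by some irrational number `α`. -/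
def IsoToIrrationalRotation (T : Torus2 → Torus2) : Prop :=
  ∃ α : ℝ, Irrational α ∧
    ∃ (A : Set Torus2) (B : Set Torus1) (ψ : Torus2 → Torus1) (φ : Torus1 → Torus2),
      MeasurableSet A ∧ MeasurableSet B ∧
      volume Aᶜ = 0 ∧ volume Bᶜ = 0 ∧
      Set.MapsTo T A A ∧ Set.MapsTo (fun y : Torus1 => y + (α : Torus1)) B B ∧
      Measurable ψ ∧ Measurable φ ∧
      Set.MapsTo ψ A B ∧ Set.MapsTo φ B A ∧
      (∀ x ∈ A, φ (ψ x) = x) ∧ (∀ y ∈ B, ψ (φ y) = y) ∧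
      Measure.map ψ volume = volume ∧
      (∀ x ∈ A, ψ (T x) = ψ x + (α : Torus1))

/-- A finite measurable partition of `X`. -/
structure FinMeasPartition (X : Type*) [MeasurableSpace X] where
  card : ℕ
  piece : Fin card → Set X
  measurable : ∀ i, MeasurableSet (piece i)
  disjoint : Pairwise fun i j => Disjoint (piece i) (piece j)
  cover : (⋃ i, piece i) = Set.univ

open Classical in
/-- The normalized Hamming distance between the length-`n` `P`-codings of the `T`-orbits
of `x` and `y` (the codings differ at time `k` iff `T^k x` and `T^k y` lie in different
pieces of `P`). -/
def codeHammingDist {X : Type*} [MeasurableSpace X] (T : X → X) (P : FinMeasPartition X)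
    (n : ℕ) (x y : X) : ℝ :=
  (((Finset.range n).filter fun k =>
      ¬ ∃ i, T^[k] x ∈ P.piece i ∧ T^[k] y ∈ P.piece i).card : ℝ) / n

/-- `S^H_P(T,n,ε)`: the minimal number of `(ε,n)`-Hamming balls whose union has
`μ`-measure greater than `1 - ε`. -/
def hammingCoverNum {X : Type*} [MeasurableSpace X] (μ : Measure X) (T : X → X)
    (P : FinMeasPartition X) (n : ℕ) (ε : ℝ) : ℕ :=
  sInf {N : ℕ | ∃ F : Finset X, F.card = N ∧
    ENNReal.ofReal (1 - ε) < μ (⋃ x ∈ F, {y | codeHammingDist T P n x y < ε})}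

/-- For a fixed partition `P` and `ε > 0`: the supremum (with the `Real.sSup` convention,
`0` if the set is empty) of all `t > 0` with `limsup_n S^H_P(T,n,ε)/a_n(t) > 0`. -/
def measSlowEntFun {X : Type*} [MeasurableSpace X] (μ : Measure X) (T : X → X)
    (a : ℕ → ℝ → ℝ) (P : FinMeasPartition X) (ε : ℝ) : ℝ :=
  sSup {t : ℝ | 0 < t ∧
    0 < Filter.atTop.limsup fun n =>
      (hammingCoverNum μ T P n ε : ℝ≥0∞) / ENNReal.ofReal (a n t)}

/-- The upper measure-theoretic slow entropy of `(T,μ)` w.r.t. the scaling family `a`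
equals `E`: for every finite measurable partition the limit as `ε → 0⁺` exists, and the
least upper bound over all partitions of these limits is `E`. -/
def HasUpperMeasSlowEntropy {X : Type*} [MeasurableSpace X] (μ : Measure X) (T : X → X)
    (a : ℕ → ℝ → ℝ) (E : ℝ) : Prop :=
  (∀ P : FinMeasPartition X, ∃ e : ℝ,
      Filter.Tendsto (measSlowEntFun μ T a P) (𝓝[>] (0 : ℝ)) (𝓝 e)) ∧
  IsLUB {e : ℝ | ∃ P : FinMeasPartition X,
      Filter.Tendsto (measSlowEntFun μ T a P) (𝓝[>] (0 : ℝ)) (𝓝 e)} E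

/-- `Γ_r(x) = (Γ(x^{1/r} + 1))^r`, where `Γ` is the Euler Gamma function. -/
def GammaR (r : ℕ) (x : ℝ) : ℝ := (Real.Gamma (x ^ ((r : ℝ)⁻¹) + 1)) ^ r

/-- The inverse of `Γ_r` on `[1,∞)` (where `Γ_r` is strictly increasing with `Γ_r 1 = 1`). -/
def GammaRInv (r : ℕ) (y : ℝ) : ℝ := sSup {x : ℝ | 1 ≤ x ∧ GammaR r x ≤ y}

/-- The intermediate scaling family `a^{int1,r}_m(t) = m^(t / Γ_r⁻¹(ln m / ln q₁))`. -/
def intScale1 (r q₁ : ℕ) (m : ℕ) (t : ℝ) : ℝ :=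
  (m : ℝ) ^ (t / GammaRInv r (Real.log m / Real.log q₁))

/-- The intermediate scaling family
`a^{int2,r}_m(t) = m^(t / (Γ_r⁻¹(ln m / ln q₁))^((r-2)/r))`. -/
def intScale2 (r q₁ : ℕ) (m : ℕ) (t : ℝ) : ℝ :=
  (m : ℝ) ^ (t / GammaRInv r (Real.log m / Real.log q₁) ^ (((r : ℝ) - 2) / (r : ℝ)))

/-- The logarithmic scaling family `a^{ln}_m(t) = (ln m)^t`. -/
def logScale (m : ℕ) (t : ℝ) : ℝ := Real.log m ^ t

/-- The polynomial scaling family `a^{pol}_m(t) = m^t`. -/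
def polScale (m : ℕ) (t : ℝ) : ℝ := (m : ℝ) ^ t

end

lemma GammaR_eight (s : ℝ) (hs : 0 ≤ s) : GammaR 8 (s ^ 8) = Real.Gamma (s + 1) ^ 8 := by
  unfold GammaR
  congr 3
  rw [← Real.rpow_natCast s 8, ← Real.rpow_mul hs]
  norm_num

lemma Gamma_succ_strictMono : StrictMonoOn (fun s : ℝ => Real.Gamma (s + 1)) (Ici 1) := by
  intro s hs t ht hst
  exact Real.Gamma_strictMonoOn_Ici (by simp at hs ⊢; linarith) (by simp at ht ⊢; linarith)
    (by linarith)

lemma le_Gamma_succ {s : ℝ} (hs : 2 ≤ s) : s ≤ Real.Gamma (s + 1) := by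
  rw [Real.Gamma_add_one (by linarith)]
  have : Real.Gamma 2 ≤ Real.Gamma s :=
    Real.Gamma_strictMonoOn_Ici.monotoneOn (by simp) (by simpa using hs) hs
  rw [Real.Gamma_two] at this
  nlinarith

/-- inverse of `s ↦ Γ(s+1)^8`. -/
lemma exists_s (y : ℝ) (hy : 1 ≤ y) : ∃ s : ℝ, 1 ≤ s ∧ Real.Gamma (s + 1) ^ 8 = y := by
  have hc : ContinuousOn (fun s : ℝ => Real.Gamma (s + 1) ^ 8) (Icc 1 (y + 2)) := by
    apply ContinuousOn.pow
    intro s hs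
    apply ContinuousAt.continuousWithinAt
    have : ContinuousAt Real.Gamma (s + 1) := by
      apply (Real.differentiableAt_Gamma _).continuousAt
      intro m hm
      have := hs.1
      have h2 : (0 : ℝ) ≤ m := by positivity
      linarith
    exact ContinuousAt.comp (f := fun s : ℝ => s + 1) this (by fun_prop)
  have h := intermediate_value_Icc (by linarith : (1 : ℝ) ≤ y + 2) hc
  have hy2 : y ∈ Icc (Real.Gamma (1 + 1) ^ 8) (Real.Gamma (y + 2 + 1) ^ 8) := by
    constructor
    · norm_num [Real.Gamma_two]; exact hy
    · have h1 := le_Gamma_succ (s := y + 2) (by linarith)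
      calc y ≤ Real.Gamma (y + 2 + 1) := by linarith
        _ ≤ _ := le_self_pow₀ (by linarith) (by norm_num)
  obtain ⟨s, hs, hs2⟩ := h hy2
  exact ⟨s, hs.1, hs2⟩

lemma GammaRInv_eq (s : ℝ) (hs : 1 ≤ s) : GammaRInv 8 (Real.Gamma (s + 1) ^ 8) = s ^ 8 := by
  unfold GammaRInv
  have : {x : ℝ | 1 ≤ x ∧ GammaR 8 x ≤ Real.Gamma (s + 1) ^ 8} = Icc 1 (s ^ 8) := by
    ext x
    simp only [Set.mem_ofPred_eq, mem_Icc, and_congr_right_iff]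
    intro hx
    obtain ⟨w, hw, rfl⟩ : ∃ w : ℝ, 1 ≤ w ∧ w ^ 8 = x := by
      refine ⟨x ^ ((8 : ℕ) : ℝ)⁻¹, Real.one_le_rpow hx (by positivity), ?_⟩
      exact Real.rpow_inv_natCast_pow (by linarith) (by norm_num)
    rw [GammaR_eight _ (by linarith), pow_le_pow_iff_left₀ (Real.Gamma_pos_of_pos (by linarith)).le
      (Real.Gamma_pos_of_pos (by linarith)).le (by norm_num),
      pow_le_pow_iff_left₀ (by linarith) (by linarith) (by norm_num)]
    exact Gamma_succ_strictMono.le_iff_le hw hs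
  rw [this, csSup_Icc (one_le_pow₀ hs)]

/-- All that is needed about the scaling family. -/
lemma exists_G : ∃ (G : ℕ → ℝ) (n₀ : ℕ), 2 ≤ n₀ ∧
    (∀ m ≥ n₀, ∀ t, intScale2 8 2 m t = Real.exp (t * G m)) ∧
    (∀ m ≥ n₀, ∀ n ≥ m, G m ≤ G n) ∧
    (∀ m ≥ n₀, ∀ n ≥ m, Real.log m - G m ≤ Real.log n - G n) ∧
    (∀ m, 0 ≤ G m) ∧
    Tendsto G atTop atTop ∧ Tendsto (fun m : ℕ => Real.log m - G m) atTop atTop := by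
  have key : ∀ m : ℕ, ∃ s : ℝ, 1 ≤ s ∧ (2 ≤ m → Real.Gamma (s + 1) ^ 8 = Real.log m / Real.log 2) := by
    intro m
    by_cases hm : 2 ≤ m
    · have hl : Real.log 2 ≤ Real.log m := Real.log_le_log (by norm_num) (by exact_mod_cast hm)
      obtain ⟨s, h1, h2⟩ := exists_s (Real.log m / Real.log 2)
        (by rw [le_div_iff₀ (Real.log_pos (by norm_num))]; linarith)
      exact ⟨s, h1, fun _ => h2⟩
    · exact ⟨1, le_rfl, fun h => absurd h hm⟩
  choose s hs1 hs2 using key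
  have hl2 : 0 < Real.log 2 := Real.log_pos (by norm_num)
  have hlog : ∀ m : ℕ, m ≥ 2 → Real.log m = Real.log 2 * Real.Gamma (s m + 1) ^ 8 := by
    intro m hm; rw [hs2 m hm]; field_simp
  have smono : ∀ m : ℕ, m ≥ 2 → ∀ n ≥ m, s m ≤ s n := by
    intro m hm n hn
    have : Real.log m ≤ Real.log n := Real.log_le_log (by positivity) (by exact_mod_cast hn)
    rw [hlog m hm, hlog n (by omega), mul_le_mul_iff_right₀ hl2,
      pow_le_pow_iff_left₀ (Real.Gamma_pos_of_pos (by linarith [hs1 m])).le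
      (Real.Gamma_pos_of_pos (by linarith [hs1 n])).le (by norm_num)] at this
    exact (Gamma_succ_strictMono.le_iff_le (hs1 m) (hs1 n)).1 this
  have stend : Tendsto s atTop atTop := by
    rw [tendsto_atTop]
    intro b
    have ht : Tendsto (fun m : ℕ => Real.log m) atTop atTop :=
      Real.tendsto_log_atTop.comp tendsto_natCast_atTop_atTop
    filter_upwards [ht.eventually_ge_atTop (Real.log 2 * Real.Gamma (max b 1 + 1) ^ 8),
      eventually_ge_atTop 2] with m h1 h2
    rw [hlog m h2, mul_le_mul_iff_right₀ hl2,
      pow_le_pow_iff_left₀ (Real.Gamma_pos_of_pos (by positivity)).le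
      (Real.Gamma_pos_of_pos (by linarith [hs1 m])).le (by norm_num)] at h1
    exact (le_max_left _ _).trans ((Gamma_succ_strictMono.le_iff_le (le_max_right b 1) (hs1 m)).1 h1)
  have hG : ∀ m : ℕ, m ≥ 2 → Real.log m / s m ^ 6 = Real.log 2 * (s m ^ 2 * Real.Gamma (s m) ^ 8) := by
    intro m hm
    have : s m ≠ 0 := by linarith [hs1 m]
    rw [hlog m hm, Real.Gamma_add_one this]
    field_simp
  obtain ⟨n₁, hn₁⟩ := eventually_atTop.1 (stend.eventually_ge_atTop 2)
  refine ⟨fun m => Real.log m / s m ^ 6, max 2 n₁, le_max_left _ _, ?_, ?_, ?_, ?_, ?_, ?_⟩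
  · intro m hm t
    have hm2 : 2 ≤ m := (le_max_left _ _).trans hm
    unfold intScale2
    have : GammaRInv 8 (Real.log m / Real.log (2 : ℕ)) = s m ^ 8 := by
      have h := hs2 m hm2
      push_cast
      rw [← h, GammaRInv_eq _ (hs1 m)]
    rw [this]
    have h6 : ((s m) ^ 8) ^ ((((8 : ℕ) : ℝ) - 2) / ((8 : ℕ) : ℝ)) = s m ^ 6 := by
      rw [← Real.rpow_natCast (s m) 8, ← Real.rpow_mul (by linarith [hs1 m]),
        ← Real.rpow_natCast (s m) 6]
      norm_num
    rw [h6, Real.rpow_def_of_pos (by positivity)]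
    congr 1
    ring
  · intro m hm n hn
    have hm2 : 2 ≤ m := (le_max_left _ _).trans hm
    have h2 : 2 ≤ s m := hn₁ m ((le_max_right _ _).trans hm)
    have h3 := smono m hm2 n hn
    simp only
    rw [hG m hm2, hG n (by omega)]
    have hgm := Real.Gamma_pos_of_pos (show 0 < s m by linarith)
    have : Real.Gamma (s m) ≤ Real.Gamma (s n) :=
      Real.Gamma_strictMonoOn_Ici.monotoneOn h2 (h2.trans h3 : 2 ≤ s n) h3
    have h0 : 0 ≤ s m := by linarith
    gcongr
  · intro m hm n hn
    have hm2 : 2 ≤ m := (le_max_left _ _).trans hm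
    have h3 := smono m hm2 n hn
    have h1 := hs1 m
    have hl : Real.log m ≤ Real.log n := Real.log_le_log (by positivity) (by exact_mod_cast hn)
    have hl0 : 0 ≤ Real.log m := Real.log_nonneg (by exact_mod_cast (by omega : 1 ≤ m))
    have e : ∀ k : ℕ, Real.log k - Real.log k / s k ^ 6 = Real.log k * (1 - (s k ^ 6)⁻¹) := by
      intro k; ring
    simp only [e]
    have : (s n ^ 6)⁻¹ ≤ (s m ^ 6)⁻¹ := by gcongr
    have h4 : (s m ^ 6)⁻¹ ≤ 1 := inv_le_one_of_one_le₀ (one_le_pow₀ h1)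
    gcongr
  · intro m
    have := hs1 m
    have : 0 ≤ Real.log m := Real.log_natCast_nonneg m
    positivity
  · have h1 : Tendsto (fun m => Real.log 2 * s m) atTop atTop := stend.const_mul_atTop hl2
    refine tendsto_atTop_mono' _ ?_ h1
    filter_upwards [eventually_ge_atTop 2, eventually_ge_atTop n₁] with m hm hm1
    rw [hG m hm]
    have h2 : 2 ≤ s m := hn₁ m hm1
    have : Real.Gamma 2 ≤ Real.Gamma (s m) :=
      Real.Gamma_strictMonoOn_Ici.monotoneOn (by simp) (by simpa using h2) h2
    rw [Real.Gamma_two] at this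
    have h8 : 1 ≤ Real.Gamma (s m) ^ 8 := one_le_pow₀ this
    gcongr
    nlinarith
  · have h1 : Tendsto (fun m : ℕ => Real.log m / 2) atTop atTop :=
      (Real.tendsto_log_atTop.comp tendsto_natCast_atTop_atTop).atTop_div_const (by norm_num)
    refine tendsto_atTop_mono' _ ?_ h1
    filter_upwards [eventually_ge_atTop n₁] with m hm1
    have h2 : 2 ≤ s m := hn₁ m hm1
    have h0 : 0 ≤ Real.log m := Real.log_natCast_nonneg m
    have : Real.log m / s m ^ 6 ≤ Real.log m / 2 := by
      gcongr
      calc (2 : ℝ) ≤ 2 ^ 6 := by norm_num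
        _ ≤ _ := by gcongr
    linarith

/-- Parameters of the reparametrised linear flow. -/
structure Par where
  q : ℕ → ℕ
  p : ℕ → ℕ
  a : ℕ → ℝ
  δ : ℕ → ℝ
  α : ℝ
  q_pos : ∀ j, 0 < q j
  p_pos : ∀ j, 0 < p j
  δ_eq : ∀ j, (q j : ℝ) * α - p j = δ j
  δ_pos : ∀ j, 0 < δ j
  δ_tend : Tendsto δ atTop (𝓝 0)
  α_pos : 0 < α
  α_le : α ≤ 1
  a_pos : ∀ j, 0 < a j
  a_sum : ∀ r : ℕ, Summable fun j => a j * (q j : ℝ) ^ r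
  a_le : ∑' j, a j ≤ 1 / 2
  b_tend : Tendsto (fun j => a j / δ j) atTop atTop
  err1 : Tendsto (fun j => (∑ i ∈ Finset.range j, q i * (a i / δ i)) / (a j / δ j)) atTop (𝓝 0)
  err2 : Tendsto (fun j => (∑' i, a (i + (j + 1)) * q (i + (j + 1))) / δ j) atTop (𝓝 0)

/-- One step of the inductive choice of the denominators. -/
structure StepOK (G : ℕ → ℝ) (n₀ j q m : ℕ) : Prop where
  dvd : q ∣ m
  two : 2 * q ≤ m
  r1 : Real.exp (G m) / m ≤ (1 / 2) ^ j / (8 * (q : ℝ) ^ (j + 3))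
  r2 : ((j : ℝ) + 1) ^ 2 * Real.exp (G q) * (2 * q) ≤ Real.exp (G m)
  r3 : ∀ n ≥ n₀, (q : ℝ) * (Real.exp (G m) / m) * min (2 * (n : ℝ) + 4) ((m : ℝ) / q) ≤
    (1 / 2) ^ j * Real.exp ((1 + 1 / ((j : ℝ) + 1)) * G n)
  r4 : (8 * q : ℝ) ≤ Real.exp (G m / (j + 1))

lemma exists_step (G : ℕ → ℝ) (n₀ : ℕ) (h2 : 2 ≤ n₀)
    (Gmono : ∀ m ≥ n₀, ∀ n ≥ m, G m ≤ G n)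
    (Hmono : ∀ m ≥ n₀, ∀ n ≥ m, Real.log m - G m ≤ Real.log n - G n)
    (G0 : ∀ m, 0 ≤ G m) (Gt : Tendsto G atTop atTop)
    (Ht : Tendsto (fun m : ℕ => Real.log m - G m) atTop atTop)
    (j q : ℕ) (hq : n₀ ≤ q) : ∃ m, StepOK G n₀ j q m := by
  have hq0 : 0 < q := by omega
  have hq' : (0 : ℝ) < q := by exact_mod_cast hq0
  have hexp : ∀ m : ℕ, 0 < m → Real.exp (G m) / m = Real.exp (-(Real.log m - G m)) := by
    intro m hm
    rw [neg_sub, Real.exp_sub, Real.exp_log (by exact_mod_cast hm)]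
  have At : Tendsto (fun m : ℕ => Real.exp (G m) / m) atTop (𝓝 0) := by
    refine ((Real.tendsto_exp_neg_atTop_nhds_zero).comp Ht).congr' ?_
    filter_upwards [eventually_gt_atTop 0] with m hm
    simp [hexp m hm]
  have Et : Tendsto (fun m : ℕ => Real.exp (G m)) atTop atTop := Real.tendsto_exp_atTop.comp Gt
  have Et' : Tendsto (fun m : ℕ => Real.exp (G m / (j + 1))) atTop atTop :=
    Real.tendsto_exp_atTop.comp (Gt.atTop_div_const (by positivity))
  obtain ⟨M, hM⟩ := eventually_atTop.1 (Et'.eventually_ge_atTop (2 ^ j * 6 * q : ℝ))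
  have ev1 := At.eventually_le_const (show (0 : ℝ) < (1 / 2) ^ j / (8 * (q : ℝ) ^ (j + 3)) by positivity)
  have ev2 := Et.eventually_ge_atTop (((j : ℝ) + 1) ^ 2 * Real.exp (G q) * (2 * q))
  have ev3 := At.eventually_le_const (show (0 : ℝ) < (1 / 2) ^ j / (q * (2 * M + 4)) by positivity)
  have ev4 := Et'.eventually_ge_atTop (8 * q : ℝ)
  obtain ⟨M0, hM0⟩ := eventually_atTop.1 (((ev1.and ev2).and (ev3.and ev4)).and (eventually_ge_atTop n₀))
  have hge : M0 ≤ q * (M0 + 2) := by nlinarith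
  obtain ⟨⟨⟨e1, e2⟩, e3, e4⟩, e5⟩ := hM0 (q * (M0 + 2)) hge
  refine ⟨q * (M0 + 2), ⟨dvd_mul_right _ _, by nlinarith, e1, e2, ?_, e4⟩⟩
  set m := q * (M0 + 2) with hm
  have hm0 : 0 < m := by omega
  have hm' : (0 : ℝ) < m := by exact_mod_cast hm0
  intro n hn
  have hn' : (2 : ℝ) ≤ n := by exact_mod_cast h2.trans hn
  have hj : 0 ≤ 1 / ((j : ℝ) + 1) := by positivity
  have a0 : 0 < Real.exp (G m) / m := by positivity
  rcases lt_or_ge n M with hnM | hnM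
  · calc (q : ℝ) * (Real.exp (G m) / m) * min (2 * (n : ℝ) + 4) ((m : ℝ) / q)
        ≤ q * ((1 / 2) ^ j / (q * (2 * M + 4))) * (2 * M + 4) := by
          gcongr
          refine (min_le_left _ _).trans ?_
          have : (n : ℝ) ≤ M := by exact_mod_cast hnM.le
          linarith
      _ = (1 / 2) ^ j * 1 := by field_simp
      _ ≤ _ := by
          gcongr
          apply Real.one_le_exp
          have := G0 n
          positivity
  have h6 := hM n hnM
  have hE : Real.exp ((1 + 1 / ((j : ℝ) + 1)) * G n) = Real.exp (G n) * Real.exp (G n / (j + 1)) := by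
    rw [← Real.exp_add]; congr 1; ring
  have hfin : 6 * q * Real.exp (G n) ≤ (1 / 2) ^ j * Real.exp ((1 + 1 / ((j : ℝ) + 1)) * G n) := by
    rw [hE]
    calc 6 * q * Real.exp (G n) = (1 / 2) ^ j * (Real.exp (G n) * (2 ^ j * 6 * q)) := by
          rw [one_div, inv_pow]; field_simp
      _ ≤ _ := by gcongr
  refine le_trans ?_ hfin
  rcases le_total n m with hnm | hnm
  · have h7 : Real.exp (G m) / m ≤ Real.exp (G n) / n := by
      rw [hexp m hm0, hexp n (by omega)]
      exact Real.exp_le_exp.2 (neg_le_neg (Hmono n hn m hnm))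
    calc (q : ℝ) * (Real.exp (G m) / m) * min (2 * (n : ℝ) + 4) ((m : ℝ) / q)
        ≤ q * (Real.exp (G n) / n) * (6 * n) := by
          gcongr
          refine (min_le_left _ _).trans ?_
          linarith
      _ = _ := by field_simp
  · calc (q : ℝ) * (Real.exp (G m) / m) * min (2 * (n : ℝ) + 4) ((m : ℝ) / q)
        ≤ q * (Real.exp (G m) / m) * (m / q) := by gcongr; exact min_le_right _ _
      _ = Real.exp (G m) := by field_simp
      _ ≤ Real.exp (G n) := Real.exp_le_exp.2 (Gmono m e5 n hnm)
      _ ≤ 6 * q * Real.exp (G n) := by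
          have : (1 : ℝ) ≤ q := by exact_mod_cast hq0
          have := Real.exp_pos (G n)
          nlinarith

lemma tsum_inv_bound (q : ℕ → ℕ) (h0 : ∀ j, 0 < q j) (h : ∀ j, 2 * q j ≤ q (j + 1)) (j : ℕ) :
    Summable (fun i => (1 : ℝ) / q (i + j)) ∧ ∑' i, (1 : ℝ) / q (i + j) ≤ 2 / q j ∧
      (1 : ℝ) / q j ≤ ∑' i, (1 : ℝ) / q (i + j) := by
  have hb : ∀ i, (1 : ℝ) / q (i + j) ≤ (1 / q j) * (1 / 2) ^ i := by
    intro i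
    induction i with
    | zero => simp
    | succ i ih =>
      have h1 : (2 : ℝ) * q (i + j) ≤ q (i + 1 + j) := by
        have := h (i + j); rw [show i + 1 + j = i + j + 1 by ring]; exact_mod_cast this
      have h2 : (0 : ℝ) < q (i + j) := by exact_mod_cast h0 _
      calc (1 : ℝ) / q (i + 1 + j) ≤ 1 / (2 * q (i + j)) := by gcongr
        _ = (1 / q (i + j)) * (1 / 2) := by field_simp
        _ ≤ (1 / q j) * (1 / 2) ^ i * (1 / 2) := by gcongr
        _ = _ := by ring
  have hs2 : Summable (fun i : ℕ => (1 / (q j : ℝ)) * (1 / 2) ^ i) := summable_geometric_two.mul_left _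
  have hs : Summable (fun i => (1 : ℝ) / q (i + j)) :=
    Summable.of_nonneg_of_le (fun i => by positivity) hb hs2
  refine ⟨hs, ?_, ?_⟩
  · calc _ ≤ ∑' i : ℕ, (1 / (q j : ℝ)) * (1 / 2) ^ i := hs.tsum_le_tsum hb hs2
      _ = _ := by rw [tsum_mul_left, tsum_geometric_two]; ring
  · have := hs.le_tsum 0 (fun i _ => by positivity)
    simpa using this

theorem exists_par (G : ℕ → ℝ) (n₀ : ℕ) (h2 : 2 ≤ n₀)
    (Gmono : ∀ m ≥ n₀, ∀ n ≥ m, G m ≤ G n)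
    (Hmono : ∀ m ≥ n₀, ∀ n ≥ m, Real.log m - G m ≤ Real.log n - G n)
    (G0 : ∀ m, 0 ≤ G m) (Gt : Tendsto G atTop atTop)
    (Ht : Tendsto (fun m : ℕ => Real.log m - G m) atTop atTop) :
    ∃ P : Par,
      (∀ t > 1, Tendsto (fun n : ℕ =>
        (1 + ∑' i, P.q i * P.a i * min (2 * (n : ℝ) + 4) (1 / P.δ i)) / Real.exp (t * G n)) atTop (𝓝 0)) ∧
      (∀ t, 0 < t → t < 1 → ∀ᶠ j in atTop,
        Real.exp (t * G (⌊1 / (2 * P.δ j)⌋₊ + 1)) ≤ P.a j / P.δ j / 4) := by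
  have step := exists_step G n₀ h2 Gmono Hmono G0 Gt Ht
  choose! f hf using step
  obtain ⟨q, qz, qs⟩ : ∃ q : ℕ → ℕ, q 0 = n₀ ∧ ∀ j, q (j + 1) = f j (q j) :=
    ⟨fun j => Nat.rec n₀ (fun j x => f j x) j, rfl, fun j => rfl⟩
  have qn : ∀ j, n₀ ≤ q j := by
    intro j
    induction j with
    | zero => exact qz.ge
    | succ j ih => have := (hf j (q j) ih).two; rw [qs]; omega
  have ok : ∀ j, StepOK G n₀ j (q j) (q (j + 1)) := fun j => by rw [qs]; exact hf j (q j) (qn j)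
  have q0 : ∀ j, 0 < q j := fun j => by have := qn j; omega
  have q0' : ∀ j : ℕ, (0 : ℝ) < (q j : ℝ) := fun j => by exact_mod_cast q0 j
  have q1' : ∀ j : ℕ, (1 : ℝ) ≤ (q j : ℝ) := fun j => by exact_mod_cast q0 j
  have qmono : Monotone q := monotone_nat_of_le_succ fun j => by have := (ok j).two; omega
  have tb := tsum_inv_bound q q0 (fun j => (ok j).two)
  obtain ⟨p, pz, ps⟩ : ∃ p : ℕ → ℕ, p 0 = 1 ∧ ∀ j, p (j + 1) = p j * (q (j + 1) / q j) + 1 :=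
    ⟨fun j => Nat.rec 1 (fun j x => x * (q (j + 1) / q j) + 1) j, rfl, fun j => rfl⟩
  have p0 : ∀ j, 0 < p j := by
    intro j
    cases j with
    | zero => omega
    | succ j => rw [ps]; omega
  have pq : ∀ j, (p j : ℝ) / q j = ∑ i ∈ Finset.range (j + 1), (1 : ℝ) / q i := by
    intro j
    induction j with
    | zero => simp [pz]
    | succ j ih =>
      rw [Finset.sum_range_succ, ← ih, ps]
      obtain ⟨k, hk⟩ := (ok j).dvd
      have hk2 : q (j + 1) / q j = k := by rw [hk]; exact Nat.mul_div_cancel_left _ (q0 j)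
      have hk0 : (k : ℝ) ≠ 0 := by
        intro h; have := q0 (j + 1); rw [hk] at this; simp at h; simp [h] at this
      rw [hk2, hk]; push_cast
      have := (q0' j).ne'
      field_simp
  let α : ℝ := ∑' i, (1 : ℝ) / q i
  have hs : Summable (fun i => (1 : ℝ) / q i) := by simpa using (tb 0).1
  let δ : ℕ → ℝ := fun j => q j * ∑' i, (1 : ℝ) / q (i + (j + 1))
  have δeq : ∀ j, (q j : ℝ) * α - p j = δ j := by
    intro j
    have := hs.sum_add_tsum_nat_add (j + 1)
    simp only [α, δ]
    rw [← this, ← pq]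
    have := (q0' j).ne'
    field_simp
    ring
  have δlo : ∀ j, (q j : ℝ) / q (j + 1) ≤ δ j := by
    intro j
    calc (q j : ℝ) / q (j + 1) = q j * (1 / q (j + 1)) := by ring
      _ ≤ _ := mul_le_mul_of_nonneg_left (tb (j + 1)).2.2 (q0' j).le
  have δhi : ∀ j, δ j ≤ 2 * q j / q (j + 1) := by
    intro j
    calc δ j ≤ q j * (2 / q (j + 1)) := mul_le_mul_of_nonneg_left (tb (j + 1)).2.1 (q0' j).le
      _ = _ := by ring
  have δ0 : ∀ j, 0 < δ j := fun j => lt_of_lt_of_le (div_pos (q0' j) (q0' _)) (δlo j)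
  let a : ℕ → ℝ := fun j => Real.exp (G (q (j + 1))) / q (j + 1)
  have a0 : ∀ j, 0 < a j := fun j => div_pos (Real.exp_pos _) (q0' _)
  have ab : ∀ j, a j ≤ (1 / 2) ^ j / (8 * (q j : ℝ) ^ (j + 3)) := fun j => (ok j).r1
  have blo : ∀ j, Real.exp (G (q (j + 1))) / (2 * q j) ≤ a j / δ j := by
    intro j
    rw [le_div_iff₀ (δ0 j)]
    calc _ ≤ Real.exp (G (q (j + 1))) / (2 * q j) * (2 * q j / q (j + 1)) := by
          have := q0' j
          gcongr; exact δhi j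
      _ = a j := by
          have := (q0' j).ne'
          simp only [a]; field_simp
  have bhi : ∀ j, a j / δ j ≤ Real.exp (G (q (j + 1))) / q j := by
    intro j
    rw [div_le_iff₀ (δ0 j)]
    calc a j = Real.exp (G (q (j + 1))) / q j * (q j / q (j + 1)) := by
          have := (q0' j).ne'
          simp only [a]; field_simp
      _ ≤ _ := by
          have := q0' j
          gcongr; exact δlo j
  have bb : ∀ j : ℕ, ((j : ℝ) + 1) ^ 2 * Real.exp (G (q j)) ≤ a j / δ j := by
    intro j
    refine le_trans ?_ (blo j)
    rw [le_div_iff₀ (by have := q0' j; positivity)]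
    exact (ok j).r2
  have half_le : ∀ j, ((1 : ℝ) / 2) ^ j ≤ 1 := fun j => pow_le_one₀ (by norm_num) (by norm_num)
  have exp1 : ∀ m, 1 ≤ Real.exp (G m) := fun m => Real.one_le_exp (G0 m)
  have δt : Tendsto δ atTop (𝓝 0) := by
    -- a j / δ j ≥ (j+1)^2 and a j ≤ 1
    refine squeeze_zero (fun j => (δ0 j).le) (fun j => ?_) tendsto_one_div_add_atTop_nhds_zero_nat
    have h1 := bb j
    rw [le_div_iff₀ (δ0 j)] at h1
    have h3 : a j ≤ 1 := by
      refine (ab j).trans ?_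
      have h5 : (1 : ℝ) ≤ 8 * (q j : ℝ) ^ (j + 3) := by
        have := one_le_pow₀ (q1' j) (n := j + 3); linarith
      rw [div_le_one (by linarith)]
      exact (half_le j).trans h5
    rw [le_div_iff₀ (by positivity)]
    have h4 := exp1 (q j)
    have hj : (0 : ℝ) ≤ j := by positivity
    have : δ j * (j + 1) ≤ ((j : ℝ) + 1) ^ 2 * Real.exp (G (q j)) * δ j := by
      have := (δ0 j).le
      calc δ j * (j + 1) = ((j : ℝ) + 1) * 1 * δ j := by ring
        _ ≤ _ := by gcongr; nlinarith
    linarith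
  have asum : ∀ r : ℕ, Summable fun j => a j * (q j : ℝ) ^ r := by
    intro r
    rw [← summable_nat_add_iff r]
    refine Summable.of_nonneg_of_le (fun j => by have := a0 (j + r); positivity) (fun j => ?_)
      ((summable_geometric_two).mul_left 1)
    have hp : (q (j + r) : ℝ) ^ r ≤ (q (j + r) : ℝ) ^ (j + r + 3) :=
      pow_le_pow_right₀ (q1' _) (by omega)
    have hp0 : (0 : ℝ) < (q (j + r) : ℝ) ^ (j + r + 3) := by have := q0' (j + r); positivity
    calc a (j + r) * (q (j + r) : ℝ) ^ r
        ≤ (1 / 2) ^ (j + r) / (8 * (q (j + r) : ℝ) ^ (j + r + 3)) * (q (j + r) : ℝ) ^ (j + r + 3) := by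
          have := ab (j + r); have := (a0 (j + r)).le
          gcongr
      _ = (1 / 2) ^ (j + r) / 8 := by field_simp
      _ ≤ 1 * (1 / 2) ^ j := by
          have h1 := half_le r
          have h3 : (0 : ℝ) ≤ (1 / 2) ^ j := by positivity
          rw [pow_add]
          nlinarith [mul_le_mul_of_nonneg_left h1 h3]
  have a8 : ∀ j, a j ≤ (1 / 4) * (1 / 2) ^ j := by
    intro j
    refine (ab j).trans ?_
    have h5 : (1 : ℝ) ≤ (q j : ℝ) ^ (j + 3) := one_le_pow₀ (q1' j)
    rw [div_le_iff₀ (by positivity)]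
    have h3 : (0 : ℝ) ≤ (1 / 2) ^ j := by positivity
    nlinarith [mul_le_mul_of_nonneg_left h5 h3]
  have aq : ∀ j, a j * q j ≤ (1 / 2) ^ j / q j := by
    intro j
    have h5 : (q j : ℝ) ^ 2 ≤ (q j : ℝ) ^ (j + 3) := pow_le_pow_right₀ (q1' j) (by omega)
    have hq := q0' j
    calc a j * q j ≤ (1 / 2) ^ j / (8 * (q j : ℝ) ^ 2) * q j := by
          gcongr
          exact (ab j).trans (by gcongr)
      _ = ((1 / 2) ^ j / q j) * (1 / 8) := by field_simp
      _ ≤ ((1 / 2) ^ j / q j) * 1 := by gcongr; norm_num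
      _ = _ := by ring
  refine ⟨⟨q, p, a, δ, α, q0, p0, δeq, δ0, δt, ?_, ?_, a0, asum, ?_, ?_, ?_, ?_⟩, ?_, ?_⟩
  · exact hs.tsum_pos (fun i => by positivity) 0 (by have := q0' 0; positivity)
  · have := (tb 0).2.1
    simp only [add_zero] at this
    refine this.trans ?_
    rw [div_le_one (q0' 0)]
    exact_mod_cast h2.trans (qn 0)
  · have ha : Summable a := by simpa using asum 0
    calc ∑' j, a j ≤ ∑' j : ℕ, (1 / 4 : ℝ) * (1 / 2) ^ j :=
          ha.tsum_le_tsum a8 (summable_geometric_two.mul_left _)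
      _ = 1 / 2 := by rw [tsum_mul_left, tsum_geometric_two]; norm_num
  · refine tendsto_atTop_mono (fun j => ?_) (tendsto_natCast_atTop_atTop (R := ℝ))
    refine le_trans ?_ (bb j)
    have h4 := exp1 (q j)
    have hj : (0 : ℝ) ≤ j := by positivity
    nlinarith [mul_le_mul_of_nonneg_left h4 (by positivity : (0 : ℝ) ≤ ((j : ℝ) + 1) ^ 2)]
  · refine squeeze_zero (fun j => ?_) (fun j => ?_) tendsto_one_div_add_atTop_nhds_zero_nat
    · refine div_nonneg (Finset.sum_nonneg fun i _ => ?_) (div_pos (a0 j) (δ0 j)).le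
      exact mul_nonneg (q0' i).le (div_pos (a0 i) (δ0 i)).le
    · rw [div_le_iff₀ (div_pos (a0 j) (δ0 j))]
      have h1 : ∑ i ∈ Finset.range j, q i * (a i / δ i) ≤ j * Real.exp (G (q j)) := by
        calc _ ≤ ∑ i ∈ Finset.range j, Real.exp (G (q j)) := by
              refine Finset.sum_le_sum fun i hi => ?_
              rw [Finset.mem_range] at hi
              calc q i * (a i / δ i) ≤ q i * (Real.exp (G (q (i + 1))) / q i) := mul_le_mul_of_nonneg_left (bhi i) (q0' i).le
                _ = Real.exp (G (q (i + 1))) := by have := (q0' i).ne'; field_simp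
                _ ≤ _ := Real.exp_le_exp.2 (Gmono _ (qn _) _ (qmono (by omega)))
          _ = _ := by simp
      refine h1.trans ?_
      calc j * Real.exp (G (q j)) ≤ ((j : ℝ) + 1) * Real.exp (G (q j)) := by gcongr; linarith
        _ = 1 / ((j : ℝ) + 1) * (((j : ℝ) + 1) ^ 2 * Real.exp (G (q j))) := by field_simp
        _ ≤ _ := by gcongr; exact bb j
  · have hg : Tendsto (fun j : ℕ => ((1 : ℝ) / 2) ^ j) atTop (𝓝 0) :=
      tendsto_pow_atTop_nhds_zero_of_lt_one (by norm_num) (by norm_num)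
    refine squeeze_zero (fun j => ?_) (fun j => ?_) hg
    · refine div_nonneg (tsum_nonneg fun i => ?_) (δ0 j).le
      exact mul_nonneg (a0 _).le (q0' _).le
    · rw [div_le_iff₀ (δ0 j)]
      have s1 : Summable fun i => a (i + (j + 1)) * (q (i + (j + 1)) : ℝ) := by
        have := (summable_nat_add_iff (j + 1)).2 (asum 1)
        simpa using this
      have s2 : Summable fun i : ℕ => ((1 / 2) ^ (j + 1) / (q (j + 1) : ℝ)) * (1 / 2) ^ i :=
        summable_geometric_two.mul_left _
      calc ∑' i, a (i + (j + 1)) * (q (i + (j + 1)) : ℝ)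
          ≤ ∑' i : ℕ, ((1 / 2) ^ (j + 1) / (q (j + 1) : ℝ)) * (1 / 2) ^ i := by
            refine s1.tsum_le_tsum (fun i => (aq _).trans ?_) s2
            have h1 : (q (j + 1) : ℝ) ≤ q (i + (j + 1)) := by exact_mod_cast qmono (by omega)
            have := q0' (j + 1)
            calc (1 / 2 : ℝ) ^ (i + (j + 1)) / (q (i + (j + 1)) : ℝ)
                ≤ (1 / 2) ^ (i + (j + 1)) / (q (j + 1) : ℝ) := by gcongr
              _ = _ := by rw [pow_add]; ring
        _ = (1 / 2) ^ j * (1 / q (j + 1)) := by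
            rw [tsum_mul_left, tsum_geometric_two, pow_succ]; ring
        _ ≤ (1 / 2) ^ j * (q j / q (j + 1)) := by
            have := q0' (j + 1)
            gcongr; exact q1' j
        _ ≤ _ := by gcongr; exact δlo j
  · intro t ht
    show Tendsto (fun n : ℕ => (1 + ∑' i, (q i : ℝ) * a i * min (2 * (n : ℝ) + 4) (1 / δ i)) /
      Real.exp (t * G n)) atTop (𝓝 0)
    obtain ⟨J, hJ⟩ := exists_nat_one_div_lt (show (0 : ℝ) < t - 1 by linarith)
    set s : ℝ := 1 + 1 / ((J : ℝ) + 1) with hsdef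
    have hst : s < t := by linarith
    set C := ∑ i ∈ Finset.range J, (q i : ℝ) * a i * (1 / δ i) with hC
    have hmin0 : ∀ (n : ℕ) i, 0 ≤ min (2 * (n : ℝ) + 4) (1 / δ i) := by
      intro n i
      have := δ0 i
      positivity
    have bound : ∀ n ≥ n₀, (1 + ∑' i, (q i : ℝ) * a i * min (2 * (n : ℝ) + 4) (1 / δ i)) ≤
        (1 + C) + 2 * Real.exp (s * G n) := by
      intro n hn
      have S : Summable fun i => (q i : ℝ) * a i * min (2 * (n : ℝ) + 4) (1 / δ i) := by
        refine Summable.of_nonneg_of_le (fun i => mul_nonneg (mul_nonneg (q0' i).le (a0 i).le) (hmin0 n i))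
          (fun i => ?_) ((asum 1).mul_right (2 * (n : ℝ) + 4))
        have := q0' i; have := a0 i
        rw [pow_one, mul_comm (q i : ℝ)]
        gcongr
        exact min_le_left _ _
      rw [← S.sum_add_tsum_nat_add J]
      have h1 : ∑ i ∈ Finset.range J, (q i : ℝ) * a i * min (2 * (n : ℝ) + 4) (1 / δ i) ≤ C := by
        refine Finset.sum_le_sum fun i _ => ?_
        have := q0' i; have := a0 i
        gcongr
        exact min_le_right _ _
      have h2 : ∑' i, (q (i + J) : ℝ) * a (i + J) * min (2 * (n : ℝ) + 4) (1 / δ (i + J)) ≤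
          2 * Real.exp (s * G n) := by
        calc _ ≤ ∑' i : ℕ, Real.exp (s * G n) * (1 / 2) ^ i := by
              refine ((summable_nat_add_iff J).2 S).tsum_le_tsum (fun i => ?_)
                (summable_geometric_two.mul_left _)
              have h3 := (ok (i + J)).r3 n hn
              have hq := q0' (i + J); have ha := a0 (i + J)
              calc _ ≤ (q (i + J) : ℝ) * a (i + J) * min (2 * (n : ℝ) + 4) ((q (i + J + 1) : ℝ) / q (i + J)) := by
                    have h9 : 1 / δ (i + J) ≤ q (i + J + 1) / q (i + J) := by
                      have := δlo (i + J)
                      rw [div_le_iff₀ (δ0 _)]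
                      have h5 := q0' (i + J + 1)
                      calc (1 : ℝ) = q (i + J + 1) / q (i + J) * (q (i + J) / q (i + J + 1)) := by field_simp
                        _ ≤ _ := mul_le_mul_of_nonneg_left this (by positivity)
                    exact mul_le_mul_of_nonneg_left (min_le_min le_rfl h9) (by positivity)
                _ ≤ _ := h3
                _ ≤ (1 / 2) ^ i * Real.exp (s * G n) := by
                    have hG := G0 n
                    gcongr ?_ * Real.exp (?_ * _)
                    · exact pow_le_pow_of_le_one (by norm_num) (by norm_num) (by omega)
                    · rw [hsdef]
                      gcongr
                      push_cast; linarith [(by positivity : (0 : ℝ) ≤ i)]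
                _ = _ := by ring
          _ = _ := by rw [tsum_mul_left, tsum_geometric_two]; ring
      linarith
    have lim : Tendsto (fun n : ℕ => (1 + C) * Real.exp (-(t * G n)) + 2 * Real.exp (-((t - s) * G n)))
        atTop (𝓝 ((1 + C) * 0 + 2 * 0)) := by
      refine Tendsto.add (Tendsto.const_mul _ ?_) (Tendsto.const_mul _ ?_)
      · exact Real.tendsto_exp_neg_atTop_nhds_zero.comp (Gt.const_mul_atTop (by linarith))
      · exact Real.tendsto_exp_neg_atTop_nhds_zero.comp (Gt.const_mul_atTop (by linarith))
    simp only [mul_zero, add_zero] at lim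
    refine squeeze_zero' ?_ ?_ lim
    · filter_upwards with n
      refine div_nonneg (add_nonneg zero_le_one (tsum_nonneg fun i => ?_)) (Real.exp_pos _).le
      exact mul_nonneg (mul_nonneg (q0' i).le (a0 i).le) (hmin0 n i)
    · filter_upwards [eventually_ge_atTop n₀] with n hn
      rw [div_le_iff₀ (Real.exp_pos _)]
      refine (bound n hn).trans (le_of_eq ?_)
      have e1 : Real.exp (-(t * G n)) * Real.exp (t * G n) = 1 := by
        rw [← Real.exp_add, neg_add_cancel, Real.exp_zero]
      have e2 : Real.exp (-((t - s) * G n)) * Real.exp (t * G n) = Real.exp (s * G n) := by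
        rw [← Real.exp_add]; congr 1; ring
      linear_combination -(1 + C) * e1 - 2 * e2
  · intro t ht0 ht
    show ∀ᶠ j in atTop, Real.exp (t * G (⌊1 / (2 * δ j)⌋₊ + 1)) ≤ a j / δ j / 4
    have ev1 : ∀ᶠ j : ℕ in atTop, 1 / ((j : ℝ) + 1) ≤ 1 - t :=
      tendsto_one_div_add_atTop_nhds_zero_nat.eventually_le_const (by linarith)
    have ev2 : ∀ᶠ j : ℕ in atTop, δ j < 1 / (2 * n₀) :=
      δt.eventually_lt_const (by positivity)
    filter_upwards [ev1, ev2] with j h3 h4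
    set n := ⌊1 / (2 * δ j)⌋₊ + 1 with hn
    have hn0 : n₀ ≤ n := by
      have : (n₀ : ℝ) ≤ 1 / (2 * δ j) := by
        rw [le_div_iff₀ (by linarith [δ0 j])]
        rw [lt_div_iff₀ (by positivity)] at h4
        linarith
      have := Nat.le_floor this
      omega
    have hnm : n ≤ q (j + 1) := by
      have h5 : (n : ℝ) ≤ q (j + 1) := by
        rw [hn]; push_cast
        have h6 := Nat.floor_le (show 0 ≤ 1 / (2 * δ j) by have := δ0 j; positivity)
        have h7 : 1 / (2 * δ j) ≤ q (j + 1) / 2 := by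
          rw [div_le_iff₀ (by linarith [δ0 j])]
          have := δlo j
          rw [div_le_iff₀ (q0' _)] at this
          nlinarith [q1' j]
        have h8 : (2 : ℝ) ≤ q (j + 1) := by exact_mod_cast h2.trans (qn _)
        linarith
      exact_mod_cast h5
    have hG1 := Gmono n hn0 _ hnm
    have r4 := (ok j).r4
    set m := q (j + 1)
    calc Real.exp (t * G n) ≤ Real.exp ((1 - 1 / ((j : ℝ) + 1)) * G m) := by
          exact Real.exp_le_exp.2 (mul_le_mul (by linarith) hG1 (G0 n) (by linarith))
      _ = Real.exp (G m) / Real.exp (G m / (j + 1)) := by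
          rw [← Real.exp_sub]; congr 1; ring
      _ ≤ Real.exp (G m) / (8 * q j) := by
          have := q0' j
          gcongr
      _ = Real.exp (G m) / (2 * q j) / 4 := by
          have := (q0' j).ne'
          field_simp; norm_num
      _ ≤ _ := div_le_div_of_nonneg_right (blo j) (by norm_num)

noncomputable section

lemma torusProj_add (w w' : ℝ × ℝ) : torusProj (w + w') = torusProj w + torusProj w' := by
  simp [torusProj]

lemma torusProj_zero : torusProj 0 = 0 := by simp [torusProj]

lemma continuous_torusProj : Continuous torusProj := by
  unfold torusProj
  exact ((AddCircle.continuous_mk' 1).comp continuous_fst).prodMk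
    ((AddCircle.continuous_mk' 1).comp continuous_snd)

lemma torusProj_surj : Function.Surjective torusProj := by
  rintro ⟨a, b⟩
  obtain ⟨x, rfl⟩ := QuotientAddGroup.mk_surjective a
  obtain ⟨y, rfl⟩ := QuotientAddGroup.mk_surjective b
  exact ⟨(x, y), rfl⟩

lemma isOpenQuotientMap_torusProj : IsOpenQuotientMap torusProj :=
  IsOpenQuotientMap.prodMap QuotientAddGroup.isOpenQuotientMap_mk
    QuotientAddGroup.isOpenQuotientMap_mk

/-- Characters of the torus. -/
def ch (m n : ℤ) : C(Torus2, ℂ) :=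
  ⟨fun z => fourier m z.1 * fourier n z.2, by fun_prop⟩

lemma fourier_one_add (m : ℤ) (x y : Torus1) :
    (fourier m (x + y) : ℂ) = fourier m x * fourier m y := by
  simp [fourier_apply, AddCircle.toCircle_add]

lemma ch_add (m n : ℤ) (z w : Torus2) : ch m n (z + w) = ch m n z * ch m n w := by
  simp only [ch, ContinuousMap.coe_mk, Prod.fst_add, Prod.snd_add, fourier_one_add]; ring

lemma ch_proj (m n : ℤ) (w : ℝ × ℝ) :
    ch m n (torusProj w) = Complex.exp (((2 * Real.pi * (m * w.1 + n * w.2) : ℝ) : ℂ) * Complex.I) := by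
  simp only [ch, ContinuousMap.coe_mk, torusProj, fourier_coe_apply]
  rw [← Complex.exp_add]; congr 1; push_cast; ring

lemma norm_ch (m n : ℤ) (z : Torus2) : ‖ch m n z‖ = 1 := by
  obtain ⟨w, rfl⟩ := torusProj_surj z
  rw [ch_proj, Complex.norm_exp_ofReal_mul_I]

lemma ch_zero (m n : ℤ) : ch m n 0 = 1 := by
  rw [← torusProj_zero, ch_proj]; simp

lemma ch_mul_conj (m n : ℤ) (z : Torus2) : ch m n z * ch (-m) (-n) z = 1 := by
  obtain ⟨w, rfl⟩ := torusProj_surj z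
  rw [ch_proj, ch_proj, ← Complex.exp_add, ← Complex.exp_zero]
  congr 1; push_cast; ring

namespace Par
variable (P : Par)

def X (i : ℕ) : C(Torus2, ℂ) := ch (P.q i) (-(P.p i))

lemma norm_X (i : ℕ) (z : Torus2) : ‖P.X i z‖ = 1 := norm_ch _ _ _

lemma X_add (i : ℕ) (z w : Torus2) : P.X i (z + w) = P.X i z * P.X i w := ch_add _ _ _ _

lemma q_one (i : ℕ) : (1 : ℝ) ≤ P.q i := by exact_mod_cast P.q_pos i

lemma q_pos' (i : ℕ) : (0 : ℝ) < P.q i := by exact_mod_cast P.q_pos i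

lemma p_le (i : ℕ) : (P.p i : ℝ) ≤ P.q i := by
  have := P.δ_eq i; have := P.δ_pos i; have := P.α_le
  nlinarith [P.q_one i]

lemma X_proj (i : ℕ) (w : ℝ × ℝ) :
    P.X i (torusProj w) = Complex.exp (((2 * Real.pi * (P.q i * w.1 - P.p i * w.2) : ℝ) : ℂ) * Complex.I) := by
  rw [X, ch_proj]; congr 4; push_cast; ring

/-- The linear flow direction. -/
def L (v : ℝ) : Torus2 := torusProj (P.α * v, v)

lemma L_add (u v : ℝ) : P.L (u + v) = P.L u + P.L v := by
  rw [L, L, L, ← torusProj_add]; congr 1; ext <;> simp; ring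

lemma L_zero : P.L 0 = 0 := by rw [L, ← torusProj_zero]; congr 1; ext <;> simp

lemma continuous_L : Continuous P.L := continuous_torusProj.comp (by fun_prop)

lemma X_L (i : ℕ) (v : ℝ) :
    P.X i (P.L v) = Complex.exp (((2 * Real.pi * P.δ i : ℝ) * Complex.I) * v) := by
  rw [L, X_proj, ← P.δ_eq]; congr 1; push_cast; ring

/-- Rapidly decaying coefficients. -/
def Rap (c : ℕ → ℂ) : Prop := ∀ r : ℕ, Summable fun i => ‖c i‖ * (P.q i : ℝ) ^ r

variable {P}

lemma Rap.summable {c : ℕ → ℂ} (h : P.Rap c) : Summable fun i => ‖c i‖ := by simpa using h 0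

lemma Rap.mul {c d : ℕ → ℂ} (h : P.Rap c) {C : ℝ} {k : ℕ} (hd : ∀ i, ‖d i‖ ≤ C * (P.q i : ℝ) ^ k) :
    P.Rap fun i => d i * c i := by
  intro r
  refine Summable.of_nonneg_of_le (fun i => by positivity) (fun i => ?_) ((h (k + r)).mul_left C)
  rw [norm_mul]
  calc ‖d i‖ * ‖c i‖ * (P.q i : ℝ) ^ r ≤ (C * (P.q i : ℝ) ^ k) * ‖c i‖ * (P.q i : ℝ) ^ r := by
        gcongr; exact hd i
    _ = _ := by rw [pow_add]; ring

variable (P)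

/-- x-derivative multiplier -/
def dx (c : ℕ → ℂ) : ℕ → ℂ := fun i => ((2 * Real.pi * P.q i : ℝ) * Complex.I) * c i

/-- y-derivative multiplier -/
def dy (c : ℕ → ℂ) : ℕ → ℂ := fun i => (-(2 * Real.pi * P.p i : ℝ) * Complex.I) * c i

variable {P}

lemma Rap.dx {c : ℕ → ℂ} (h : P.Rap c) : P.Rap (P.dx c) := by
  refine h.mul (C := 2 * Real.pi) (k := 1) fun i => ?_
  rw [norm_mul, Complex.norm_I, Complex.norm_real, mul_one, pow_one, Real.norm_of_nonneg (by positivity)]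

lemma Rap.dy {c : ℕ → ℂ} (h : P.Rap c) : P.Rap (P.dy c) := by
  refine h.mul (C := 2 * Real.pi) (k := 1) fun i => ?_
  rw [norm_mul, Complex.norm_I, norm_neg, Complex.norm_real, mul_one, pow_one,
    Real.norm_of_nonneg (by positivity)]
  have := P.p_le i
  gcongr

variable (P)

lemma rap_a : P.Rap fun i => (P.a i : ℂ) := by
  intro r
  simpa [abs_of_pos (P.a_pos _)] using P.a_sum r

def cser (c : ℕ → ℂ) (z : Torus2) : ℂ := ∑' i, c i * P.X i z

/-- general series in (u,w) -/
def gser (c : ℕ → ℂ) (h : ℕ → ℝ → ℂ) (x : ℝ × (ℝ × ℝ)) : ℂ :=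
  ∑' i, c i * P.X i (torusProj x.2) * h i x.1

def d1 : ℝ × (ℝ × ℝ) →L[ℝ] ℂ := Complex.ofRealCLM.comp (ContinuousLinearMap.fst ℝ ℝ (ℝ × ℝ))
def d2 : ℝ × (ℝ × ℝ) →L[ℝ] ℂ := Complex.ofRealCLM.comp
  ((ContinuousLinearMap.fst ℝ ℝ ℝ).comp (ContinuousLinearMap.snd ℝ ℝ (ℝ × ℝ)))
def d3 : ℝ × (ℝ × ℝ) →L[ℝ] ℂ := Complex.ofRealCLM.comp
  ((ContinuousLinearMap.snd ℝ ℝ ℝ).comp (ContinuousLinearMap.snd ℝ ℝ (ℝ × ℝ)))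

variable {P}

lemma norm_mulX (c : ℂ) (i : ℕ) (z : Torus2) : ‖c * P.X i z‖ = ‖c‖ := by
  rw [norm_mul, norm_X, mul_one]

lemma summable_g {c : ℕ → ℂ} (hc : P.Rap c) {h : ℕ → ℝ → ℂ} {R H : ℝ}
    (hh : ∀ i u, |u| < R → ‖h i u‖ ≤ H) (x : ℝ × (ℝ × ℝ)) (hx : |x.1| < R) :
    Summable fun i => c i * P.X i (torusProj x.2) * h i x.1 := by
  refine Summable.of_norm_bounded (hc.summable.mul_right H) fun i => ?_
  rw [norm_mul, norm_mulX]
  gcongr; exact hh i _ hx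

lemma hasFDerivAt_gser {c : ℕ → ℂ} (hc : P.Rap c) {h h' : ℕ → ℝ → ℂ}
    (hd : ∀ i u, HasDerivAt (h i) (h' i u) u)
    (hb : ∀ R, ∃ H, ∀ i u, |u| < R → ‖h i u‖ ≤ H ∧ ‖h' i u‖ ≤ H) (x : ℝ × (ℝ × ℝ)) :
    HasFDerivAt (P.gser c h)
      (P.gser c h' x • d1 + P.gser (P.dx c) h x • d2 + P.gser (P.dy c) h x • d3) x := by
  obtain ⟨H, hH⟩ := hb (|x.1| + 1)
  have hH1 := fun i u hu => (hH i u hu).1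
  have hH2 := fun i u hu => (hH i u hu).2
  have H0 : 0 ≤ H := (norm_nonneg _).trans (hH1 0 x.1 (by linarith))
  set s : Set (ℝ × (ℝ × ℝ)) := {y | |y.1| < |x.1| + 1}
  have hs : IsOpen s := isOpen_lt (by fun_prop) continuous_const
  have hs2 : IsPreconnected s := by
    have : s = Ioo (-(|x.1| + 1)) (|x.1| + 1) ×ˢ univ := by
      ext y; simp [s, abs_lt]
    rw [this]
    exact isPreconnected_Ioo.prod isPreconnected_univ
  have hxs : x ∈ s := by simp [s]
  have key := hasFDerivAt_tsum_of_isPreconnected (𝕜 := ℝ) (s := s) (x₀ := x) (x := x)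
    (f := fun i (y : ℝ × (ℝ × ℝ)) => c i * P.X i (torusProj y.2) * h i y.1)
    (f' := fun i y => (c i * P.X i (torusProj y.2) * h' i y.1) • d1 +
      (P.dx c i * P.X i (torusProj y.2) * h i y.1) • d2 +
      (P.dy c i * P.X i (torusProj y.2) * h i y.1) • d3)
    (u := fun i => (‖c i‖ * H) * ‖d1‖ + (‖P.dx c i‖ * H) * ‖d2‖ + (‖P.dy c i‖ * H) * ‖d3‖)
    ?_ hs hs2 ?_ ?_ hxs ?_ hxs
  · refine (key.congr_fderiv ?_)
    have s1 := summable_g hc hH2 x (by linarith)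
    have s2 := summable_g hc.dx hH1 x (by linarith)
    have s3 := summable_g hc.dy hH1 x (by linarith)
    rw [Summable.tsum_add ((s1.smul_const d1).add (s2.smul_const d2)) (s3.smul_const d3),
      Summable.tsum_add (s1.smul_const d1) (s2.smul_const d2), s1.tsum_smul_const, s2.tsum_smul_const, s3.tsum_smul_const]
    rfl
  · exact (((hc.summable.mul_right H).mul_right _).add ((hc.dx.summable.mul_right H).mul_right _)).add
      ((hc.dy.summable.mul_right H).mul_right _)
  · intro i y hy
    have e1 : HasFDerivAt (fun y : ℝ × (ℝ × ℝ) => h i y.1) (h' i y.1 • d1) y := by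
      have := (hd i y.1).hasFDerivAt.comp y (hasFDerivAt_fst (𝕜 := ℝ) (p := y))
      refine this.congr_fderiv ?_
      ext v <;> simp [d1, mul_comm]
    have e2 : HasFDerivAt (fun y : ℝ × (ℝ × ℝ) => P.X i (torusProj y.2))
        ((((2 * Real.pi * P.q i : ℝ) * Complex.I) * P.X i (torusProj y.2)) • d2 +
        ((-(2 * Real.pi * P.p i : ℝ) * Complex.I) * P.X i (torusProj y.2)) • d3) y := by
      simp only [X_proj]
      have l : HasFDerivAt (fun y : ℝ × (ℝ × ℝ) =>
          ((2 * Real.pi * (P.q i * y.2.1 - P.p i * y.2.2) : ℝ) : ℂ) * Complex.I)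
          (((2 * Real.pi * P.q i : ℝ) * Complex.I) • d2 + (-(2 * Real.pi * P.p i : ℝ) * Complex.I) • d3) y := by
        have e := (((2 * Real.pi * P.q i : ℝ) * Complex.I) • d2 +
          (-(2 * Real.pi * P.p i : ℝ) * Complex.I) • d3).hasFDerivAt (x := y)
        refine e.congr_of_eventuallyEq (Eventually.of_forall fun y => ?_)
        simp [d2, d3]; ring
      refine l.cexp.congr_fderiv ?_
      simp only [smul_add, smul_smul]; ring_nf
    have := (e2.const_mul (c i)).mul e1
    refine this.congr_fderiv ?_
    simp only [dx, dy, smul_add, smul_smul]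
    rw [← add_assoc]
    ring_nf
  · intro i y hy
    have q1 := hH1 i y.1 hy
    have q2 := hH2 i y.1 hy
    refine (norm_add_le _ _).trans (add_le_add ((norm_add_le _ _).trans (add_le_add ?_ ?_)) ?_) <;>
    · rw [norm_smul, norm_mul, norm_mulX]
      gcongr
  · exact summable_g hc hH1 x (by linarith)

lemma norm_cexp_I (r v : ℝ) : ‖Complex.exp (((r : ℝ) * Complex.I) * v)‖ = 1 := by
  rw [show ((r : ℂ) * Complex.I) * v = ((r * v : ℝ) : ℂ) * Complex.I by push_cast; ring,
    Complex.norm_exp_ofReal_mul_I]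

variable (P)

/-- `exp(2 π i δ_i u)` -/
def ex (i : ℕ) (u : ℝ) : ℂ := Complex.exp (((2 * Real.pi * P.δ i : ℝ) * Complex.I) * u)

/-- `∫_0^u exp(2 π i δ_i v) dv` -/
def ei (i : ℕ) (u : ℝ) : ℂ := (P.ex i u - 1) / ((2 * Real.pi * P.δ i : ℝ) * Complex.I)

lemma om_ne (i : ℕ) : ((2 * Real.pi * P.δ i : ℝ) : ℂ) * Complex.I ≠ 0 := by
  have := P.δ_pos i
  have h : (2 * Real.pi * P.δ i : ℝ) ≠ 0 := by positivity
  exact mul_ne_zero (by exact_mod_cast h) Complex.I_ne_zero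

lemma norm_ex (i : ℕ) (u : ℝ) : ‖P.ex i u‖ = 1 := norm_cexp_I _ _

lemma ei_zero (i : ℕ) : P.ei i 0 = 0 := by simp [ei, ex]

lemma ei_add (i : ℕ) (u v : ℝ) : P.ei i (u + v) = P.ei i u + P.ex i u * P.ei i v := by
  have : P.ex i (u + v) = P.ex i u * P.ex i v := by
    simp only [ex, ← Complex.exp_add]; congr 1; push_cast; ring
  rw [ei, ei, ei, this]; ring

lemma hasDerivAt_ei (i : ℕ) (u : ℝ) : HasDerivAt (P.ei i) (P.ex i u) u := by
  have h1 : HasDerivAt (fun u : ℝ => ((2 * Real.pi * P.δ i : ℝ) * Complex.I) * (u : ℂ))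
      ((2 * Real.pi * P.δ i : ℝ) * Complex.I) u := by
    simpa using (Complex.ofRealCLM.hasDerivAt (x := u)).const_mul ((2 * Real.pi * P.δ i : ℝ) * Complex.I)
  have := (h1.cexp.sub_const 1).div_const ((2 * Real.pi * P.δ i : ℝ) * Complex.I)
  refine this.congr_deriv ?_
  have := P.om_ne i
  rw [mul_div_assoc, div_self this, mul_one]; rfl

lemma norm_ei_le_abs (i : ℕ) (u : ℝ) : ‖P.ei i u‖ ≤ |u| := by
  have := convex_univ.norm_image_sub_le_of_norm_hasDerivWithin_le (𝕜 := ℝ) (f := P.ei i) (C := 1)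
    (x := 0) (y := u) (fun v _ => (P.hasDerivAt_ei i v).hasDerivWithinAt)
    (fun v _ => (P.norm_ex i v).le) (mem_univ _) (mem_univ _)
  simpa [ei_zero] using this

lemma norm_ei_le_inv (i : ℕ) (u : ℝ) : ‖P.ei i u‖ ≤ 1 / (Real.pi * P.δ i) := by
  have := P.δ_pos i
  rw [ei, norm_div, norm_mul, Complex.norm_I, mul_one, Complex.norm_real, Real.norm_of_nonneg (by positivity),
    div_le_div_iff₀ (by positivity) (by positivity)]
  have : ‖P.ex i u - 1‖ ≤ 2 := by
    refine (norm_sub_le _ _).trans ?_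
    rw [norm_ex]; norm_num
  nlinarith [Real.pi_pos, mul_pos Real.pi_pos (P.δ_pos i)]

variable {P}

lemma gser_one (c : ℕ → ℂ) (x) : P.gser c (fun _ _ => 1) x = P.cser c (torusProj x.2) := by
  simp [gser, cser]

lemma gser_zero (c : ℕ → ℂ) (x) : P.gser c (fun _ _ => 0) x = 0 := by
  simp [gser]

lemma gser_ex (c : ℕ → ℂ) (x) : P.gser c P.ex x = P.cser c (torusProj x.2 + P.L x.1) := by
  simp only [gser, cser, X_add, X_L, ex, mul_assoc]

lemma contDiff_one_aux (n : ℕ) : ∀ c : ℕ → ℂ, P.Rap c → ContDiff ℝ n (P.gser c (fun _ _ => 1)) := by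
  have hf : ∀ c : ℕ → ℂ, P.Rap c → ∀ x, _ := fun c hc x => hasFDerivAt_gser (h := fun _ _ => 1)
    (h' := fun _ _ => 0) hc (fun i u => hasDerivAt_const _ _)
    (fun R => ⟨1, fun i u _ => by simp⟩) x
  induction n with
  | zero =>
    intro c hc
    exact contDiff_zero.2 (continuous_iff_continuousAt.2 fun x => (hf c hc x).continuousAt)
  | succ n ih =>
    intro c hc
    push_cast
    refine contDiff_succ_iff_hasFDerivAt.2 ⟨_, ?_, hf c hc⟩
    refine ContDiff.add (ContDiff.add ?_ ?_) ?_
    · simp only [gser_zero, zero_smul]; exact contDiff_const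
    · exact (ih _ hc.dx).smul contDiff_const
    · exact (ih _ hc.dy).smul contDiff_const

lemma contDiff_cser {c : ℕ → ℂ} (hc : P.Rap c) :
    ContDiff ℝ ((⊤ : ℕ∞) : WithTop ℕ∞) (fun w => P.cser c (torusProj w)) := by
  rw [contDiff_infty]
  intro n
  have := (contDiff_one_aux n c hc).comp (contDiff_const (c := (0 : ℝ)).prodMk contDiff_id)
  simpa [Function.comp_def, gser_one] using this

lemma ex_ei_bound (R : ℝ) : ∃ H, ∀ i u, |u| < R → ‖P.ei i u‖ ≤ H ∧ ‖P.ex i u‖ ≤ H :=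
  ⟨max R 1, fun i u hu => ⟨(P.norm_ei_le_abs i u).trans (hu.le.trans (le_max_left _ _)),
    (P.norm_ex i u).le.trans (le_max_right _ _)⟩⟩

lemma contDiff_ei_aux (n : ℕ) : ∀ c : ℕ → ℂ, P.Rap c → ContDiff ℝ n (P.gser c P.ei) := by
  have hf : ∀ c : ℕ → ℂ, P.Rap c → ∀ x, _ := fun c hc x => hasFDerivAt_gser (h := P.ei)
    (h' := P.ex) hc (fun i u => P.hasDerivAt_ei i u) ex_ei_bound x
  induction n with
  | zero =>
    intro c hc
    exact contDiff_zero.2 (continuous_iff_continuousAt.2 fun x => (hf c hc x).continuousAt)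
  | succ n ih =>
    intro c hc
    push_cast
    refine contDiff_succ_iff_hasFDerivAt.2 ⟨_, ?_, hf c hc⟩
    refine ContDiff.add (ContDiff.add ?_ ?_) ?_
    · suffices hE : ContDiff ℝ n (P.gser c P.ex) from hE.smul contDiff_const
      have h0 : ContDiff ℝ n (fun w => P.cser c (torusProj w)) := (contDiff_cser hc).of_le (by exact_mod_cast le_top)
      have h1 := h0.comp
        (show ContDiff ℝ n (fun x : ℝ × (ℝ × ℝ) => x.2 + (P.α * x.1, x.1)) by fun_prop)
      have h2 : P.gser c P.ex = (fun w => P.cser c (torusProj w)) ∘ fun x : ℝ × (ℝ × ℝ) => x.2 + (P.α * x.1, x.1) := by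
        funext x
        simp [gser_ex, L, torusProj_add]
      rw [h2]; exact h1
    · exact (ih _ hc.dx).smul contDiff_const
    · exact (ih _ hc.dy).smul contDiff_const

lemma contDiff_ei {c : ℕ → ℂ} (hc : P.Rap c) :
    ContDiff ℝ ((⊤ : ℕ∞) : WithTop ℕ∞) (P.gser c P.ei) := by
  rw [contDiff_infty]
  intro n
  exact contDiff_ei_aux n c hc

end Par
end

noncomputable section

lemma expand_bij {g g' : ℝ → ℝ} (hd : ∀ s, HasDerivAt g (g' s) s) (h1 : ∀ s, 1 / 2 ≤ g' s) :
    (∀ s s', |s - s'| ≤ 2 * |g s - g s'|) ∧ Function.Bijective g := by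
  have hm : Monotone fun s => g s - s / 2 := by
    have hd2 : ∀ s, HasDerivAt (fun s => g s - s / 2) (g' s - 1 / 2) s := fun s =>
      (hd s).sub ((hasDerivAt_id s).div_const 2)
    refine monotone_of_deriv_nonneg (fun s => (hd2 s).differentiableAt) fun s => ?_
    rw [(hd2 s).deriv]; linarith [h1 s]
  have key : ∀ s s', s ≤ s' → (s' - s) ≤ 2 * (g s' - g s) := by
    intro s s' h
    have := hm h
    simp only at this
    linarith
  have h2 : ∀ s s', |s - s'| ≤ 2 * |g s - g s'| := by
    intro s s'
    rcases le_total s s' with h | h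
    · have := key s s' h
      rw [abs_sub_comm, abs_of_nonneg (by linarith), abs_sub_comm]
      exact this.trans (by linarith [le_abs_self (g s' - g s)])
    · have := key s' s h
      rw [abs_of_nonneg (by linarith)]
      exact this.trans (by linarith [le_abs_self (g s - g s')])
  refine ⟨h2, ?_, ?_⟩
  · intro s s' h
    have := h2 s s'
    rw [h, sub_self, abs_zero, mul_zero] at this
    exact sub_eq_zero.1 (abs_nonpos_iff.1 this)
  · have hc : Continuous g := continuous_iff_continuousAt.2 fun s => (hd s).continuousAt
    refine hc.surjective ?_ ?_
    · refine tendsto_atTop_mono' _ ?_ ((tendsto_id.atTop_div_const (r := 2) (by norm_num)).atTop_add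
        (tendsto_const_nhds (x := g 0)))
      filter_upwards [eventually_ge_atTop 0] with s hs
      have := key 0 s hs
      simp only [id]
      linarith
    · refine tendsto_atBot_mono' _ ?_ ((tendsto_id.atBot_div_const (r := 2) (by norm_num)).atBot_add
        (tendsto_const_nhds (x := g 0)))
      filter_upwards [eventually_le_atBot 0] with s hs
      have := key s 0 hs
      simp only [id]
      linarith

lemma continuous_expand_inv {Y : Type*} [TopologicalSpace Y] {g g' : Y → ℝ → ℝ}
    (hg : Continuous fun x : Y × ℝ => g x.1 x.2)
    (hd : ∀ p s, HasDerivAt (g p) (g' p s) s) (h1 : ∀ p s, 1 / 2 ≤ g' p s) :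
    Continuous fun x : Y × ℝ => Function.invFun (g x.1) x.2 := by
  have hb := fun p => expand_bij (hd p) (h1 p)
  have hr : ∀ p t, g p (Function.invFun (g p) t) = t := fun p t =>
    Function.rightInverse_invFun (hb p).2.2 t
  rw [continuous_iff_continuousAt]
  rintro ⟨p0, t0⟩
  rw [ContinuousAt, tendsto_iff_dist_tendsto_zero]
  set s0 := Function.invFun (g p0) t0 with hs0
  have lim : Tendsto (fun x : Y × ℝ => 2 * |x.2 - g x.1 s0|) (𝓝 (p0, t0)) (𝓝 (2 * |t0 - g p0 s0|)) := by
    refine Continuous.tendsto' ?_ _ _ rfl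
    have : Continuous fun x : Y × ℝ => g x.1 s0 := hg.comp (continuous_fst.prodMk continuous_const)
    fun_prop
  rw [hs0, hr, sub_self, abs_zero, mul_zero] at lim
  refine squeeze_zero (fun _ => dist_nonneg) (fun x => ?_) lim
  have := (hb x.1).1 (Function.invFun (g x.1) x.2) s0
  rw [hr] at this
  exact this

lemma contDiff_expand_inv {E : Type*} [NormedAddCommGroup E] [NormedSpace ℝ E] [CompleteSpace E]
    {g g' : E → ℝ → ℝ}
    (hg : ContDiff ℝ ((⊤ : ℕ∞) : WithTop ℕ∞) fun x : E × ℝ => g x.1 x.2)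
    (hd : ∀ p s, HasDerivAt (g p) (g' p s) s) (h1 : ∀ p s, 1 / 2 ≤ g' p s) :
    ContDiff ℝ ((⊤ : ℕ∞) : WithTop ℕ∞) fun x : E × ℝ => Function.invFun (g x.1) x.2 := by
  have hb := fun p => expand_bij (hd p) (h1 p)
  have hr : ∀ p t, g p (Function.invFun (g p) t) = t := fun p t =>
    Function.rightInverse_invFun (hb p).2.2 t
  have hl : ∀ p t, Function.invFun (g p) (g p t) = t := fun p t =>
    Function.leftInverse_invFun (hb p).2.1 t
  have hci := continuous_expand_inv hg.continuous hd h1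
  let Φ : E × ℝ ≃ₜ E × ℝ :=
    { toFun := fun x => (x.1, g x.1 x.2)
      invFun := fun x => (x.1, Function.invFun (g x.1) x.2)
      left_inv := fun x => by simp [hl]
      right_inv := fun x => by simp [hr]
      continuous_toFun := continuous_fst.prodMk hg.continuous
      continuous_invFun := continuous_fst.prodMk hci }
  have hΦ : ContDiff ℝ ((⊤ : ℕ∞) : WithTop ℕ∞) Φ := contDiff_fst.prodMk hg
  have hgd : Differentiable ℝ fun x : E × ℝ => g x.1 x.2 := hg.differentiable (by simp)
  let D : E × ℝ → (E × ℝ →L[ℝ] ℝ) := fun x => fderiv ℝ (fun x : E × ℝ => g x.1 x.2) x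
  have hD : ∀ x, HasFDerivAt (fun x : E × ℝ => g x.1 x.2) (D x) x := fun x => (hgd x).hasFDerivAt
  have hB : ∀ x : E × ℝ, D x (0, 1) = g' x.1 x.2 := by
    intro x
    have h2 : HasDerivAt (fun s : ℝ => (x.1, s)) ((0 : E), (1 : ℝ)) x.2 :=
      (hasDerivAt_const _ _).prodMk (hasDerivAt_id _)
    have h3 : HasDerivAt (fun s : ℝ => g x.1 s) (D x (0, 1)) x.2 := 
      HasFDerivAt.comp_hasDerivAt (l := fun x : E × ℝ => g x.1 x.2) x.2 (hD x) h2
    exact h3.unique (hd x.1 x.2)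
  have hDx : ∀ x (v : E × ℝ), D x v = D x (v.1, 0) + g' x.1 x.2 * v.2 := by
    intro x v
    have : v = (v.1, 0) + v.2 • ((0 : E), (1 : ℝ)) := by ext <;> simp
    conv_lhs => rw [this, map_add, map_smul, hB]
    simp [mul_comm]
  have hne : ∀ x : E × ℝ, g' x.1 x.2 ≠ 0 := fun x => by have := h1 x.1 x.2; linarith
  let f₀ : E × ℝ → ((E × ℝ) ≃L[ℝ] (E × ℝ)) := fun x =>
    ContinuousLinearEquiv.equivOfInverse
      ((ContinuousLinearMap.fst ℝ E ℝ).prod (D x))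
      ((ContinuousLinearMap.fst ℝ E ℝ).prod
        ((g' x.1 x.2)⁻¹ • (ContinuousLinearMap.snd ℝ E ℝ -
          (D x).comp ((ContinuousLinearMap.inl ℝ E ℝ).comp (ContinuousLinearMap.fst ℝ E ℝ)))))
      (fun v => by
        refine Prod.ext rfl ?_
        have := hne x
        simp [hDx x v]
        field_simp)
      (fun v => by
        refine Prod.ext rfl ?_
        have := hne x
        simp only [ContinuousLinearMap.prod_apply]
        rw [hDx]
        simp
        field_simp
        ring)
  have hf₀ : ∀ x, HasFDerivAt Φ (f₀ x : E × ℝ →L[ℝ] E × ℝ) x := fun x =>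
    (hasFDerivAt_fst).prodMk (hD x)
  have := Φ.contDiff_symm hf₀ hΦ
  exact contDiff_snd.comp this

namespace Par
variable {P : Par}

/-- Complex value of the ergodic integral. -/
def S (P : Par) (c : ℕ → ℂ) (u : ℝ) (z : Torus2) : ℝ := (∑' i, c i * P.X i z * P.ei i u).re

def rser (P : Par) (c : ℕ → ℂ) (z : Torus2) : ℝ := (P.cser c z).re

lemma S_proj (c : ℕ → ℂ) (u : ℝ) (w : ℝ × ℝ) : P.S c u (torusProj w) = (P.gser c P.ei (u, w)).re := rfl

lemma summable_S {c : ℕ → ℂ} (hc : P.Rap c) (u : ℝ) (z : Torus2) :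
    Summable fun i => c i * P.X i z * P.ei i u := by
  refine Summable.of_norm_bounded (hc.summable.mul_right |u|) fun i => ?_
  rw [norm_mul, norm_mulX]
  gcongr; exact P.norm_ei_le_abs i u

lemma summable_cser {c : ℕ → ℂ} (hc : P.Rap c) (z : Torus2) :
    Summable fun i => c i * P.X i z := by
  refine Summable.of_norm_bounded hc.summable fun i => ?_
  rw [norm_mulX]

lemma norm_cser_le {c : ℕ → ℂ} (hc : P.Rap c) (z : Torus2) : ‖P.cser c z‖ ≤ ∑' i, ‖c i‖ := by
  refine (norm_tsum_le_tsum_norm ?_).trans (le_of_eq ?_)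
  · simpa [norm_X] using hc.summable
  · simp [norm_X]

lemma summable_min {c : ℕ → ℂ} (hc : P.Rap c) (r : ℝ) (hr : 0 ≤ r) :
    Summable fun i => ‖c i‖ * min r (1 / (Real.pi * P.δ i)) := by
  refine Summable.of_nonneg_of_le (fun i => ?_) (fun i => ?_) (hc.summable.mul_right r)
  · have := P.δ_pos i; have := Real.pi_pos; positivity
  · gcongr; exact min_le_left _ _

lemma abs_S_le {c : ℕ → ℂ} (hc : P.Rap c) (u : ℝ) (z : Torus2) {r : ℝ} (hr : |u| ≤ r) :
    |P.S c u z| ≤ ∑' i, ‖c i‖ * min r (1 / (Real.pi * P.δ i)) := by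
  refine (Complex.abs_re_le_norm _).trans ?_
  have hs := summable_min hc r ((abs_nonneg _).trans hr)
  refine tsum_of_norm_bounded hs.hasSum fun i => ?_
  rw [norm_mul, norm_mulX]
  gcongr
  exact le_min ((P.norm_ei_le_abs i u).trans hr) (P.norm_ei_le_inv i u)

lemma S_zero (c : ℕ → ℂ) (z : Torus2) : P.S c 0 z = 0 := by simp [S, ei_zero]

lemma S_add {c : ℕ → ℂ} (hc : P.Rap c) (u v : ℝ) (z : Torus2) :
    P.S c (u + v) z = P.S c u z + P.S c v (z + P.L u) := by
  rw [S, S, S, ← Complex.add_re, ← (summable_S hc u z).tsum_add (summable_S hc v _)]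
  congr 2; funext i
  rw [ei_add, X_add, X_L, ex]; ring

lemma continuous_S {c : ℕ → ℂ} (hc : P.Rap c) : Continuous fun x : ℝ × Torus2 => P.S c x.1 x.2 := by
  have hq : IsOpenQuotientMap (Prod.map (id : ℝ → ℝ) torusProj) :=
    IsOpenQuotientMap.id.prodMap isOpenQuotientMap_torusProj
  refine hq.isQuotientMap.continuous_iff.2 ?_
  exact Complex.continuous_re.comp (contDiff_ei hc).continuous

lemma continuous_cser {c : ℕ → ℂ} (hc : P.Rap c) : Continuous (P.cser c) :=
  isOpenQuotientMap_torusProj.isQuotientMap.continuous_iff.2 (contDiff_cser hc).continuous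

lemma continuous_rser {c : ℕ → ℂ} (hc : P.Rap c) : Continuous (P.rser c) :=
  Complex.continuous_re.comp (continuous_cser hc)

lemma hasFDerivAt_S {c : ℕ → ℂ} (hc : P.Rap c) (u : ℝ) (w : ℝ × ℝ) :
    HasFDerivAt (fun x : ℝ × (ℝ × ℝ) => P.S c x.1 (torusProj x.2))
      (Complex.reCLM.comp (P.gser c P.ex (u, w) • d1 + P.gser (P.dx c) P.ei (u, w) • d2 +
        P.gser (P.dy c) P.ei (u, w) • d3)) (u, w) :=
  Complex.reCLM.hasFDerivAt.comp _ (hasFDerivAt_gser hc (fun i u => P.hasDerivAt_ei i u) ex_ei_bound (u, w))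

lemma hasDerivAt_S {c : ℕ → ℂ} (hc : P.Rap c) (u : ℝ) (z : Torus2) :
    HasDerivAt (fun u => P.S c u z) (P.rser c (z + P.L u)) u := by
  obtain ⟨w, rfl⟩ := torusProj_surj z
  have h2 : HasDerivAt (fun u : ℝ => (u, w)) ((1 : ℝ), (0 : ℝ × ℝ)) u :=
    (hasDerivAt_id _).prodMk (hasDerivAt_const _ _)
  have h3 := (hasFDerivAt_S hc u w).comp_hasDerivAt u h2
  refine h3.congr_deriv ?_
  simp [d1, d2, d3, gser_ex, rser]

/-- derivative of `cser` on lifts -/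
lemma hasFDerivAt_cser {c : ℕ → ℂ} (hc : P.Rap c) (w : ℝ × ℝ) :
    HasFDerivAt (fun w => P.cser c (torusProj w))
      (P.cser (P.dx c) (torusProj w) • (Complex.ofRealCLM.comp (ContinuousLinearMap.fst ℝ ℝ ℝ)) +
       P.cser (P.dy c) (torusProj w) • (Complex.ofRealCLM.comp (ContinuousLinearMap.snd ℝ ℝ ℝ))) w := by
  have h := hasFDerivAt_gser (P := P) (h := fun _ _ => 1)
    (h' := fun _ _ => 0) hc (fun i u => hasDerivAt_const _ _)
    (fun R => ⟨1, fun i u _ => by simp⟩) ((0 : ℝ), w)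
  have h2 : HasFDerivAt (fun w : ℝ × ℝ => ((0 : ℝ), w)) (ContinuousLinearMap.inr ℝ ℝ (ℝ × ℝ)) w :=
    (ContinuousLinearMap.inr ℝ ℝ (ℝ × ℝ)).hasFDerivAt
  have h3 := h.comp w h2
  have e : (fun w => P.cser c (torusProj w)) = (P.gser c fun _ _ => 1) ∘ fun w : ℝ × ℝ => ((0 : ℝ), w) := by
    funext w; simp [gser_one]
  rw [e]
  refine h3.congr_fderiv ?_
  ext <;> simp [gser_one, gser_zero, d1, d2, d3]

variable (P)

def ca : ℕ → ℂ := fun i => (P.a i : ℂ)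

def psi (z : Torus2) : ℝ := P.rser P.ca z
def rho (z : Torus2) : ℝ := 1 + P.psi z
def tau (u : ℝ) (z : Torus2) : ℝ := u + P.S P.ca u z

lemma hca : P.Rap P.ca := P.rap_a

lemma sum_ca : ∑' i, ‖P.ca i‖ ≤ 1 / 2 := by
  simpa [ca, abs_of_pos (P.a_pos _)] using P.a_le

lemma abs_psi_le (z : Torus2) : |P.psi z| ≤ 1 / 2 :=
  ((Complex.abs_re_le_norm _).trans (norm_cser_le P.hca z)).trans P.sum_ca

lemma rho_ge (z : Torus2) : 1 / 2 ≤ P.rho z := by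
  have := abs_le.1 (P.abs_psi_le z); rw [rho]; linarith

lemma rho_le (z : Torus2) : P.rho z ≤ 3 / 2 := by
  have := abs_le.1 (P.abs_psi_le z); rw [rho]; linarith

lemma continuous_rho : Continuous P.rho := continuous_const.add (continuous_rser P.hca)

lemma hasDerivAt_tau (u : ℝ) (z : Torus2) : HasDerivAt (fun u => P.tau u z) (P.rho (z + P.L u)) u :=
  (hasDerivAt_id u).add (hasDerivAt_S P.hca u z)

lemma continuous_tau : Continuous fun x : ℝ × Torus2 => P.tau x.1 x.2 :=
  continuous_fst.add (continuous_S P.hca)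

lemma tau_add (u v : ℝ) (z : Torus2) : P.tau (u + v) z = P.tau u z + P.tau v (z + P.L u) := by
  rw [tau, tau, tau, S_add P.hca]; ring

lemma tau_zero (z : Torus2) : P.tau 0 z = 0 := by simp [tau, S_zero]

/-- time change -/
def U (t : ℝ) (z : Torus2) : ℝ := Function.invFun (fun s => P.tau s z) t

lemma tau_bij (z : Torus2) : (∀ s s', |s - s'| ≤ 2 * |P.tau s z - P.tau s' z|) ∧
    Function.Bijective fun s => P.tau s z := expand_bij (fun s => P.hasDerivAt_tau s z) (fun s => P.rho_ge _)

lemma tau_U (t : ℝ) (z : Torus2) : P.tau (P.U t z) z = t :=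
  Function.rightInverse_invFun (P.tau_bij z).2.2 t

lemma U_tau (s : ℝ) (z : Torus2) : P.U (P.tau s z) z = s :=
  Function.leftInverse_invFun (P.tau_bij z).2.1 s

lemma U_zero (z : Torus2) : P.U 0 z = 0 := by
  conv_lhs => rw [← P.tau_zero z]
  exact P.U_tau 0 z

lemma abs_U_sub_le (t t' : ℝ) (z : Torus2) : |P.U t z - P.U t' z| ≤ 2 * |t - t'| := by
  have := (P.tau_bij z).1 (P.U t z) (P.U t' z)
  rwa [tau_U, tau_U] at this

lemma abs_U_le (t : ℝ) (z : Torus2) : |P.U t z| ≤ 2 * |t| := by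
  simpa [U_zero] using P.abs_U_sub_le t 0 z

lemma continuous_U : Continuous fun x : Torus2 × ℝ => P.U x.2 x.1 :=
  continuous_expand_inv (g := fun z s => P.tau s z) (g' := fun z s => P.rho (z + P.L s))
    (P.continuous_tau.comp continuous_swap)
    (fun z s => P.hasDerivAt_tau s z) (fun z s => P.rho_ge _)

def F (t : ℝ) (z : Torus2) : Torus2 := z + P.L (P.U t z)

lemma continuous_F : Continuous fun x : Torus2 × ℝ => P.F x.2 x.1 :=
  continuous_fst.add (P.continuous_L.comp P.continuous_U)

lemma U_add (s t : ℝ) (z : Torus2) : P.U (s + t) z = P.U s z + P.U t (P.F s z) := by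
  apply (P.tau_bij z).2.1
  change P.tau (P.U (s + t) z) z = P.tau (P.U s z + P.U t (P.F s z)) z
  rw [tau_U, tau_add, tau_U]
  have := P.tau_U t (P.F s z)
  unfold F at this ⊢
  rw [this]

lemma F_add (s t : ℝ) (z : Torus2) : P.F (s + t) z = P.F t (P.F s z) := by
  rw [F, U_add, L_add, ← add_assoc]; rfl

lemma F_zero (z : Torus2) : P.F 0 z = z := by rw [F, U_zero, L_zero, add_zero]

lemma F_neg (t : ℝ) (z : Torus2) : P.F t (P.F (-t) z) = z := by
  rw [← F_add, neg_add_cancel, F_zero]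

lemma F_neg' (t : ℝ) (z : Torus2) : P.F (-t) (P.F t z) = z := by
  rw [← F_add, add_neg_cancel, F_zero]

lemma F_iter (n : ℕ) (z : Torus2) : (P.F 1)^[n] z = P.F n z := by
  induction n with
  | zero => simp [F_zero]
  | succ n ih => rw [Function.iterate_succ_apply', ih, ← F_add]; push_cast; rfl

lemma F_tau (s : ℝ) (z : Torus2) : P.F (P.tau s z) z = z + P.L s := by
  rw [F, U_tau]

lemma contDiff_U : ContDiff ℝ ((⊤ : ℕ∞) : WithTop ℕ∞)
    fun x : (ℝ × ℝ) × ℝ => P.U x.2 (torusProj x.1) := by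
  refine contDiff_expand_inv (g := fun w s => P.tau s (torusProj w))
    (g' := fun w s => P.rho (torusProj w + P.L s)) ?_
    (fun z s => P.hasDerivAt_tau s _) (fun z s => P.rho_ge _)
  have h1 := Complex.reCLM.contDiff.comp ((contDiff_ei P.hca).comp
    (contDiff_snd.prodMk (contDiff_fst (𝕜 := ℝ) (E := ℝ × ℝ) (F := ℝ))))
  exact contDiff_snd.add h1

/-- derivative of U in the x-direction -/
lemma hasDerivAt_U (t : ℝ) (z : Torus2) :
    HasDerivAt (fun h : ℝ => P.U t (z + torusProj (h, 0)))
      (-(P.S (P.dx P.ca) (P.U t z) z) / P.rho (P.F t z)) 0 := by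
  obtain ⟨w, rfl⟩ := torusProj_surj z
  have hU : DifferentiableAt ℝ (fun h : ℝ => P.U t (torusProj w + torusProj (h, 0))) 0 := by
    have h1 : ContDiff ℝ ((⊤ : ℕ∞) : WithTop ℕ∞) fun h : ℝ => P.U t (torusProj (w + (h, 0))) :=
      ContDiff.comp (g := fun x : (ℝ × ℝ) × ℝ => P.U x.2 (torusProj x.1))
        (f := fun h : ℝ => (w + (h, 0), t)) P.contDiff_U (by fun_prop)
    simp only [torusProj_add] at h1
    exact (h1.differentiable (by simp)) 0
  set D := deriv (fun h : ℝ => P.U t (torusProj w + torusProj (h, 0))) 0 with hD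
  have hU' := hU.hasDerivAt
  rw [← hD] at hU'
  have e0 : P.U t (torusProj w + torusProj (0, 0)) = P.U t (torusProj w) := by
    rw [show ((0 : ℝ), (0 : ℝ)) = 0 from rfl, torusProj_zero, add_zero]
  -- differentiate tau (U, w + h) = t
  have hline : HasDerivAt (fun h : ℝ => (P.U t (torusProj w + torusProj (h, 0)), w + (h, 0)))
      (D, ((1 : ℝ), (0 : ℝ))) 0 := by
    refine hU'.prodMk ?_
    exact ((hasDerivAt_id (0 : ℝ)).prodMk (hasDerivAt_const (0 : ℝ) (0 : ℝ))).const_add w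
  have hpt : (P.U t (torusProj w + torusProj ((0 : ℝ), 0)), w + ((0 : ℝ), (0 : ℝ))) = (P.U t (torusProj w), w) := by
    rw [e0, show ((0 : ℝ), (0 : ℝ)) = 0 from rfl, add_zero]
  have hS := hasFDerivAt_S P.hca (P.U t (torusProj w)) w
  rw [← hpt] at hS
  have h3 := hS.comp_hasDerivAt (0 : ℝ) hline
  have h4 := hU'.add h3
  have h5 : HasDerivAt (fun _ : ℝ => t) 0 (0 : ℝ) := hasDerivAt_const _ _
  have h6 := h4.unique (h5.congr_of_eventuallyEq (Eventually.of_forall fun h => by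
    have := P.tau_U t (torusProj w + torusProj (h, 0))
    rw [tau] at this
    simpa [torusProj_add] using this))
  rw [hpt] at h6
  have h7 : P.S (P.dx P.ca) (P.U t (torusProj w)) (torusProj w) =
    (P.gser (P.dx P.ca) P.ei (P.U t (torusProj w), w)).re := rfl
  have h8 : P.rho (P.F t (torusProj w)) = 1 + (P.gser P.ca P.ex (P.U t (torusProj w), w)).re := by
    rw [gser_ex]; rfl
  refine hU'.congr_deriv ?_
  have hne : P.rho (P.F t (torusProj w)) ≠ 0 := by have := P.rho_ge (P.F t (torusProj w)); linarith
  rw [eq_div_iff hne, h7, h8]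
  simp [d1, d2, d3] at h6
  linarith

end Par
end

noncomputable section

lemma torusProj_eq_iff (w w' : ℝ × ℝ) :
    torusProj w = torusProj w' ↔ ∃ n m : ℤ, w = w' + ((n : ℝ), (m : ℝ)) := by
  have h1 : ∀ x y : ℝ, (x : Torus1) = (y : Torus1) ↔ ∃ n : ℤ, x = y + n := by
    intro x y
    rw [eq_comm, QuotientAddGroup.eq, AddSubgroup.mem_zmultiples_iff]
    refine exists_congr fun n => ?_
    rw [zsmul_one]
    constructor <;> intro h <;> linarith
  simp only [torusProj, Prod.ext_iff, h1, Prod.fst_add, Prod.snd_add]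
  constructor
  · rintro ⟨⟨n, hn⟩, m, hm⟩; exact ⟨n, m, hn, hm⟩
  · rintro ⟨n, m, hn, hm⟩; exact ⟨⟨n, hn⟩, m, hm⟩

namespace Par
variable (P : Par)

def ck : ℕ → ℂ := fun i => (1 / (-(2 * Real.pi * P.p i : ℝ) * Complex.I)) * P.ca i

lemma p_ne (i : ℕ) : (-(2 * Real.pi * P.p i : ℝ) * Complex.I : ℂ) ≠ 0 := by
  have h0 : (0 : ℝ) < P.p i := by exact_mod_cast P.p_pos i
  have h : (2 * Real.pi * P.p i : ℝ) ≠ 0 := by positivity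
  exact mul_ne_zero (neg_ne_zero.2 (by exact_mod_cast h)) Complex.I_ne_zero

lemma hck : P.Rap P.ck := by
  refine P.hca.mul (C := 1) (k := 0) fun i => ?_
  have h0 : (1 : ℝ) ≤ P.p i := by exact_mod_cast P.p_pos i
  rw [norm_div, norm_mul, Complex.norm_I, norm_neg, Complex.norm_real, mul_one, pow_zero,
    Real.norm_of_nonneg (by positivity), norm_one, mul_one, div_le_one (by positivity)]
  nlinarith [Real.pi_gt_three]

lemma dy_ck : P.dy P.ck = P.ca := by
  funext i
  rw [dy, ck, ← mul_assoc, mul_one_div_cancel (P.p_ne i), one_mul]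

def kap (z : Torus2) : ℝ := P.rser P.ck z

lemma continuous_kap : Continuous P.kap := continuous_rser P.hck

lemma contDiff_kap : ContDiff ℝ ((⊤ : ℕ∞) : WithTop ℕ∞) fun w => P.kap (torusProj w) :=
  Complex.reCLM.contDiff.comp (contDiff_cser P.hck)

lemma hasDerivAt_kap (x y : ℝ) :
    HasDerivAt (fun s => P.kap (torusProj (x, s))) (P.psi (torusProj (x, y))) y := by
  have h := Complex.reCLM.hasFDerivAt.comp _ (hasFDerivAt_cser P.hck (x, y))
  have h2 : HasDerivAt (fun s : ℝ => (x, s)) ((0 : ℝ), (1 : ℝ)) y :=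
    (hasDerivAt_const _ _).prodMk (hasDerivAt_id _)
  have h3 := h.comp_hasDerivAt y h2
  refine h3.congr_deriv ?_
  simp [dy_ck, psi, rser]

def K (z : Torus2) : Torus2 := (z.1, z.2 + (P.kap z : Torus1))

def Kt (w : ℝ × ℝ) : ℝ × ℝ := (w.1, w.2 + P.kap (torusProj w))

def Kti (w : ℝ × ℝ) : ℝ × ℝ := (w.1, Function.invFun (fun s => s + P.kap (torusProj (w.1, s))) w.2)

lemma hasDerivAt_Kt (x s : ℝ) :
    HasDerivAt (fun s => s + P.kap (torusProj (x, s))) (P.rho (torusProj (x, s))) s :=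
  (hasDerivAt_id s).add (P.hasDerivAt_kap x s)

lemma K_proj (w : ℝ × ℝ) : P.K (torusProj w) = torusProj (P.Kt w) := by
  simp [K, Kt, torusProj]

lemma Kt_Kti (w : ℝ × ℝ) : P.Kt (P.Kti w) = w := by
  have := Function.rightInverse_invFun (expand_bij (P.hasDerivAt_Kt w.1) (fun s => P.rho_ge _)).2.2 w.2
  exact Prod.ext rfl this

lemma Kti_Kt (w : ℝ × ℝ) : P.Kti (P.Kt w) = w := by
  have := Function.leftInverse_invFun (expand_bij (P.hasDerivAt_Kt w.1) (fun s => P.rho_ge _)).2.1 w.2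
  exact Prod.ext rfl this

lemma contDiff_Kt : ContDiff ℝ ((⊤ : ℕ∞) : WithTop ℕ∞) P.Kt :=
  contDiff_fst.prodMk (contDiff_snd.add P.contDiff_kap)

lemma contDiff_Kti : ContDiff ℝ ((⊤ : ℕ∞) : WithTop ℕ∞) P.Kti :=
  contDiff_fst.prodMk (contDiff_expand_inv (g := fun x s => s + P.kap (torusProj (x, s)))
    (contDiff_snd.add P.contDiff_kap) P.hasDerivAt_Kt (fun _ _ => P.rho_ge _))

lemma K_bij : Function.Bijective P.K := by
  constructor
  · intro z z' h
    obtain ⟨w, rfl⟩ := torusProj_surj z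
    obtain ⟨w', rfl⟩ := torusProj_surj z'
    rw [K_proj, K_proj, torusProj_eq_iff] at h
    obtain ⟨n, m, h⟩ := h
    have e : torusProj (w' + ((n : ℝ), (m : ℝ))) = torusProj w' := (torusProj_eq_iff _ _).2 ⟨n, m, rfl⟩
    have h2 : P.Kt (w' + ((n : ℝ), (m : ℝ))) = P.Kt w' + ((n : ℝ), (m : ℝ)) := by
      rw [Kt, Kt, e]; ext <;> simp; ring
    rw [← h2] at h
    have := congrArg P.Kti h
    rw [Kti_Kt, Kti_Kt] at this
    rw [this, e]
  · intro z
    obtain ⟨w, rfl⟩ := torusProj_surj z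
    exact ⟨torusProj (P.Kti w), by rw [K_proj, Kt_Kti]⟩

lemma continuous_K : Continuous P.K := by
  have h1 : Continuous fun z => ((P.kap z : ℝ) : Torus1) := (AddCircle.continuous_mk' 1).comp P.continuous_kap
  exact continuous_fst.prodMk (continuous_snd.add h1)

def Kh : Torus2 ≃ₜ Torus2 :=
  Continuous.homeoOfEquivCompactToT2 (f := Equiv.ofBijective P.K P.K_bij) P.continuous_K

lemma Kh_apply (z : Torus2) : P.Kh z = P.K z := rfl

lemma Kh_symm_proj (w : ℝ × ℝ) : P.Kh.symm (torusProj w) = torusProj (P.Kti w) := by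
  rw [Homeomorph.symm_apply_eq, Kh_apply, K_proj, Kt_Kti]

def Tt (t : ℝ) (z : Torus2) : Torus2 := P.Kh (P.F t (P.Kh.symm z))

lemma Tt_neg (t : ℝ) (z : Torus2) : P.Tt t (P.Tt (-t) z) = z := by
  simp [Tt, F_neg]

lemma Tt_neg' (t : ℝ) (z : Torus2) : P.Tt (-t) (P.Tt t z) = z := by
  simp [Tt, F_neg']

lemma Tt_bij (t : ℝ) : Function.Bijective (P.Tt t) :=
  Function.bijective_iff_has_inverse.2 ⟨P.Tt (-t), P.Tt_neg' t, P.Tt_neg t⟩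

lemma Tt_inv : Function.invFun (P.Tt 1) = P.Tt (-1) := by
  funext z
  obtain ⟨y, rfl⟩ := (P.Tt_bij 1).2 z
  rw [Function.leftInverse_invFun (P.Tt_bij 1).1 y, Tt_neg']

lemma continuous_Ft (t : ℝ) : Continuous (P.F t) :=
  Continuous.comp (g := fun x : Torus2 × ℝ => P.F x.2 x.1) (f := fun z => (z, t)) P.continuous_F
    (by fun_prop)

lemma continuous_Ut (t : ℝ) : Continuous (P.U t) :=
  Continuous.comp (g := fun x : Torus2 × ℝ => P.U x.2 x.1) (f := fun z => (z, t)) P.continuous_U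
    (by fun_prop)

lemma continuous_Tt (t : ℝ) : Continuous (P.Tt t) :=
  P.Kh.continuous.comp ((P.continuous_Ft t).comp P.Kh.symm.continuous)

lemma Tt_iter (n : ℕ) (z : Torus2) : (P.Tt 1)^[n] z = P.Kh (P.F n (P.Kh.symm z)) := by
  induction n with
  | zero => simp [F_zero]
  | succ n ih =>
    rw [Function.iterate_succ_apply', ih, Tt, Homeomorph.symm_apply_apply, ← F_add]; push_cast; rfl

def Ft (t : ℝ) (w : ℝ × ℝ) : ℝ × ℝ := w + (P.α * P.U t (torusProj w), P.U t (torusProj w))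

lemma contDiff_Ft (t : ℝ) : ContDiff ℝ ((⊤ : ℕ∞) : WithTop ℕ∞) (P.Ft t) := by
  have hu : ContDiff ℝ ((⊤ : ℕ∞) : WithTop ℕ∞) fun w : ℝ × ℝ => P.U t (torusProj w) :=
    ContDiff.comp (g := fun x : (ℝ × ℝ) × ℝ => P.U x.2 (torusProj x.1))
        (f := fun w : ℝ × ℝ => (w, t)) P.contDiff_U (by fun_prop)
  exact contDiff_id.add ((contDiff_const.mul hu).prodMk hu)

lemma lift_Tt (t : ℝ) : IsLiftOf (P.Kt ∘ P.Ft t ∘ P.Kti) (P.Tt t) := by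
  intro w
  simp only [Function.comp_apply]
  rw [← K_proj, Tt, Kh_symm_proj, Kh_apply, Ft, torusProj_add]
  rfl

lemma diffeo : IsCkTorusDiffeo ⊤ (P.Tt 1) := by
  refine ⟨P.Tt_bij 1, ⟨_, ?_, P.lift_Tt 1⟩, ⟨_, ?_, by rw [Tt_inv]; exact P.lift_Tt (-1)⟩⟩
  · exact P.contDiff_Kt.comp ((P.contDiff_Ft 1).comp P.contDiff_Kti)
  · exact P.contDiff_Kt.comp ((P.contDiff_Ft (-1)).comp P.contDiff_Kti)

end Par
end

noncomputable section

lemma dense_ind {p : C(Torus2, ℂ) → Prop} (hcl : IsClosed {f | p f}) (h0 : p 0)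
    (hadd : ∀ f g, p f → p g → p (f + g)) (hsmul : ∀ (c : ℂ) f, p f → p (c • f))
    (hch : ∀ m n, p (ch m n)) (f : C(Torus2, ℂ)) : p f := by
  let φ : Torus2 ≃ₜ UnitAddTorus (Fin 2) :=
    { toFun := fun z => ![z.1, z.2]
      invFun := fun x => (x 0, x 1)
      left_inv := fun z => by simp
      right_inv := fun x => by ext i; fin_cases i <;> simp
      continuous_toFun := by fun_prop
      continuous_invFun := by fun_prop }
  have hspan : ∀ g ∈ Submodule.span ℂ (range (UnitAddTorus.mFourier (d := Fin 2))),
      p (g.comp φ) := by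
    intro g hg
    induction hg using Submodule.span_induction with
    | mem g hg =>
      obtain ⟨n, rfl⟩ := hg
      have : (UnitAddTorus.mFourier n).comp (φ : C(Torus2, UnitAddTorus (Fin 2))) = ch (n 0) (n 1) := by
        ext z; simp [UnitAddTorus.mFourier, ch, φ]
      rw [this]; exact hch _ _
    | zero => exact h0
    | add f g _ _ hf hg => exact hadd _ _ hf hg
    | smul c f _ hf => exact hsmul _ _ hf
  have hmem : (f.comp (φ.symm : C(UnitAddTorus (Fin 2), Torus2))) ∈
      (Submodule.span ℂ (range (UnitAddTorus.mFourier (d := Fin 2)))).topologicalClosure := by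
    rw [UnitAddTorus.span_mFourier_closure_eq_top]; trivial
  have hcomp : Continuous fun g : C(UnitAddTorus (Fin 2), ℂ) =>
      g.comp (φ : C(Torus2, UnitAddTorus (Fin 2))) := ContinuousMap.continuous_precomp _
  have h1 : (f.comp (φ.symm : C(UnitAddTorus (Fin 2), Torus2))) ∈ {g | p (g.comp (φ : C(Torus2, UnitAddTorus (Fin 2))))} := by
    let A : Set C(UnitAddTorus (Fin 2), ℂ) := {g | p (g.comp (φ : C(Torus2, UnitAddTorus (Fin 2))))}
    refine closure_minimal (t := A) (s := (Submodule.span ℂ (range (UnitAddTorus.mFourier (d := Fin 2))) : Set _))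
      (fun g hg => hspan g hg) (hcl.preimage hcomp) ?_
    exact hmem
  have h2 : (f.comp (φ.symm : C(UnitAddTorus (Fin 2), Torus2))).comp (φ : C(Torus2, UnitAddTorus (Fin 2))) = f := by
    ext z; simp
  rw [← h2]; exact h1

lemma integrable_of_cont {X E : Type*} [TopologicalSpace X] [CompactSpace X] [MeasurableSpace X]
    [BorelSpace X] [NormedAddCommGroup E] [SecondCountableTopologyEither X E]
    (μ : Measure X) [IsFiniteMeasure μ] {f : X → E} (hf : Continuous f) : Integrable f μ := by
  exact hf.integrable_of_hasCompactSupport (HasCompactSupport.of_compactSpace f)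

lemma continuous_integral_C {X : Type*} [TopologicalSpace X] [CompactSpace X] [MeasurableSpace X]
    [BorelSpace X] (μ : Measure X) [IsFiniteMeasure μ] :
    Continuous fun f : C(X, ℂ) => ∫ z, f z ∂μ := by
  refine LipschitzWith.continuous (K := (μ.real univ).toNNReal) (LipschitzWith.of_dist_le_mul fun f g => ?_)
  rw [dist_eq_norm, dist_eq_norm, ← integral_sub (integrable_of_cont μ f.continuous) (integrable_of_cont μ g.continuous)]
  have := norm_integral_le_of_norm_le_const (μ := μ) (f := fun z => f z - g z) (C := ‖f - g‖)
    (Eventually.of_forall fun z => (f - g).norm_coe_le_norm z)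
  rw [Real.coe_toNNReal _ measureReal_nonneg, mul_comm]
  exact this

lemma measure_ext_ch (μ ν : Measure Torus2) [IsFiniteMeasure μ] [IsFiniteMeasure ν]
    (h : ∀ m n, ∫ z, ch m n z ∂μ = ∫ z, ch m n z ∂ν) : μ = ν := by
  have h2 : ∀ f : C(Torus2, ℂ), ∫ z, f z ∂μ = ∫ z, f z ∂ν := by
    refine dense_ind (isClosed_eq (continuous_integral_C μ) (continuous_integral_C ν)) (by simp) ?_ ?_ h
    · intro f g hf hg
      simp only [ContinuousMap.add_apply]
      rw [integral_add (integrable_of_cont μ f.continuous) (integrable_of_cont μ g.continuous),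
        integral_add (integrable_of_cont ν f.continuous) (integrable_of_cont ν g.continuous), hf, hg]
    · intro c f hf
      simp only [ContinuousMap.smul_apply]
      rw [integral_smul, integral_smul, hf]
  refine ext_of_forall_integral_eq_of_IsFiniteMeasure fun f => ?_
  have := h2 ⟨fun z => (f z : ℂ), by fun_prop⟩
  simp only [ContinuousMap.coe_mk] at this
  rw [integral_complex_ofReal, integral_complex_ofReal] at this
  exact_mod_cast this

lemma integral_swap_cont {g : Torus2 → ℝ → ℂ} (hg : Continuous fun x : Torus2 × ℝ => g x.1 x.2) (a b : ℝ) :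
    ∫ z, ∫ t in a..b, g z t = ∫ t in a..b, ∫ z, g z t := by
  symm
  refine intervalIntegral_integral_swap (f := fun t z => g z t) ?_
  have hc : Continuous (Function.uncurry fun t z => g z t) := hg.comp continuous_swap
  obtain ⟨C, hC⟩ := (isCompact_uIcc (a := a) (b := b)).prod (isCompact_univ (X := Torus2)) |>.exists_bound_of_continuousOn hc.continuousOn
  haveI : IsFiniteMeasure ((volume : Measure ℝ).restrict (uIoc a b)) := ⟨by simp [uIoc]⟩
  refine Integrable.of_bound (C := C) hc.aestronglyMeasurable ?_
  have : ∀ᵐ x ∂((volume.restrict (uIoc a b)).prod (volume : Measure Torus2)), x.1 ∈ uIoc a b :=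
    Measure.quasiMeasurePreserving_fst.ae (ae_restrict_mem measurableSet_uIoc)
  filter_upwards [this] with x hx
  exact hC x ⟨uIoc_subset_uIcc hx, trivial⟩

lemma hasDerivAt_line {G H : Torus2 → ℂ} {w : ℝ × ℝ}
    (hd : ∀ z, HasDerivAt (fun h : ℝ => G (z + torusProj (h • w))) (H z) 0) (z : Torus2) (h : ℝ) :
    HasDerivAt (fun h : ℝ => G (z + torusProj (h • w))) (H (z + torusProj (h • w))) h := by
  have h1 := hd (z + torusProj (h • w))
  have h2 : HasDerivAt (fun k : ℝ => k - h) 1 h := (hasDerivAt_id h).sub_const h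
  have h1' : HasDerivAt (fun k : ℝ => G (z + torusProj (h • w) + torusProj (k • w))) (H (z + torusProj (h • w))) (h - h) := by
    rw [sub_self]; exact h1
  have h3 := HasDerivAt.scomp (h := fun k : ℝ => k - h) h h1' h2
  simp only [one_smul] at h3
  refine h3.congr_of_eventuallyEq (Eventually.of_forall fun k => ?_)
  simp only [Function.comp_apply]
  rw [add_assoc, ← torusProj_add, ← add_smul, add_sub_cancel]

instance haarTorus : (volume : Measure Torus2).IsAddHaarMeasure := by
  unfold Torus2
  rw [Measure.volume_eq_prod]; infer_instance

lemma integral_deriv_zero {G H : Torus2 → ℂ} (hG : Continuous G) (hH : Continuous H) (w : ℝ × ℝ)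
    (hd : ∀ z, HasDerivAt (fun h : ℝ => G (z + torusProj (h • w))) (H z) 0) : ∫ z, H z = 0 := by
  have hc : Continuous fun x : Torus2 × ℝ => H (x.1 + torusProj (x.2 • w)) :=
    hH.comp (continuous_fst.add (continuous_torusProj.comp (by fun_prop)))
  have h1 : ∀ z, ∫ h in (0 : ℝ)..1, H (z + torusProj (h • w)) = G (z + torusProj w) - G z := by
    intro z
    rw [intervalIntegral.integral_eq_sub_of_hasDerivAt (fun h _ => hasDerivAt_line hd z h)]
    · simp [torusProj_zero]
    · refine Continuous.intervalIntegrable ?_ _ _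
      exact hH.comp (continuous_const.add (continuous_torusProj.comp (by fun_prop)))
  have h2 := integral_swap_cont (g := fun z h => H (z + torusProj (h • w))) hc 0 1
  simp only [h1] at h2
  rw [integral_sub (integrable_of_cont _ (by fun_prop)) (integrable_of_cont _ hG)] at h2
  rw [integral_add_right_eq_self (μ := (volume : Measure Torus2)) G (torusProj w)] at h2
  have h3 : ∀ t : ℝ, ∫ z, H (z + torusProj (t • w)) = ∫ z, H z := fun t =>
    integral_add_right_eq_self (μ := (volume : Measure Torus2)) H (torusProj (t • w))
  simp only [h3] at h2
  simpa using h2.symm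

lemma hasDerivAt_ch (m n : ℤ) (w : ℝ × ℝ) (z : Torus2) :
    HasDerivAt (fun h : ℝ => ch m n (z + torusProj (h • w)))
      (((2 * Real.pi * (m * w.1 + n * w.2) : ℝ) : ℂ) * Complex.I * ch m n z) 0 := by
  simp only [ch_add, ch_proj]
  have h1 : HasDerivAt (fun h : ℝ => ((2 * Real.pi * (m * w.1 + n * w.2) : ℝ) : ℂ) * Complex.I * (h : ℂ))
      (((2 * Real.pi * (m * w.1 + n * w.2) : ℝ) : ℂ) * Complex.I) 0 := by
    simpa using (Complex.ofRealCLM.hasDerivAt (x := 0)).const_mul (((2 * Real.pi * (m * w.1 + n * w.2) : ℝ) : ℂ) * Complex.I)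
  have h2 := h1.cexp.const_mul (ch m n z)
  refine (h2.congr_of_eventuallyEq (Eventually.of_forall fun h => ?_)).congr_deriv ?_
  · simp only [Prod.smul_fst, Prod.smul_snd, smul_eq_mul]; congr 2; push_cast; ring
  · simp; ring

lemma integral_ch (m n : ℤ) (h : (m, n) ≠ 0) : ∫ z, ch m n z = 0 := by
  have key : ∀ w : ℝ × ℝ, (m * w.1 + n * w.2 : ℝ) ≠ 0 → ∫ z, ch m n z = 0 := by
    intro w hw
    have := integral_deriv_zero (ch m n).continuous (by fun_prop) w (hasDerivAt_ch m n w)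
    rw [integral_const_mul] at this
    refine (mul_eq_zero.1 this).resolve_left ?_
    have h2 : (2 * Real.pi * (m * w.1 + n * w.2) : ℝ) ≠ 0 := mul_ne_zero (by positivity) hw
    exact mul_ne_zero (by exact_mod_cast h2) Complex.I_ne_zero
  by_cases hm : m = 0
  · refine key (0, 1) ?_
    simp only [mul_zero, mul_one, zero_add]
    intro hn
    exact h (by ext <;> simp [hm]; exact_mod_cast hn)
  · refine key (1, 0) ?_
    simpa using hm

namespace Par
variable (P : Par)

def rhoN (z : Torus2) : ℝ≥0 := (P.rho z).toNNReal

def mu : Measure Torus2 := volume.withDensity fun z => (P.rhoN z : ℝ≥0∞)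

lemma continuous_rhoN : Continuous P.rhoN := continuous_real_toNNReal.comp P.continuous_rho

lemma integral_mu (f : Torus2 → ℂ) : ∫ z, f z ∂P.mu = ∫ z, (P.rho z : ℂ) * f z := by
  rw [mu, integral_withDensity_eq_integral_smul P.continuous_rhoN.measurable]
  refine integral_congr_ae (Eventually.of_forall fun z => ?_)
  have := P.rho_ge z
  simp only [NNReal.smul_def, rhoN]
  rw [Real.coe_toNNReal _ (by linarith), Complex.real_smul]

instance : IsFiniteMeasure P.mu := by
  refine isFiniteMeasure_withDensity (ne_of_lt ?_)
  calc ∫⁻ z, (P.rhoN z : ℝ≥0∞) ≤ ∫⁻ _ : Torus2, 2 := by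
        refine lintegral_mono fun z => ?_
        have : P.rhoN z ≤ 2 := by
          rw [rhoN, Real.toNNReal_le_iff_le_coe]
          exact (P.rho_le z).trans (by norm_num)
        exact (ENNReal.coe_le_coe.2 this).trans (by simp)
    _ < ⊤ := by
        rw [lintegral_const]; exact ENNReal.mul_lt_top (by simp) (measure_lt_top _ _)

lemma map_K : Measure.map P.K P.mu = volume := by
  haveI : IsFiniteMeasure (Measure.map P.K P.mu) := Measure.isFiniteMeasure_map _ _
  refine measure_ext_ch _ _ fun m n => ?_
  rw [integral_map P.continuous_K.measurable.aemeasurable (ch m n).continuous.aestronglyMeasurable,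
    integral_mu]
  have hK : ∀ z (h : ℝ), P.K (z + torusProj (h • ((0 : ℝ), (1 : ℝ)))) =
      z + torusProj (0, h + P.kap (z + torusProj (0, h))) := by
    intro z h
    ext <;> simp [K, torusProj, add_assoc]
  have hkap : ∀ z, HasDerivAt (fun h : ℝ => P.kap (z + torusProj (0, h))) (P.psi z) 0 := by
    intro z
    obtain ⟨w, rfl⟩ := torusProj_surj z
    have h1 : HasDerivAt (fun s => P.kap (torusProj (w.1, s))) (P.psi (torusProj w)) (w.2 + 0) := by
      rw [add_zero]; exact P.hasDerivAt_kap w.1 w.2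
    have h2 : HasDerivAt (fun h : ℝ => w.2 + h) 1 0 := (hasDerivAt_id 0).const_add w.2
    have h3 := h1.comp 0 h2
    rw [mul_one] at h3
    refine h3.congr_of_eventuallyEq (Eventually.of_forall fun h => ?_)
    simp only [Function.comp_apply]
    rw [← torusProj_add]; congr 2; ext <;> simp
  have hrho : ∀ z : Torus2, z + torusProj (0, 0) = z := fun z => by
    rw [show ((0 : ℝ), (0 : ℝ)) = 0 from rfl, torusProj_zero, add_zero]
  by_cases hn : n = 0
  · subst hn
    have e : ∀ z, ch m 0 (P.K z) = ch m 0 z := by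
      intro z; simp [ch, K]
    simp only [e, rho, Complex.ofReal_add, Complex.ofReal_one, add_mul, one_mul]
    have cpsi : Continuous P.psi := continuous_rser P.hca
    rw [integral_add (integrable_of_cont _ (by fun_prop)) (integrable_of_cont _ (by fun_prop))]
    have := integral_deriv_zero (G := fun z => (P.kap z : ℂ) * ch m 0 z) (H := fun z => (P.psi z : ℂ) * ch m 0 z)
      (by have := P.continuous_kap; fun_prop) (by fun_prop) (0, 1) (fun z => by
        have h1 := hasDerivAt_ch m 0 (0, 1) z
        have h2 := (hkap z).ofReal_comp
        have h3 := HasDerivAt.mul h2 (by simpa using h1)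
        refine (h3.congr_of_eventuallyEq (Eventually.of_forall fun h => ?_)).congr_deriv ?_
        · simp
        · rw [hrho]; simp [torusProj_zero])
    rw [this, add_zero]
  · rw [integral_ch m n (by simp [hn])]
    have := integral_deriv_zero (G := fun z => ch m n (P.K z))
      (H := fun z => ((2 * Real.pi * n : ℝ) : ℂ) * Complex.I * ((P.rho z : ℂ) * ch m n (P.K z)))
      (by have := P.continuous_K; fun_prop) (by have := P.continuous_K; have := P.continuous_rho; fun_prop) (0, 1) (fun z => by
        have h1 : HasDerivAt (fun h : ℝ => h + P.kap (z + torusProj (0, h))) (P.rho z) 0 :=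
          (hasDerivAt_id 0).add (hkap z)
        have h2 := ((h1.ofReal_comp).const_mul (((2 * Real.pi * n : ℝ) : ℂ) * Complex.I)).cexp.const_mul (ch m n z)
        refine (h2.congr_of_eventuallyEq (Eventually.of_forall fun h => ?_)).congr_deriv ?_
        · simp only [hK]
          rw [ch_add, ch_proj]; congr 2; push_cast; ring
        · have h4 := hK z 0
          simp only [zero_smul, torusProj_zero, add_zero] at h4
          rw [h4, ch_add, ch_proj, hrho]
          simp only [zero_add, mul_zero]
          rw [show (((2 * Real.pi * n : ℝ) : ℂ) * Complex.I * (P.kap z : ℂ)) = ((2 * Real.pi * (n * P.kap z) : ℝ) : ℂ) * Complex.I by push_cast; ring]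
          ring)
    rw [integral_const_mul] at this
    refine (mul_eq_zero.1 this).resolve_left ?_
    have h2 : (2 * Real.pi * n : ℝ) ≠ 0 := mul_ne_zero (by positivity) (by exact_mod_cast hn)
    exact mul_ne_zero (by exact_mod_cast h2) Complex.I_ne_zero

lemma hasDerivAt_Ut (t : ℝ) (z : Torus2) :
    HasDerivAt (fun t => P.U t z) (P.rho (P.F t z))⁻¹ t := by
  have hc : Continuous fun t => P.U t z :=
    Continuous.comp (g := fun x : Torus2 × ℝ => P.U x.2 x.1) (f := fun t => (z, t)) P.continuous_U (by fun_prop)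
  refine HasDerivAt.of_local_left_inverse (f := fun s => P.tau s z) hc.continuousAt
    (P.hasDerivAt_tau (P.U t z) z) ?_ (Eventually.of_forall fun t => P.tau_U t z)
  have := P.rho_ge (P.F t z)
  exact ne_of_gt (lt_of_lt_of_le (by norm_num) this)

lemma ch_L (m n : ℤ) (u : ℝ) :
    ch m n (P.L u) = Complex.exp (((2 * Real.pi * (m * P.α + n) : ℝ) : ℂ) * Complex.I * u) := by
  rw [L, ch_proj]; congr 1; push_cast; ring

lemma ch_F (m n : ℤ) (t : ℝ) (z : Torus2) :
    ch m n (P.F t z) = ch m n z * Complex.exp (((2 * Real.pi * (m * P.α + n) : ℝ) : ℂ) * Complex.I * P.U t z) := by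
  rw [F, ch_add, ch_L]

lemma hasDerivAt_chF (m n : ℤ) (t : ℝ) (z : Torus2) :
    HasDerivAt (fun t => ch m n (P.F t z))
      (((2 * Real.pi * (m * P.α + n) : ℝ) : ℂ) * Complex.I * (ch m n (P.F t z) / P.rho (P.F t z))) t := by
  simp only [P.ch_F m n _ z]
  have h2 := (((P.hasDerivAt_Ut t z).ofReal_comp).const_mul
    (((2 * Real.pi * (m * P.α + n) : ℝ) : ℂ) * Complex.I)).cexp.const_mul (ch m n z)
  refine h2.congr_deriv ?_
  push_cast
  ring

lemma mp_F (t : ℝ) : MeasurePreserving (P.F t) P.mu P.mu := by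
  refine ⟨(P.continuous_Ft t).measurable, ?_⟩
  haveI : IsFiniteMeasure (Measure.map (P.F t) P.mu) := Measure.isFiniteMeasure_map _ _
  refine measure_ext_ch _ _ fun m n => ?_
  rw [integral_map (P.continuous_Ft t).measurable.aemeasurable (ch m n).continuous.aestronglyMeasurable,
    integral_mu, integral_mu]
  have crho := P.continuous_rho
  have hne : ∀ z, (P.rho z : ℂ) ≠ 0 := fun z => by
    have := P.rho_ge z
    have h : P.rho z ≠ 0 := by linarith
    exact_mod_cast h
  let c : ℂ := ((2 * Real.pi * (m * P.α + n) : ℝ) : ℂ) * Complex.I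
  let D : Torus2 → ℂ := fun z => c * (ch m n z / P.rho z)
  have hD : Continuous D := by
    refine continuous_const.mul (Continuous.div (by fun_prop) (by fun_prop) hne)
  have h0 : ∀ s, ∫ z, (P.rho z : ℂ) * D (P.F s z) = 0 := by
    intro s
    refine integral_deriv_zero (G := fun z => ch m n (P.F s z)) ?_ ?_ (P.α, 1) (fun z => ?_)
    · have := P.continuous_Ft s; fun_prop
    · have := P.continuous_Ft s; fun_prop
    · have e : ∀ h : ℝ, P.F s (z + torusProj (h • (P.α, (1 : ℝ)))) = P.F (P.tau h z + s) z := by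
        intro h
        rw [F_add, F_tau, L]; congr 3; ext <;> simp; ring
      simp only [e]
      have h1 : HasDerivAt (fun t => ch m n (P.F t z)) (D (P.F s z)) (P.tau 0 z + s) := by
        rw [tau_zero, zero_add]; exact P.hasDerivAt_chF m n s z
      have h2 : HasDerivAt (fun h => P.tau h z + s) (P.rho z) 0 := by
        have := (P.hasDerivAt_tau 0 z).add_const s
        rwa [L_zero, add_zero] at this
      have h3 := h1.scomp (0 : ℝ) h2
      exact h3.congr_deriv (by simp)
  have hDF : Continuous fun x : Torus2 × ℝ => D (P.F x.2 x.1) := hD.comp P.continuous_F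
  have hsw := integral_swap_cont (g := fun z s => (P.rho z : ℂ) * D (P.F s z))
    (by exact Continuous.mul (by fun_prop) hDF) 0 t
  simp only [h0, intervalIntegral.integral_zero] at hsw
  have h1 : ∀ z, ∫ s in (0 : ℝ)..t, (P.rho z : ℂ) * D (P.F s z) = (P.rho z : ℂ) * ch m n (P.F t z) - P.rho z * ch m n z := by
    intro z
    rw [intervalIntegral.integral_const_mul, intervalIntegral.integral_eq_sub_of_hasDerivAt
      (fun s _ => P.hasDerivAt_chF m n s z)]
    · rw [F_zero]; ring
    · refine Continuous.intervalIntegrable ?_ _ _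
      exact Continuous.comp (g := fun x : Torus2 × ℝ => D (P.F x.2 x.1)) (f := fun s => (z, s)) hDF (by fun_prop)
  simp only [h1] at hsw
  have cF := P.continuous_Ft t
  rw [integral_sub (integrable_of_cont _ (by fun_prop)) (integrable_of_cont _ (by fun_prop))] at hsw
  exact sub_eq_zero.1 hsw

lemma mp_K : MeasurePreserving P.Kh P.mu volume := ⟨P.continuous_K.measurable, P.map_K⟩

lemma mp_Kinv : MeasurePreserving P.Kh.symm volume P.mu :=
  MeasurePreserving.symm P.Kh.toMeasurableEquiv P.mp_K

lemma mp_T : MeasurePreserving (P.Tt 1) volume volume :=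
  P.mp_K.comp ((P.mp_F 1).comp P.mp_Kinv)

end Par
end

noncomputable section

instance probCircle : IsProbabilityMeasure (volume : Measure (AddCircle (1 : ℝ))) :=
  ⟨UnitAddCircle.measure_univ⟩

instance probTorus : IsProbabilityMeasure (volume : Measure Torus2) := by
  unfold Torus2
  rw [Measure.volume_eq_prod]; infer_instance

abbrev T4 : Type := Torus2 × Torus2

def ch4 (m n k l : ℤ) : C(T4, ℂ) := (ch m n).comp ContinuousMap.fst * (ch k l).comp ContinuousMap.snd

lemma dense_ind2 {p : C(T4, ℂ) → Prop} (hcl : IsClosed {f | p f}) (h0 : p 0)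
    (hadd : ∀ f g, p f → p g → p (f + g)) (hsmul : ∀ (c : ℂ) f, p f → p (c • f))
    (hch : ∀ m n k l, p (ch4 m n k l)) (f : C(T4, ℂ)) : p f := by
  let φ : T4 ≃ₜ UnitAddTorus (Fin 4) :=
    { toFun := fun z => ![z.1.1, z.1.2, z.2.1, z.2.2]
      invFun := fun x => ((x 0, x 1), (x 2, x 3))
      left_inv := fun z => by simp
      right_inv := fun x => by ext i; fin_cases i <;> simp
      continuous_toFun := by fun_prop
      continuous_invFun := by fun_prop }
  have hspan : ∀ g ∈ Submodule.span ℂ (range (UnitAddTorus.mFourier (d := Fin 4))),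
      p (g.comp φ) := by
    intro g hg
    induction hg using Submodule.span_induction with
    | mem g hg =>
      obtain ⟨n, rfl⟩ := hg
      have : (UnitAddTorus.mFourier n).comp (φ : C(T4, UnitAddTorus (Fin 4))) = ch4 (n 0) (n 1) (n 2) (n 3) := by
        ext z; simp [UnitAddTorus.mFourier, ch4, ch, φ, Fin.prod_univ_four, mul_assoc]
      rw [this]; exact hch _ _ _ _
    | zero => exact h0
    | add f g _ _ hf hg => exact hadd _ _ hf hg
    | smul c f _ hf => exact hsmul _ _ hf
  have hmem : (f.comp (φ.symm : C(UnitAddTorus (Fin 4), T4))) ∈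
      (Submodule.span ℂ (range (UnitAddTorus.mFourier (d := Fin 4)))).topologicalClosure := by
    rw [UnitAddTorus.span_mFourier_closure_eq_top]; trivial
  have hcomp : Continuous fun g : C(UnitAddTorus (Fin 4), ℂ) =>
      g.comp (φ : C(T4, UnitAddTorus (Fin 4))) := ContinuousMap.continuous_precomp _
  have h1 : (f.comp (φ.symm : C(UnitAddTorus (Fin 4), T4))) ∈ {g | p (g.comp (φ : C(T4, UnitAddTorus (Fin 4))))} := by
    let A : Set C(UnitAddTorus (Fin 4), ℂ) := {g | p (g.comp (φ : C(T4, UnitAddTorus (Fin 4))))}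
    refine closure_minimal (t := A) (s := (Submodule.span ℂ (range (UnitAddTorus.mFourier (d := Fin 4))) : Set _))
      (fun g hg => hspan g hg) (hcl.preimage hcomp) ?_
    exact hmem
  have h2 : (f.comp (φ.symm : C(UnitAddTorus (Fin 4), T4))).comp (φ : C(T4, UnitAddTorus (Fin 4))) = f := by
    ext z; simp
  rw [← h2]; exact h1

lemma isClosed_tendsto {E : Type*} [SeminormedAddCommGroup E] (B : ℕ → E → ℂ) (M : ℝ) (hM : 0 < M)
    (hB : ∀ j f g, ‖B j f - B j g‖ ≤ M * ‖f - g‖) :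
    IsClosed {f | Tendsto (fun j => B j f) atTop (𝓝 0)} := by
  refine isClosed_of_closure_subset fun f hf => ?_
  change Tendsto (fun j => B j f) atTop (𝓝 0)
  rw [Metric.tendsto_atTop]
  intro ε hε
  obtain ⟨g, hg, hfg⟩ := Metric.mem_closure_iff.1 hf (ε / (2 * M)) (by positivity)
  obtain ⟨N, hN⟩ := Metric.tendsto_atTop.1 (show Tendsto (fun j => B j g) atTop (𝓝 0) from hg) (ε / 2) (by positivity)
  refine ⟨N, fun n hn => ?_⟩
  have h1 := hN n hn
  rw [dist_zero_right] at h1 ⊢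
  have h2 := hB n f g
  rw [dist_eq_norm] at hfg
  have h3 : M * ‖f - g‖ < ε / 2 := by
    rw [lt_div_iff₀ (by positivity)] at hfg
    linarith
  have h4 : ‖B n f‖ ≤ ‖B n f - B n g‖ + ‖B n g‖ := by
    simpa using norm_add_le (B n f - B n g) (B n g)
  linarith

section mix
variable {X : Type*} [TopologicalSpace X] [CompactSpace X] [MeasurableSpace X]
    [BorelSpace X] (μ : Measure X) [IsProbabilityMeasure μ]

def Mix (S : ℕ → X → X) (f g : C(X, ℂ)) : Prop :=
  Tendsto (fun j => ∫ z, f (S j z) * g z ∂μ - (∫ z, f z ∂μ) * ∫ z, g z ∂μ) atTop (𝓝 0)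

lemma mix_sub_bound (S : X → X) (hS : Continuous S) (f g : C(X, ℂ)) :
    ‖∫ z, f (S z) * g z ∂μ - (∫ z, f z ∂μ) * ∫ z, g z ∂μ‖ ≤ 2 * ‖f‖ * ‖g‖ := by
  have b : ∀ f : C(X, ℂ), ‖∫ z, f z ∂μ‖ ≤ ‖f‖ := fun f => by
    simpa using norm_integral_le_of_norm_le_const (μ := μ) (f := f) (C := ‖f‖)
      (Eventually.of_forall fun z => f.norm_coe_le_norm z)
  have h1 : ‖∫ z, f (S z) * g z ∂μ‖ ≤ ‖f‖ * ‖g‖ := by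
    have := norm_integral_le_of_norm_le_const (μ := μ) (f := fun z => f (S z) * g z) (C := ‖f‖ * ‖g‖)
      (Eventually.of_forall fun z => by
        rw [norm_mul]
        exact mul_le_mul (f.norm_coe_le_norm _) (g.norm_coe_le_norm _) (norm_nonneg _) (norm_nonneg _))
    simpa using this
  have h2 : ‖(∫ z, f z ∂μ) * ∫ z, g z ∂μ‖ ≤ ‖f‖ * ‖g‖ := by
    rw [norm_mul]
    exact mul_le_mul (b f) (b g) (norm_nonneg _) (norm_nonneg _)
  linarith [norm_sub_le (∫ z, f (S z) * g z ∂μ) ((∫ z, f z ∂μ) * ∫ z, g z ∂μ)]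

lemma mix_add_left (S : X → X) (hS : Continuous S) (f f' g : C(X, ℂ)) :
    ∫ z, (f + f') (S z) * g z ∂μ - (∫ z, (f + f') z ∂μ) * ∫ z, g z ∂μ =
    (∫ z, f (S z) * g z ∂μ - (∫ z, f z ∂μ) * ∫ z, g z ∂μ) +
    (∫ z, f' (S z) * g z ∂μ - (∫ z, f' z ∂μ) * ∫ z, g z ∂μ) := by
  simp only [ContinuousMap.add_apply, add_mul]
  rw [integral_add (integrable_of_cont μ (by fun_prop)) (integrable_of_cont μ (by fun_prop)),
    integral_add (integrable_of_cont μ (by fun_prop)) (integrable_of_cont μ (by fun_prop))]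
  ring

lemma mix_add_right (S : X → X) (hS : Continuous S) (f g g' : C(X, ℂ)) :
    ∫ z, f (S z) * (g + g') z ∂μ - (∫ z, f z ∂μ) * ∫ z, (g + g') z ∂μ =
    (∫ z, f (S z) * g z ∂μ - (∫ z, f z ∂μ) * ∫ z, g z ∂μ) +
    (∫ z, f (S z) * g' z ∂μ - (∫ z, f z ∂μ) * ∫ z, g' z ∂μ) := by
  simp only [ContinuousMap.add_apply, mul_add]
  rw [integral_add (integrable_of_cont μ (by fun_prop)) (integrable_of_cont μ (by fun_prop)),
    integral_add (integrable_of_cont μ (by fun_prop)) (integrable_of_cont μ (by fun_prop))]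
  ring

lemma mix_smul_left (S : X → X) (c : ℂ) (f g : C(X, ℂ)) :
    ∫ z, (c • f) (S z) * g z ∂μ - (∫ z, (c • f) z ∂μ) * ∫ z, g z ∂μ =
    c * (∫ z, f (S z) * g z ∂μ - (∫ z, f z ∂μ) * ∫ z, g z ∂μ) := by
  simp only [ContinuousMap.smul_apply, smul_eq_mul, mul_assoc, integral_const_mul]
  ring

lemma mix_smul_right (S : X → X) (c : ℂ) (f g : C(X, ℂ)) :
    ∫ z, f (S z) * (c • g) z ∂μ - (∫ z, f z ∂μ) * ∫ z, (c • g) z ∂μ =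
    c * (∫ z, f (S z) * g z ∂μ - (∫ z, f z ∂μ) * ∫ z, g z ∂μ) := by
  simp only [ContinuousMap.smul_apply, smul_eq_mul, mul_left_comm, integral_const_mul]
  ring

variable {μ} {S : ℕ → X → X}

lemma Mix.add_left (hS : ∀ j, Continuous (S j)) {f f' g : C(X, ℂ)} (h : Mix μ S f g) (h' : Mix μ S f' g) :
    Mix μ S (f + f') g := by
  unfold Mix at *
  simp only [fun j => mix_add_left μ (S j) (hS j) f f' g]
  simpa using h.add h'

lemma Mix.add_right (hS : ∀ j, Continuous (S j)) {f g g' : C(X, ℂ)} (h : Mix μ S f g) (h' : Mix μ S f g') :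
    Mix μ S f (g + g') := by
  unfold Mix at *
  simp only [fun j => mix_add_right μ (S j) (hS j) f g g']
  simpa using h.add h'

lemma Mix.smul_left {f g : C(X, ℂ)} (c : ℂ) (h : Mix μ S f g) : Mix μ S (c • f) g := by
  unfold Mix at *
  simp only [mix_smul_left]
  simpa using h.const_mul c

lemma Mix.smul_right {f g : C(X, ℂ)} (c : ℂ) (h : Mix μ S f g) : Mix μ S f (c • g) := by
  unfold Mix at *
  simp only [mix_smul_right]
  simpa using h.const_mul c

lemma Mix.closed_left (hS : ∀ j, Continuous (S j)) (g : C(X, ℂ)) : IsClosed {f | Mix μ S f g} := by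
  refine isClosed_tendsto _ (2 * ‖g‖ + 1) (by positivity) fun j f f' => ?_
  have h := mix_sub_bound μ (S j) (hS j) (f - f') g
  have h2 := mix_add_left μ (S j) (hS j) (f - f') f' g
  rw [sub_add_cancel] at h2
  rw [h2, add_sub_cancel_right]
  nlinarith [norm_nonneg (f - f')]

lemma Mix.closed_right (hS : ∀ j, Continuous (S j)) (f : C(X, ℂ)) : IsClosed {g | Mix μ S f g} := by
  refine isClosed_tendsto _ (2 * ‖f‖ + 1) (by positivity) fun j g g' => ?_
  have h := mix_sub_bound μ (S j) (hS j) f (g - g')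
  have h2 := mix_add_right μ (S j) (hS j) f (g - g') g'
  rw [sub_add_cancel] at h2
  rw [h2, add_sub_cancel_right]
  nlinarith [norm_nonneg (g - g')]

lemma Mix.zero_left (g : C(X, ℂ)) : Mix μ S 0 g := by
  simp [Mix]

lemma Mix.zero_right (f : C(X, ℂ)) : Mix μ S f 0 := by
  simp [Mix]

end mix

lemma mix4 {S : ℕ → Torus2 → Torus2} (hS : ∀ j, Continuous (S j))
    (h : ∀ f g, Mix (volume : Measure Torus2) S f g) (f g : C(T4, ℂ)) :
    Mix ((volume : Measure Torus2).prod volume) (fun j p => (S j p.1, S j p.2)) f g := by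
  have hS2 : ∀ j, Continuous (fun p : T4 => (S j p.1, S j p.2)) := fun j => by
    have := hS j; fun_prop
  refine dense_ind2 (p := fun f => Mix _ _ f g) (Mix.closed_left hS2 g) (Mix.zero_left g)
    (fun _ _ h1 h2 => h1.add_left hS2 h2) (fun c _ h1 => h1.smul_left c) (fun m n k l => ?_) f
  refine dense_ind2 (p := fun g => Mix _ _ _ g) (Mix.closed_right hS2 _) (Mix.zero_right _)
    (fun _ _ h1 h2 => h1.add_right hS2 h2) (fun c _ h1 => h1.smul_right c) (fun m' n' k' l' => ?_) g
  have t1 := h (ch m n) (ch m' n')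
  have t2 := h (ch k l) (ch k' l')
  unfold Mix at *
  have e1 : ∀ j, ∫ z : T4, ch4 m n k l (S j z.1, S j z.2) * ch4 m' n' k' l' z ∂((volume : Measure Torus2).prod volume)
      = (∫ z, ch m n (S j z) * ch m' n' z) * ∫ z, ch k l (S j z) * ch k' l' z := by
    intro j
    rw [← integral_prod_mul]
    refine integral_congr_ae (Eventually.of_forall fun z => ?_)
    simp [ch4]; ring
  have e2 : ∀ m n k l, ∫ z : T4, ch4 m n k l z ∂((volume : Measure Torus2).prod volume)
      = (∫ z, ch m n z) * ∫ z, ch k l z := by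
    intro m n k l
    rw [← integral_prod_mul]
    rfl
  simp only [e1, e2]
  rw [← tendsto_sub_nhds_zero_iff] at *
  simp only [sub_zero] at *
  have t1' : Tendsto (fun j => ∫ z, ch m n (S j z) * ch m' n' z) atTop (𝓝 ((∫ z, ch m n z) * ∫ z, ch m' n' z)) :=
    tendsto_sub_nhds_zero_iff.1 t1
  have t2' : Tendsto (fun j => ∫ z, ch k l (S j z) * ch k' l' z) atTop (𝓝 ((∫ z, ch k l z) * ∫ z, ch k' l' z)) :=
    tendsto_sub_nhds_zero_iff.1 t2
  have t3 := (t1'.mul t2').sub_const ((∫ z, ch m n z) * (∫ z, ch m' n' z) * ((∫ z, ch k l z) * ∫ z, ch k' l' z))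
  rw [sub_self] at t3
  refine t3.congr fun j => ?_
  ring

/-- A sequence of mixing times gives a product ergodic system. -/
lemma weaklyMixing_of_mix {T : Torus2 → Torus2} (hT : Continuous T)
    (mp : MeasurePreserving T volume volume) (N : ℕ → ℕ)
    (h : ∀ f g, Mix (volume : Measure Torus2) (fun j => T^[N j]) f g) :
    WeaklyMixing T (volume : Measure Torus2) := by
  set ν : Measure T4 := (volume : Measure Torus2).prod volume with hν
  set S : T4 → T4 := fun p => (T p.1, T p.2) with hSdef
  have hprob : IsProbabilityMeasure ν := by rw [hν]; infer_instance
  have mpS : MeasurePreserving S ν ν := mp.prod mp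
  have cS : Continuous S := by fun_prop
  have iter : ∀ n, S^[n] = fun p : T4 => (T^[n] p.1, T^[n] p.2) := by
    intro n
    induction n with
    | zero => rfl
    | succ n ih => ext1 p; rw [Function.iterate_succ_apply', ih]; simp [hSdef, Function.iterate_succ_apply']
  have m4 : ∀ f g : C(T4, ℂ), Mix ν (fun j => S^[N j]) f g := by
    intro f g
    simp only [iter]
    exact mix4 (fun j => hT.iterate _) h f g
  refine ⟨mpS, ⟨fun A hA hinv => ?_⟩⟩
  have hinvn : ∀ n z, S^[n] z ∈ A ↔ z ∈ A := by
    intro n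
    induction n with
    | zero => intro z; rfl
    | succ n ih =>
      intro z
      rw [Function.iterate_succ_apply, ih]
      exact Set.ext_iff.1 hinv z
  let H : T4 → ℂ := A.indicator 1
  have hHi : Integrable H ν := (integrable_const (1 : ℂ)).indicator hA
  have hHn : ∀ z, ‖H z‖ ≤ 1 := fun z => by
    by_cases hz : z ∈ A <;> simp [H, hz]
  have hHinv : ∀ n z, H (S^[n] z) = H z := fun n z => by
    by_cases hz : z ∈ A
    · have := (hinvn n z).2 hz; simp [H, hz, this]
    · have := mt (hinvn n z).1 hz; simp [H, hz, this]
  set c : ℂ := ∫ z, H z ∂ν with hc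
  have hcH : c = (ν.real A : ℂ) := by
    rw [hc]; simp only [H]; rw [integral_indicator hA]; simp [measureReal_def]
  have approx : ∀ ε > 0, ∃ g : C(T4, ℂ), ∫ z, ‖H z - g z‖ ∂ν ≤ ε := by
    intro ε hε
    have wr : ν.WeaklyRegular := Measure.WeaklyRegular.of_pseudoMetrizableSpace_of_isFiniteMeasure ν
    obtain ⟨g, hg, _⟩ := Integrable.exists_boundedContinuous_integral_sub_le (α := T4) (E := ℂ) (μ := ν) hHi hε
    exact ⟨g.toContinuousMap, hg⟩
  have ic : ∀ g : C(T4, ℂ), Integrable g ν := fun g => integrable_of_cont ν g.continuous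
  have diffi : ∀ g : C(T4, ℂ), ‖c - ∫ z, g z ∂ν‖ ≤ ∫ z, ‖H z - g z‖ ∂ν := by
    intro g
    rw [hc, ← integral_sub hHi (ic g)]
    exact norm_integral_le_integral_norm _
  have step1 : ∀ Φ : C(T4, ℂ), ∫ z, H z * Φ z ∂ν = c * ∫ z, Φ z ∂ν := by
    intro Φ
    rw [← sub_eq_zero, ← norm_le_zero_iff]
    refine le_of_forall_pos_le_add fun ε hε => ?_
    obtain ⟨g, hg⟩ := approx (ε / (2 * (‖Φ‖ + 1))) (by positivity)
    have hg2 : (∫ z, ‖H z - g z‖ ∂ν) * ‖Φ‖ ≤ ε / 2 := by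
      rw [le_div_iff₀ (by positivity)] at hg
      have : 0 ≤ ∫ z, ‖H z - g z‖ ∂ν := integral_nonneg fun z => norm_nonneg _
      nlinarith
    have hΦ : ‖∫ z, Φ z ∂ν‖ ≤ ‖Φ‖ := by
      simpa using norm_integral_le_of_norm_le_const (μ := ν) (f := Φ) (C := ‖Φ‖)
        (Eventually.of_forall fun z => Φ.norm_coe_le_norm z)
    have hb : ∀ j, ‖∫ z, H z * Φ z ∂ν - c * ∫ z, Φ z ∂ν‖ ≤ ε +
        ‖∫ z, g (S^[N j] z) * Φ z ∂ν - (∫ z, g z ∂ν) * ∫ z, Φ z ∂ν‖ := by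
      intro j
      have mpn := mpS.iterate (N j)
      have cn := cS.iterate (N j)
      have i1 : Integrable (fun z => H z * Φ z) ν := by
        refine (hHi.mul_bdd (c := ‖Φ‖) Φ.continuous.aestronglyMeasurable (Eventually.of_forall fun z => Φ.norm_coe_le_norm z))
      have i2 : Integrable (fun z => g (S^[N j] z) * Φ z) ν := integrable_of_cont ν (by fun_prop)
      have i3 : Integrable (fun z => ‖H z - g z‖) ν := (hHi.sub (ic g)).norm
      have a1 : ‖∫ z, H z * Φ z ∂ν - ∫ z, g (S^[N j] z) * Φ z ∂ν‖ ≤ (∫ z, ‖H z - g z‖ ∂ν) * ‖Φ‖ := by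
        rw [← integral_sub i1 i2]
        have e : ∫ z, ‖H z - g z‖ ∂ν = ∫ z, ‖H (S^[N j] z) - g (S^[N j] z)‖ ∂ν := by
          have := integral_map mpn.measurable.aemeasurable (f := fun z => ‖H z - g z‖)
            (by rw [mpn.map_eq]; exact i3.aestronglyMeasurable)
          rw [mpn.map_eq] at this
          exact this
        rw [e, ← integral_mul_const]
        refine norm_integral_le_of_norm_le ?_ (Eventually.of_forall fun z => ?_)
        · exact (mpn.integrable_comp_of_integrable i3).mul_const _
        · rw [hHinv, ← sub_mul, norm_mul]
          exact mul_le_mul_of_nonneg_left (Φ.norm_coe_le_norm z) (norm_nonneg _)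
      have a2 : ‖(∫ z, g z ∂ν) * (∫ z, Φ z ∂ν) - c * ∫ z, Φ z ∂ν‖ ≤ (∫ z, ‖H z - g z‖ ∂ν) * ‖Φ‖ := by
        rw [← sub_mul, norm_mul, norm_sub_rev]
        exact mul_le_mul (diffi g) hΦ (norm_nonneg _) (integral_nonneg fun z => norm_nonneg _)
      have e : ∫ z, H z * Φ z ∂ν - c * ∫ z, Φ z ∂ν =
        (∫ z, H z * Φ z ∂ν - ∫ z, g (S^[N j] z) * Φ z ∂ν) +
        (∫ z, g (S^[N j] z) * Φ z ∂ν - (∫ z, g z ∂ν) * ∫ z, Φ z ∂ν) +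
        ((∫ z, g z ∂ν) * (∫ z, Φ z ∂ν) - c * ∫ z, Φ z ∂ν) := by ring
      rw [e]
      refine (norm_add₃_le).trans ?_
      linarith
    have lim := ((m4 g Φ).norm).const_add ε
    rw [norm_zero, add_zero] at lim
    rw [zero_add]
    exact ge_of_tendsto' lim hb
  have step2 : c = c * c := by
    rw [← sub_eq_zero, ← norm_le_zero_iff]
    refine le_of_forall_pos_le_add fun ε hε => ?_
    obtain ⟨g, hg⟩ := approx (ε / (1 + ‖c‖)) (by positivity)
    rw [le_div_iff₀ (by positivity)] at hg
    have i1 : Integrable (fun z => H z * g z) ν :=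
      hHi.mul_bdd (c := ‖g‖) g.continuous.aestronglyMeasurable (Eventually.of_forall fun z => g.norm_coe_le_norm z)
    have hHH : ∀ z, H z = H z * H z := fun z => by
      by_cases hz : z ∈ A <;> simp [H, hz]
    have a1 : ‖c - ∫ z, H z * g z ∂ν‖ ≤ ∫ z, ‖H z - g z‖ ∂ν := by
      rw [hc, ← integral_sub hHi i1]
      refine norm_integral_le_of_norm_le (hHi.sub (ic g)).norm (Eventually.of_forall fun z => ?_)
      have : H z - H z * g z = H z * (H z - g z) := by rw [mul_sub, ← hHH]
      rw [this, norm_mul]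
      exact mul_le_of_le_one_left (norm_nonneg _) (hHn z)
    rw [step1] at a1
    have a2 := diffi g
    have e : c - c * c = (c - c * ∫ z, g z ∂ν) - c * (c - ∫ z, g z ∂ν) := by ring
    rw [e, zero_add]
    refine (norm_sub_le _ _).trans ?_
    rw [norm_mul]
    nlinarith [norm_nonneg c]
  rw [hcH] at step2
  have step3 : ν.real A = ν.real A * ν.real A := by exact_mod_cast step2
  rw [eventuallyConst_set]
  rcases eq_or_ne (ν.real A) 0 with h0 | h0
  · right
    have : ν A = 0 := (measureReal_eq_zero_iff (measure_ne_top _ _)).1 h0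
    exact measure_eq_zero_iff_ae_notMem.1 this
  · left
    have h1 : ν.real A = 1 := by
      have := mul_left_cancel₀ h0 (show ν.real A * ν.real A = ν.real A * 1 by rw [mul_one]; exact step3.symm)
      exact this
    have h2 : ν A = 1 := by
      rw [measureReal_def] at h1
      exact (ENNReal.toReal_eq_one_iff _).1 h1
    rw [← mem_ae_iff_prob_eq_one hA] at h2
    exact h2

end

noncomputable section
namespace Par
variable (P : Par)

def bb (j : ℕ) : ℝ := P.a j / P.δ j
def e1 (j : ℕ) : ℝ := (∑ i ∈ Finset.range j, P.q i * (P.a i / P.δ i)) / (P.a j / P.δ j)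
def e2 (j : ℕ) : ℝ := (∑' i, P.a (i + (j + 1)) * P.q (i + (j + 1))) / P.δ j
def NN (j : ℕ) : ℕ := ⌊1 / (2 * P.δ j)⌋₊
def om (j : ℕ) : ℝ := P.δ j + P.a j * P.e1 j + P.a j + P.δ j * P.e2 j
def eta (j : ℕ) : ℝ := P.e1 j + P.e2 j / P.bb j + P.om j

lemma bb_pos (j : ℕ) : 0 < P.bb j := div_pos (P.a_pos j) (P.δ_pos j)

lemma a_tend : Tendsto P.a atTop (𝓝 0) := by
  simpa using (P.a_sum 0).tendsto_atTop_zero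

lemma e1_tend : Tendsto P.e1 atTop (𝓝 0) := P.err1
lemma e2_tend : Tendsto P.e2 atTop (𝓝 0) := P.err2
lemma bb_tend : Tendsto P.bb atTop atTop := P.b_tend

lemma e1_nonneg (j : ℕ) : 0 ≤ P.e1 j :=
  div_nonneg (Finset.sum_nonneg fun i _ => mul_nonneg (by positivity) (P.bb_pos i).le) (P.bb_pos j).le

lemma e2_nonneg (j : ℕ) : 0 ≤ P.e2 j :=
  div_nonneg (tsum_nonneg fun i => mul_nonneg (P.a_pos _).le (by positivity)) (P.δ_pos j).le

lemma om_nonneg (j : ℕ) : 0 ≤ P.om j := by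
  have := P.e1_nonneg j; have := P.e2_nonneg j; have := P.δ_pos j; have := P.a_pos j
  unfold om; positivity

lemma eta_nonneg (j : ℕ) : 0 ≤ P.eta j := by
  have := P.e1_nonneg j; have := P.e2_nonneg j; have := P.om_nonneg j; have := P.bb_pos j
  unfold eta; positivity

lemma om_tend : Tendsto P.om atTop (𝓝 0) := by
  have := ((P.δ_tend.add (P.a_tend.mul P.e1_tend)).add P.a_tend).add (P.δ_tend.mul P.e2_tend)
  simp only [mul_zero, add_zero] at this
  exact this

lemma eta_tend : Tendsto P.eta atTop (𝓝 0) := by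
  have := (P.e1_tend.add (P.e2_tend.div_atTop P.bb_tend)).add P.om_tend
  simp only [add_zero] at this
  exact this

variable {P}

lemma S_split {c : ℕ → ℂ} (hc : P.Rap c) {C : ℝ} (hC : 0 ≤ C)
    (hb : ∀ i, ‖c i‖ ≤ C * (P.q i * P.a i)) (j : ℕ) {u : ℝ} (hu : |u| ≤ 1 / P.δ j) (z : Torus2) :
    |P.S c u z - (c j * P.X j z * P.ei j u).re| ≤ C * (P.bb j * P.e1 j + P.e2 j) := by
  have hs := summable_S hc u z
  have hδj := P.δ_pos j
  rw [S, ← hs.sum_add_tsum_nat_add (j + 1), Finset.sum_range_succ, ← Complex.sub_re]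
  refine (Complex.abs_re_le_norm _).trans ?_
  rw [show ∀ x y w : ℂ, x + y + w - y = x + w from fun x y w => by ring]
  refine (norm_add_le _ _).trans ?_
  rw [mul_add]
  refine add_le_add ?_ ?_
  · have e : P.bb j * P.e1 j = ∑ i ∈ Finset.range j, P.q i * (P.a i / P.δ i) := by
      have := (P.bb_pos j).ne'
      rw [e1]; exact mul_div_cancel₀ _ this
    rw [e, Finset.mul_sum]
    refine (norm_sum_le _ _).trans (Finset.sum_le_sum fun i _ => ?_)
    rw [norm_mul, norm_mulX]
    have hδ := P.δ_pos i
    have h1 := P.norm_ei_le_inv i u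
    have h2 : 1 / (Real.pi * P.δ i) ≤ 1 / P.δ i := by
      apply one_div_le_one_div_of_le hδ
      nlinarith [Real.pi_gt_three]
    calc ‖c i‖ * ‖P.ei i u‖ ≤ (C * (P.q i * P.a i)) * (1 / P.δ i) :=
          mul_le_mul (hb i) (h1.trans h2) (norm_nonneg _) ((norm_nonneg _).trans (hb i))
      _ = C * (P.q i * (P.a i / P.δ i)) := by ring
  · have hsum : Summable fun i => P.a (i + (j + 1)) * P.q (i + (j + 1)) := by
      have := P.a_sum 1
      simp only [pow_one] at this
      exact (summable_nat_add_iff (f := fun i => P.a i * P.q i) (j + 1)).2 this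
    have e : C * P.e2 j = ∑' i, C / P.δ j * (P.a (i + (j + 1)) * P.q (i + (j + 1))) := by
      rw [tsum_mul_left, e2]; ring
    rw [e]
    refine tsum_of_norm_bounded (hsum.mul_left _).hasSum fun i => ?_
    rw [norm_mul, norm_mulX]
    calc ‖c (i + (j + 1))‖ * ‖P.ei (i + (j + 1)) u‖
        ≤ (C * (P.q (i + (j + 1)) * P.a (i + (j + 1)))) * (1 / P.δ j) :=
          mul_le_mul (hb _) ((P.norm_ei_le_abs _ u).trans hu) (norm_nonneg _) ((norm_nonneg _).trans (hb _))
      _ = _ := by ring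

variable (P)

lemma NN_le (j : ℕ) : (P.NN j : ℝ) ≤ 1 / (2 * P.δ j) := by
  have := P.δ_pos j
  exact Nat.floor_le (by positivity)

lemma NN_ge (j : ℕ) : 1 / (2 * P.δ j) < P.NN j + 1 := Nat.lt_floor_add_one _

lemma abs_UN (j : ℕ) (z : Torus2) : |P.U (P.NN j) z| ≤ 1 / P.δ j := by
  have h := P.abs_U_le (P.NN j) z
  have h2 := P.NN_le j
  have hδ := P.δ_pos j
  rw [Nat.abs_cast] at h
  have : 1 / P.δ j = 2 * (1 / (2 * P.δ j)) := by field_simp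
  linarith

lemma norm_ca (i : ℕ) : ‖P.ca i‖ = P.a i := by
  simp [ca, abs_of_pos (P.a_pos i)]

lemma ca_le (i : ℕ) : ‖P.ca i‖ ≤ 1 * (P.q i * P.a i) := by
  rw [norm_ca]; nlinarith [P.q_one i, P.a_pos i]

lemma norm_dxca (i : ℕ) : ‖P.dx P.ca i‖ = 2 * Real.pi * (P.q i * P.a i) := by
  have := P.q_pos' i
  rw [dx, norm_mul, norm_ca, norm_mul, Complex.norm_I, Complex.norm_real, Real.norm_of_nonneg (by positivity)]
  ring

lemma U_near (j : ℕ) (z : Torus2) : |P.δ j * P.U (P.NN j) z - 1 / 2| ≤ P.om j := by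
  have hδ := P.δ_pos j
  have h1 := S_split P.hca zero_le_one P.ca_le j (P.abs_UN j z) z
  have h2 := P.tau_U (P.NN j) z
  rw [tau] at h2
  have h3 : |(P.ca j * P.X j z * P.ei j (P.U (P.NN j) z)).re| ≤ P.bb j := by
    refine (Complex.abs_re_le_norm _).trans ?_
    rw [norm_mul, norm_mulX, norm_ca, bb, div_eq_mul_one_div]
    refine mul_le_mul_of_nonneg_left ((P.norm_ei_le_inv j _).trans ?_) (P.a_pos j).le
    apply one_div_le_one_div_of_le hδ
    nlinarith [Real.pi_gt_three]
  set Sv := P.S P.ca (P.U (P.NN j) z) z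
  set R := (P.ca j * P.X j z * P.ei j (P.U (P.NN j) z)).re
  set u := P.U (P.NN j) z
  have h4 : |Sv| ≤ P.bb j * P.e1 j + P.e2 j + P.bb j := by
    have := abs_sub_abs_le_abs_sub Sv R
    linarith
  have h5 : P.δ j * |Sv| ≤ P.a j * P.e1 j + P.δ j * P.e2 j + P.a j := by
    have hb : P.δ j * P.bb j = P.a j := by rw [bb]; field_simp
    calc P.δ j * |Sv| ≤ P.δ j * (P.bb j * P.e1 j + P.e2 j + P.bb j) := by gcongr
      _ = (P.δ j * P.bb j) * P.e1 j + P.δ j * P.e2 j + P.δ j * P.bb j := by ring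
      _ = _ := by rw [hb]
  have h6 : |P.δ j * P.NN j - 1 / 2| ≤ P.δ j := by
    have a1 := P.NN_le j
    have a2 := P.NN_ge j
    have a3 : P.δ j * (1 / (2 * P.δ j)) = 1 / 2 := by field_simp
    have a4 := mul_le_mul_of_nonneg_left a1 hδ.le
    have a5 := mul_le_mul_of_nonneg_left a2.le hδ.le
    rw [abs_le]; constructor <;> nlinarith
  have h7 : P.δ j * u - 1 / 2 = (P.δ j * P.NN j - 1 / 2) - P.δ j * Sv := by
    have : u = P.NN j - Sv := by linarith
    rw [this]; ring
  rw [h7]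
  refine (abs_sub _ _).trans ?_
  rw [abs_mul, abs_of_pos hδ, om]
  linarith

lemma ei_near (j : ℕ) (u : ℝ) :
    ‖P.ei j u - Complex.I / (Real.pi * P.δ j : ℝ)‖ ≤ |P.δ j * u - 1 / 2| / P.δ j := by
  have hδ := P.δ_pos j
  have hpi := Real.pi_pos
  have hδ' : (P.δ j : ℂ) ≠ 0 := by exact_mod_cast hδ.ne'
  have hpi' : (Real.pi : ℂ) ≠ 0 := by exact_mod_cast hpi.ne'
  have e : P.ei j u - Complex.I / (Real.pi * P.δ j : ℝ) =
      (P.ex j u + 1) / ((2 * Real.pi * P.δ j : ℝ) * Complex.I) := by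
    rw [ei]; push_cast; field_simp
    have := Complex.I_sq
    linear_combination (-2) * this
  have h1 : ‖P.ex j u + 1‖ ≤ 2 * Real.pi * |P.δ j * u - 1 / 2| := by
    have e2 : P.ex j u + 1 = -(Complex.exp (Complex.I * ((2 * Real.pi * (P.δ j * u - 1 / 2) : ℝ) : ℂ)) - 1) := by
      have : Complex.I * ((2 * Real.pi * (P.δ j * u - 1 / 2) : ℝ) : ℂ) =
        ((2 * Real.pi * P.δ j : ℝ) * Complex.I) * u - Real.pi * Complex.I := by push_cast; ring
      rw [this, Complex.exp_sub, Complex.exp_pi_mul_I, ex]; ring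
    rw [e2, norm_neg]
    refine (Real.norm_exp_I_mul_ofReal_sub_one_le).trans ?_
    rw [Real.norm_eq_abs, abs_mul, abs_of_pos (by positivity : 0 < 2 * Real.pi)]
  rw [e, norm_div, norm_mul, Complex.norm_I, mul_one, Complex.norm_real, Real.norm_of_nonneg (by positivity),
    div_le_div_iff₀ (by positivity) hδ]
  nlinarith

variable {P}

lemma S_near {c : ℕ → ℂ} (hc : P.Rap c) {C : ℝ} (hC : 0 ≤ C)
    (hb : ∀ i, ‖c i‖ ≤ C * (P.q i * P.a i)) (j : ℕ) (z : Torus2) :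
    |P.S c (P.U (P.NN j) z) z - (c j * P.X j z * (Complex.I / (Real.pi * P.δ j : ℝ))).re| ≤
      (C * P.bb j + ‖c j‖ / P.δ j) * P.eta j := by
  have hδ := P.δ_pos j
  have hbb := P.bb_pos j
  have h1 := S_split hc hC hb j (P.abs_UN j z) z
  set u := P.U (P.NN j) z
  have h2 : |(c j * P.X j z * P.ei j u).re - (c j * P.X j z * (Complex.I / (Real.pi * P.δ j : ℝ))).re| ≤
      ‖c j‖ / P.δ j * P.om j := by
    rw [← Complex.sub_re, ← mul_sub]
    refine (Complex.abs_re_le_norm _).trans ?_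
    rw [norm_mul, norm_mulX]
    calc ‖c j‖ * _ ≤ ‖c j‖ * (P.om j / P.δ j) := by
          refine mul_le_mul_of_nonneg_left ((P.ei_near j u).trans ?_) (norm_nonneg _)
          gcongr; exact P.U_near j z
      _ = _ := by ring
  have h3 : C * (P.bb j * P.e1 j + P.e2 j) = C * P.bb j * (P.e1 j + P.e2 j / P.bb j) := by
    field_simp
  have h4 := abs_sub_le (P.S c u z) (c j * P.X j z * P.ei j u).re (c j * P.X j z * (Complex.I / (Real.pi * P.δ j : ℝ))).re
  have h5 : C * P.bb j * (P.e1 j + P.e2 j / P.bb j) ≤ C * P.bb j * P.eta j := by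
    refine mul_le_mul_of_nonneg_left ?_ (by positivity)
    have := P.om_nonneg j; rw [eta]; linarith
  have h6 : ‖c j‖ / P.δ j * P.om j ≤ ‖c j‖ / P.δ j * P.eta j := by
    refine mul_le_mul_of_nonneg_left ?_ (by positivity)
    have := P.e1_nonneg j; have := P.e2_nonneg j
    have : 0 ≤ P.e2 j / P.bb j := by positivity
    rw [eta]; linarith
  rw [add_mul]
  linarith

variable (P)

/-- the shear coefficient at time `NN j` -/
lemma E_near (j : ℕ) (z : Torus2) :
    |P.S (P.dx P.ca) (P.U (P.NN j) z) z + 2 * P.q j * P.bb j * (P.X j z).re| ≤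
      4 * Real.pi * P.q j * P.bb j * P.eta j := by
  have hδ := P.δ_pos j
  have h := S_near (c := P.dx P.ca) P.hca.dx (C := 2 * Real.pi) (by positivity) (fun i => (P.norm_dxca i).le) j z
  have hpi' : (Real.pi : ℂ) ≠ 0 := by exact_mod_cast Real.pi_pos.ne'
  have hδ' : (P.δ j : ℂ) ≠ 0 := by exact_mod_cast hδ.ne'
  have e : P.dx P.ca j * P.X j z * (Complex.I / (Real.pi * P.δ j : ℝ)) =
      ((-(2 * P.q j * P.bb j) : ℝ) : ℂ) * P.X j z := by
    rw [dx, ca, bb]; push_cast; field_simp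
    have := Complex.I_sq
    linear_combination ((P.q j : ℂ) * P.a j * P.X j z) * this
  rw [e, Complex.re_ofReal_mul, norm_dxca] at h
  rw [show P.S (P.dx P.ca) (P.U (P.NN j) z) z + 2 * P.q j * P.bb j * (P.X j z).re =
    P.S (P.dx P.ca) (P.U (P.NN j) z) z - -(2 * P.q j * P.bb j) * (P.X j z).re by ring]
  refine h.trans ?_
  have hbb := P.bb_pos j
  have : 2 * Real.pi * (P.q j * P.a j) / P.δ j = 2 * Real.pi * (P.q j * P.bb j) := by rw [bb]; ring
  rw [this]
  refine mul_le_mul_of_nonneg_right ?_ (P.eta_nonneg j)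
  have hp := Real.pi_pos
  have : Real.pi * P.bb j * 1 ≤ Real.pi * P.bb j * P.q j := by gcongr; exact P.q_one j
  linarith

/-- the displacement at time `NN j` -/
lemma U_disp (j : ℕ) (z : Torus2) :
    |P.U (P.NN j) z - P.NN j - P.bb j / Real.pi * (P.X j z).im| ≤ 2 * P.bb j * P.eta j := by
  have hδ := P.δ_pos j
  have h := S_near P.hca zero_le_one P.ca_le j z
  have hpi' : (Real.pi : ℂ) ≠ 0 := by exact_mod_cast Real.pi_pos.ne'
  have hδ' : (P.δ j : ℂ) ≠ 0 := by exact_mod_cast hδ.ne'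
  have e : P.ca j * P.X j z * (Complex.I / (Real.pi * P.δ j : ℝ)) =
      ((P.bb j / Real.pi : ℝ) : ℂ) * (P.X j z * Complex.I) := by
    rw [ca, bb]; push_cast; field_simp
  rw [e, Complex.re_ofReal_mul, norm_ca, Complex.mul_I_re] at h
  have h2 := P.tau_U (P.NN j) z
  rw [tau] at h2
  rw [abs_sub_comm] at h
  have : (1 * P.bb j + P.a j / P.δ j) * P.eta j = 2 * P.bb j * P.eta j := by rw [bb]; ring
  rw [this] at h
  convert! h using 2
  linarith

end Par
end

noncomputable section

lemma circ_null : (volume : Measure (AddCircle (1 : ℝ))) {x | (fourier 1 x : ℂ).re = 0} = 0 := by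
  have : {x : AddCircle (1 : ℝ) | (fourier 1 x : ℂ).re = 0} ⊆ {((1 / 4 : ℝ) : AddCircle (1 : ℝ)), ((3 / 4 : ℝ) : AddCircle (1 : ℝ))} := by
    intro x hx
    have h1 : ‖(fourier 1 x : ℂ)‖ = 1 := by rw [fourier_apply]; exact Circle.norm_coe _
    have hx' : (fourier 1 x : ℂ).re = 0 := hx
    have h2 : (fourier 1 x : ℂ).im ^ 2 = 1 := by
      have := Complex.sq_norm_sub_sq_re (fourier 1 x : ℂ)
      rw [h1, hx'] at this
      linarith
    have inj : ∀ y : AddCircle (1 : ℝ), (fourier 1 x : ℂ) = fourier 1 y → x = y := by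
      intro y hy
      simp only [fourier_apply, one_zsmul] at hy
      exact AddCircle.injective_toCircle one_ne_zero (Subtype.ext hy)
    have h3 : (fourier 1 ((1 / 4 : ℝ) : AddCircle (1 : ℝ)) : ℂ) = Complex.I := by
      rw [fourier_coe_apply]
      rw [show 2 * (Real.pi : ℂ) * Complex.I * ((1 : ℤ) : ℂ) * ((1 / 4 : ℝ) : ℂ) / ((1 : ℝ) : ℂ) = Real.pi / 2 * Complex.I by push_cast; ring]
      exact Complex.exp_pi_div_two_mul_I
    have h4 : (fourier 1 ((3 / 4 : ℝ) : AddCircle (1 : ℝ)) : ℂ) = -Complex.I := by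
      rw [fourier_coe_apply]
      rw [show 2 * (Real.pi : ℂ) * Complex.I * ((1 : ℤ) : ℂ) * ((3 / 4 : ℝ) : ℂ) / ((1 : ℝ) : ℂ) = Real.pi * Complex.I + Real.pi / 2 * Complex.I by push_cast; ring]
      rw [Complex.exp_add, Complex.exp_pi_mul_I, Complex.exp_pi_div_two_mul_I]; ring
    rcases (sq_eq_sq_iff_eq_or_eq_neg.1 (h2.trans (one_pow 2).symm)) with h | h
    · left; refine inj _ ?_; rw [h3]; exact Complex.ext (hx'.trans Complex.I_re.symm) (h.trans Complex.I_im.symm)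
    · right; refine inj _ ?_; rw [h4]; exact Complex.ext (hx'.trans (by simp)) (h.trans (by simp))
  refine measure_mono_null this ?_
  have pt : ∀ x : AddCircle (1 : ℝ), volume ({x} : Set (AddCircle (1 : ℝ))) = 0 := by
    intro x
    rw [← Metric.closedBall_zero, AddCircle.volume_closedBall]
    simp
  rw [Set.insert_eq]
  exact measure_union_null (pt _) (pt _)

def Icirc (κ : ℝ) : ℝ := ∫ x : AddCircle (1 : ℝ), κ ^ 2 / ((fourier 1 x : ℂ).re ^ 2 + κ ^ 2)

lemma Icirc_small (ε : ℝ) (hε : 0 < ε) : ∃ κ > 0, Icirc κ < ε := by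
  have hden : ∀ (k : ℕ) (c : ℝ), 0 < c ^ 2 + (1 / ((k : ℝ) + 1)) ^ 2 := fun k c => by positivity
  have h : Tendsto (fun k : ℕ => Icirc (1 / ((k : ℝ) + 1))) atTop (𝓝 (∫ _ : AddCircle (1 : ℝ), (0 : ℝ))) := by
    refine tendsto_integral_of_dominated_convergence (fun _ => 1) (fun k => ?_) (integrable_const _) (fun k => ?_) ?_
    · refine Continuous.aestronglyMeasurable (Continuous.div continuous_const ?_ fun x => (hden k _).ne')
      have := (fourier 1 : C(AddCircle (1 : ℝ), ℂ)).continuous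
      fun_prop
    · refine Eventually.of_forall fun x => ?_
      rw [Real.norm_of_nonneg (by positivity), div_le_one (hden k _)]
      nlinarith [sq_nonneg (fourier 1 x : ℂ).re]
    · have hae : ∀ᵐ x : AddCircle (1 : ℝ), (fourier 1 x : ℂ).re ≠ 0 := measure_eq_zero_iff_ae_notMem.1 circ_null
      filter_upwards [hae] with x hx
      have h1 : Tendsto (fun k : ℕ => (1 / ((k : ℝ) + 1)) ^ 2) atTop (𝓝 0) := by
        simpa using (tendsto_one_div_add_atTop_nhds_zero_nat (𝕜 := ℝ)).pow 2
      have h2 := h1.div (h1.const_add ((fourier 1 x : ℂ).re ^ 2)) (by rw [add_zero]; positivity)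
      rw [add_zero, zero_div] at h2
      exact h2
  rw [integral_zero] at h
  obtain ⟨k, hk⟩ := (h.eventually (gt_mem_nhds hε)).exists
  exact ⟨_, by positivity, hk⟩

namespace Par
variable (P : Par)

lemma integral_X (j : ℕ) (κ : ℝ) :
    ∫ z, κ ^ 2 / ((P.X j z).re ^ 2 + κ ^ 2) = Icirc κ := by
  let φ : Torus2 →+ AddCircle (1 : ℝ) :=
    { toFun := fun z => (P.q j : ℤ) • z.1 + (-(P.p j : ℤ)) • z.2
      map_zero' := by simp
      map_add' := fun z w => by simp only [Prod.fst_add, Prod.snd_add, smul_add]; abel }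
  have hφc : Continuous φ := by
    change Continuous fun z : Torus2 => (P.q j : ℤ) • z.1 + (-(P.p j : ℤ)) • z.2
    fun_prop
  have hφs : Function.Surjective φ := by
    intro x
    obtain ⟨y, rfl⟩ := QuotientAddGroup.mk_surjective x
    refine ⟨torusProj (y / P.q j, 0), ?_⟩
    have hq := (P.q_pos' j).ne'
    change (P.q j : ℤ) • ((y / P.q j : ℝ) : AddCircle (1 : ℝ)) + (-(P.p j : ℤ)) • ((0 : ℝ) : AddCircle (1 : ℝ)) = (y : AddCircle (1 : ℝ))
    rw [← AddCircle.coe_zsmul]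
    simp only [zsmul_eq_mul, Int.cast_natCast, AddCircle.coe_zero, smul_zero, add_zero]
    congr 1; field_simp
  have mp : MeasurePreserving φ (volume : Measure Torus2) (volume : Measure (AddCircle (1 : ℝ))) := by
    refine AddMonoidHom.measurePreserving hφc hφs ?_
    simp
  have hX : ∀ z, P.X j z = fourier 1 (φ z) := by
    intro z
    simp [X, ch, φ, fourier_apply, AddCircle.toCircle_add]
  have hm : Continuous (fourier 1 : C(AddCircle (1 : ℝ), ℂ)) := (fourier 1 : C(AddCircle (1 : ℝ), ℂ)).continuous
  have hmeas : Measurable fun x : AddCircle (1 : ℝ) => κ ^ 2 / ((fourier 1 x : ℂ).re ^ 2 + κ ^ 2) := by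
    refine Measurable.div measurable_const (Continuous.measurable ?_)
    fun_prop
  have := integral_map (μ := (volume : Measure Torus2)) mp.measurable.aemeasurable (f := fun x : AddCircle (1 : ℝ) => κ ^ 2 / ((fourier 1 x : ℂ).re ^ 2 + κ ^ 2))
    hmeas.aestronglyMeasurable
  rw [mp.map_eq] at this
  rw [Icirc, this]
  simp only [hX]

end Par
end

noncomputable section
namespace Par
variable (P : Par)

lemma rho_pos (z : Torus2) : 0 < P.rho z := lt_of_lt_of_le (by norm_num) (P.rho_ge z)

lemma rho_ne (z : Torus2) : (P.rho z : ℂ) ≠ 0 := by exact_mod_cast (P.rho_pos z).ne'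

/-- Derivative in `x` of a character along the time-changed flow. -/
lemma hasDerivAt_chFx (m n : ℤ) (t : ℝ) (z : Torus2) :
    HasDerivAt (fun h : ℝ => ch m n (P.F t (z + torusProj (h • ((1 : ℝ), (0 : ℝ))))))
      (((2 * Real.pi * m : ℝ) : ℂ) * Complex.I * ch m n (P.F t z) -
        ((2 * Real.pi * (m * P.α + n) : ℝ) : ℂ) * Complex.I *
          (ch m n (P.F t z) / P.rho (P.F t z) * (P.S (P.dx P.ca) (P.U t z) z : ℂ))) 0 := by
  simp only [P.ch_F m n t]
  have h1 := hasDerivAt_ch m n (1, 0) z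
  have h2 : HasDerivAt (fun h : ℝ => P.U t (z + torusProj (h • ((1 : ℝ), (0 : ℝ)))))
      (-(P.S (P.dx P.ca) (P.U t z) z) / P.rho (P.F t z)) 0 := by
    have := P.hasDerivAt_U t z
    simpa using this
  have h3 := ((h2.ofReal_comp).const_mul (((2 * Real.pi * (m * P.α + n) : ℝ) : ℂ) * Complex.I)).cexp
  have h4 := h1.mul h3
  refine h4.congr_deriv ?_
  simp only [zero_smul, torusProj_zero, add_zero, mul_one, mul_zero]
  have := P.rho_ne (P.F t z)
  push_cast
  field_simp
  ring

def sk (κ c : ℝ) : ℝ := c / (c ^ 2 + κ ^ 2)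
def sk' (κ c : ℝ) : ℝ := (κ ^ 2 - c ^ 2) / (c ^ 2 + κ ^ 2) ^ 2

lemma sk_den {κ : ℝ} (hκ : 0 < κ) (c : ℝ) : 0 < c ^ 2 + κ ^ 2 := by positivity

lemma hasDerivAt_sk {κ : ℝ} (hκ : 0 < κ) (c : ℝ) : HasDerivAt (sk κ) (sk' κ c) c := by
  have h := (hasDerivAt_id c).div (((hasDerivAt_id c).pow 2).add_const (κ ^ 2)) (sk_den hκ c).ne'
  refine h.congr_deriv ?_
  simp only [sk', id]
  congr 1
  simp; ring

lemma abs_sk_le {κ : ℝ} (hκ : 0 < κ) (c : ℝ) : |sk κ c| ≤ 1 / κ := by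
  rw [sk, abs_div, abs_of_pos (sk_den hκ c), div_le_div_iff₀ (sk_den hκ c) hκ]
  have := sq_abs c
  nlinarith [sq_nonneg (|c| - κ), abs_nonneg c]

lemma abs_sk'_le {κ : ℝ} (hκ : 0 < κ) (c : ℝ) : |sk' κ c| ≤ 1 / κ ^ 2 := by
  have h := sk_den hκ c
  rw [sk', abs_div, abs_of_pos (by positivity : 0 < (c ^ 2 + κ ^ 2) ^ 2), div_le_div_iff₀ (by positivity) (by positivity)]
  have : |κ ^ 2 - c ^ 2| ≤ c ^ 2 + κ ^ 2 := by
    rw [abs_le]; constructor <;> nlinarith [sq_nonneg c, sq_nonneg κ]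
  nlinarith [sq_nonneg c, sq_nonneg κ, mul_nonneg (sq_nonneg c) h.le, mul_le_mul_of_nonneg_right this (sq_nonneg κ)]

lemma continuous_sk {κ : ℝ} (hκ : 0 < κ) : Continuous (sk κ) :=
  Continuous.div continuous_id (by fun_prop) fun c => (sk_den hκ c).ne'

lemma continuous_sk' {κ : ℝ} (hκ : 0 < κ) : Continuous (sk' κ) :=
  Continuous.div (by fun_prop) (by fun_prop) fun c => by have := sk_den hκ c; positivity

lemma core_bound (m n m' n' : ℤ) (hβ : (m * P.α + n : ℝ) ≠ 0) {κ : ℝ} (hκ : 0 < κ) (j : ℕ) :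
    ‖∫ z, ch m n (P.F (P.NN j) z) / P.rho (P.F (P.NN j) z) * ch m' n' z‖ ≤
      2 * Icirc κ + ((|(m : ℝ)| / κ + |(m' : ℝ)| / κ + 1 / κ ^ 2) / |(m * P.α + n : ℝ)|) / P.bb j
        + 4 * Real.pi / κ * P.eta j := by
  set t : ℝ := (P.NN j : ℝ) with ht
  set β : ℝ := m * P.α + n with hβd
  have hbb := P.bb_pos j
  have hq := P.q_pos' j
  have hq1 := P.q_one j
  have hpi := Real.pi_pos
  have hβp : 0 < |β| := abs_pos.2 hβ
  let χF : Torus2 → ℂ := fun z => ch m n (P.F t z)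
  let Y : Torus2 → ℂ := fun z => ch m n (P.F t z) / P.rho (P.F t z)
  let E : Torus2 → ℝ := fun z => P.S (P.dx P.ca) (P.U t z) z
  let cX : Torus2 → ℝ := fun z => (P.X j z).re
  let Θ : Torus2 → ℂ := fun z => ch m' n' z * (sk κ (cX z) : ℂ)
  let dX : Torus2 → ℝ := fun z => (((2 * Real.pi * P.q j : ℝ) : ℂ) * Complex.I * P.X j z).re
  let DΘ : Torus2 → ℂ := fun z => ((2 * Real.pi * m' : ℝ) : ℂ) * Complex.I * ch m' n' z * (sk κ (cX z) : ℂ)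
    + ch m' n' z * ((sk' κ (cX z) * dX z : ℝ) : ℂ)
  let B : ℝ := 2 * P.q j * P.bb j
  have hB : 0 < B := by positivity
  -- continuity
  have cF := P.continuous_Ft t
  have cU := P.continuous_Ut t
  have crho := P.continuous_rho
  have cχF : Continuous χF := (ch m n).continuous.comp cF
  have cY : Continuous Y := cχF.div (Complex.continuous_ofReal.comp (crho.comp cF)) fun z => P.rho_ne _
  have cE : Continuous E := Continuous.comp (g := fun x : ℝ × Torus2 => P.S (P.dx P.ca) x.1 x.2)
    (f := fun z => (P.U t z, z)) (continuous_S P.hca.dx) (by fun_prop)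
  have ccX : Continuous cX := Complex.continuous_re.comp (P.X j).continuous
  have csk := (continuous_sk hκ).comp ccX
  have csk' := (continuous_sk' hκ).comp ccX
  have cch := (ch m' n').continuous
  have cΘ : Continuous Θ := cch.mul (Complex.continuous_ofReal.comp csk)
  have cdX : Continuous dX := Complex.continuous_re.comp (continuous_const.mul (P.X j).continuous)
  have cDΘ : Continuous DΘ := ((continuous_const.mul cch).mul (Complex.continuous_ofReal.comp csk)).add
    (cch.mul (Complex.continuous_ofReal.comp (csk'.mul cdX)))
  -- pointwise bounds
  have bχF : ∀ z, ‖χF z‖ = 1 := fun z => norm_ch _ _ _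
  have bY : ∀ z, ‖Y z‖ ≤ 2 := fun z => by
    simp only [Y]
    rw [norm_div, norm_ch, Complex.norm_real, Real.norm_of_nonneg (P.rho_pos _).le, div_le_iff₀ (P.rho_pos _)]
    linarith [P.rho_ge (P.F t z)]
  have bΘ : ∀ z, ‖Θ z‖ ≤ 1 / κ := fun z => by
    simp only [Θ]
    rw [norm_mul, norm_ch, one_mul, Complex.norm_real]
    exact abs_sk_le hκ _
  have bdX : ∀ z, |dX z| ≤ 2 * Real.pi * P.q j := fun z => by
    refine (Complex.abs_re_le_norm _).trans ?_
    rw [norm_mul, norm_mul, norm_X, Complex.norm_I, Complex.norm_real, Real.norm_of_nonneg (by positivity)]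
    linarith
  have bDΘ : ∀ z, ‖DΘ z‖ ≤ 2 * Real.pi * |(m' : ℝ)| / κ + 2 * Real.pi * P.q j / κ ^ 2 := fun z => by
    refine (norm_add_le _ _).trans (add_le_add ?_ ?_)
    · rw [norm_mul, norm_mul, norm_mul, norm_ch, Complex.norm_I, Complex.norm_real, Complex.norm_real, mul_one, mul_one,
        Real.norm_eq_abs, Real.norm_eq_abs, abs_mul, abs_of_pos (by positivity : 0 < 2 * Real.pi), div_eq_mul_one_div (2 * Real.pi * |(m' : ℝ)|)]
      exact mul_le_mul_of_nonneg_left (abs_sk_le hκ _) (by positivity)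
    · rw [norm_mul, norm_ch, one_mul, Complex.norm_real, Real.norm_eq_abs, abs_mul]
      calc |sk' κ (cX z)| * |dX z| ≤ 1 / κ ^ 2 * (2 * Real.pi * P.q j) :=
            mul_le_mul (abs_sk'_le hκ _) (bdX z) (abs_nonneg _) (by positivity)
        _ = _ := by ring
  -- integration by parts
  have dΘ : ∀ z, HasDerivAt (fun h : ℝ => Θ (z + torusProj (h • ((1 : ℝ), (0 : ℝ))))) (DΘ z) 0 := by
    intro z
    have h1 := hasDerivAt_ch m' n' (1, 0) z
    have h2 := hasDerivAt_ch (P.q j) (-(P.p j)) (1, 0) z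
    have h3 : HasDerivAt (fun h : ℝ => cX (z + torusProj (h • ((1 : ℝ), (0 : ℝ))))) (dX z) 0 := by
      have := Complex.reCLM.hasFDerivAt.comp_hasDerivAt (0 : ℝ) h2
      refine this.congr_deriv ?_
      simp only [dX, X, Complex.reCLM_apply]
      congr 3
      push_cast; ring
    have h4 : HasDerivAt (sk κ) (sk' κ (cX z)) (cX (z + torusProj ((0 : ℝ) • ((1 : ℝ), (0 : ℝ))))) := by
      rw [zero_smul, torusProj_zero, add_zero]; exact hasDerivAt_sk hκ _
    have h5 := HasDerivAt.comp (h := fun h : ℝ => cX (z + torusProj (h • ((1 : ℝ), (0 : ℝ))))) (0 : ℝ) h4 h3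
    have h6 := h1.mul h5.ofReal_comp
    refine h6.congr_deriv ?_
    simp only [DΘ, Function.comp_apply, zero_smul, torusProj_zero, add_zero, mul_one, mul_zero]
  have ibp := integral_deriv_zero (G := fun z => χF z * Θ z)
    (H := fun z => (((2 * Real.pi * m : ℝ) : ℂ) * Complex.I * χF z -
        ((2 * Real.pi * β : ℝ) : ℂ) * Complex.I * (Y z * (E z : ℂ))) * Θ z + χF z * DΘ z)
    (cχF.mul cΘ) (by fun_prop) (1, 0) (fun z => by
      have h := (P.hasDerivAt_chFx m n t z).mul (dΘ z)
      refine h.congr_deriv ?_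
      simp only [zero_smul, torusProj_zero, add_zero]
      rfl)
  have ibp2 : ((2 * Real.pi * β : ℝ) : ℂ) * Complex.I * ∫ z, Y z * (E z : ℂ) * Θ z =
      ∫ z, (((2 * Real.pi * m : ℝ) : ℂ) * Complex.I * χF z * Θ z + χF z * DΘ z) := by
    rw [← integral_const_mul, ← sub_eq_zero, ← neg_eq_zero, neg_sub, ← integral_sub (integrable_of_cont _ (by fun_prop))
      (integrable_of_cont _ (by fun_prop)), ← ibp]
    refine integral_congr_ae (Eventually.of_forall fun z => ?_)
    simp only; ring
  have nv : ∀ (f : Torus2 → ℂ) (C : ℝ), (∀ z, ‖f z‖ ≤ C) → ‖∫ z, f z‖ ≤ C := fun f C h => by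
    simpa using norm_integral_le_of_norm_le_const (μ := (volume : Measure Torus2)) (f := f) (C := C) (Eventually.of_forall h)
  have J2 : ‖∫ z, Y z * (E z : ℂ) * Θ z‖ ≤ P.q j * ((|(m : ℝ)| / κ + |(m' : ℝ)| / κ + 1 / κ ^ 2) / |β|) := by
    have h1 := nv (fun z => ((2 * Real.pi * m : ℝ) : ℂ) * Complex.I * χF z * Θ z + χF z * DΘ z)
      (2 * Real.pi * |(m : ℝ)| / κ + (2 * Real.pi * |(m' : ℝ)| / κ + 2 * Real.pi * P.q j / κ ^ 2)) (fun z => by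
        refine (norm_add_le _ _).trans (add_le_add ?_ ?_)
        · rw [norm_mul, norm_mul, norm_mul, bχF, Complex.norm_I, Complex.norm_real, mul_one, mul_one,
            Real.norm_eq_abs, abs_mul, abs_of_pos (by positivity : 0 < 2 * Real.pi), div_eq_mul_one_div (2 * Real.pi * |(m : ℝ)|)]
          exact mul_le_mul_of_nonneg_left (bΘ z) (by positivity)
        · rw [norm_mul, bχF, one_mul]; exact bDΘ z)
    rw [← ibp2, norm_mul, norm_mul, Complex.norm_I, mul_one, Complex.norm_real, Real.norm_eq_abs, abs_mul,
      abs_of_pos (by positivity : 0 < 2 * Real.pi)] at h1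
    set J := ‖∫ z, Y z * (E z : ℂ) * Θ z‖
    have h2 : |β| * J ≤ |(m : ℝ)| / κ + |(m' : ℝ)| / κ + P.q j / κ ^ 2 := by
      have : 2 * Real.pi * (|β| * J) ≤ 2 * Real.pi * (|(m : ℝ)| / κ + |(m' : ℝ)| / κ + P.q j / κ ^ 2) := by
        refine le_trans (le_of_eq (by ring)) (h1.trans (le_of_eq (by ring)))
      exact le_of_mul_le_mul_left this (by positivity)
    have h3 : |(m : ℝ)| / κ + |(m' : ℝ)| / κ + P.q j / κ ^ 2 ≤ P.q j * (|(m : ℝ)| / κ + |(m' : ℝ)| / κ + 1 / κ ^ 2) := by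
      have a1 : 0 ≤ |(m : ℝ)| / κ := by positivity
      have a2 : 0 ≤ |(m' : ℝ)| / κ := by positivity
      have a3 : (P.q j : ℝ) / κ ^ 2 = P.q j * (1 / κ ^ 2) := by ring
      nlinarith
    rw [← mul_div_assoc, le_div_iff₀ hβp]
    linarith
  -- the decomposition
  have dec : ∀ z, Y z * ch m' n' z = Y z * ch m' n' z * ((κ ^ 2 / (cX z ^ 2 + κ ^ 2) : ℝ) : ℂ)
      + (-(1 / B) : ℝ) * (Y z * (E z : ℂ) * Θ z) + ((1 / B : ℝ) : ℂ) * (Y z * ((E z + B * cX z : ℝ) : ℂ) * Θ z) := by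
    intro z
    have h1 : (1 : ℝ) = κ ^ 2 / (cX z ^ 2 + κ ^ 2) + cX z * sk κ (cX z) := by
      have := (sk_den hκ (cX z)).ne'
      rw [sk]; field_simp; ring
    have h2 : ((κ ^ 2 / (cX z ^ 2 + κ ^ 2) : ℝ) : ℂ) + (cX z : ℂ) * (sk κ (cX z) : ℂ) = 1 := by
      rw [← Complex.ofReal_mul, ← Complex.ofReal_add, ← h1, Complex.ofReal_one]
    have hB' : (B : ℂ) ≠ 0 := by exact_mod_cast hB.ne'
    conv_lhs => rw [← mul_one (Y z * ch m' n' z), ← h2]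
    simp only [Θ]
    rw [Complex.ofReal_neg, Complex.ofReal_add, Complex.ofReal_mul B, Complex.ofReal_div 1 B, Complex.ofReal_one]
    field_simp
    ring
  have cw : Continuous fun z => κ ^ 2 / (cX z ^ 2 + κ ^ 2) :=
    Continuous.div continuous_const (by fun_prop) fun z => (sk_den hκ _).ne'
  have c1 : Continuous fun z => Y z * ch m' n' z * ((κ ^ 2 / (cX z ^ 2 + κ ^ 2) : ℝ) : ℂ) :=
    (cY.mul cch).mul (Complex.continuous_ofReal.comp cw)
  have c2 : Continuous fun z => ((-(1 / B) : ℝ) : ℂ) * (Y z * (E z : ℂ) * Θ z) := by fun_prop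
  have c3 : Continuous fun z => ((1 / B : ℝ) : ℂ) * (Y z * ((E z + B * cX z : ℝ) : ℂ) * Θ z) := by fun_prop
  have b1 : ‖∫ z, Y z * ch m' n' z * ((κ ^ 2 / (cX z ^ 2 + κ ^ 2) : ℝ) : ℂ)‖ ≤ 2 * Icirc κ := by
    rw [← P.integral_X j κ, ← integral_const_mul]
    refine norm_integral_le_of_norm_le (integrable_of_cont _ (continuous_const.mul cw)) (Eventually.of_forall fun z => ?_)
    rw [norm_mul, norm_mul, norm_ch, mul_one, Complex.norm_real, Real.norm_of_nonneg (by have := sk_den hκ (cX z); positivity)]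
    exact mul_le_mul_of_nonneg_right (bY z) (by have := sk_den hκ (cX z); positivity)
  have b2 : ‖∫ z, ((-(1 / B) : ℝ) : ℂ) * (Y z * (E z : ℂ) * Θ z)‖ ≤
      ((|(m : ℝ)| / κ + |(m' : ℝ)| / κ + 1 / κ ^ 2) / |β|) / P.bb j := by
    rw [integral_const_mul, norm_mul, Complex.norm_real, Real.norm_eq_abs, abs_neg, abs_of_pos (by positivity)]
    set M := (|(m : ℝ)| / κ + |(m' : ℝ)| / κ + 1 / κ ^ 2) / |β|
    have hM : 0 ≤ M := by positivity
    calc 1 / B * _ ≤ 1 / B * (P.q j * M) := by gcongr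
      _ = M / P.bb j / 2 := by simp only [B]; field_simp
      _ ≤ M / P.bb j := by
        have : 0 ≤ M / P.bb j := by positivity
        linarith
  have b3 : ‖∫ z, ((1 / B : ℝ) : ℂ) * (Y z * ((E z + B * cX z : ℝ) : ℂ) * Θ z)‖ ≤ 4 * Real.pi / κ * P.eta j := by
    refine nv _ _ fun z => ?_
    rw [norm_mul, norm_mul, norm_mul, Complex.norm_real, Complex.norm_real, Real.norm_of_nonneg (by positivity), Real.norm_eq_abs]
    have hE : |E z + B * cX z| ≤ 2 * Real.pi * B * P.eta j := by
      have := P.E_near j z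
      simp only [B]
      refine this.trans (le_of_eq (by ring))
    have heta := P.eta_nonneg j
    calc 1 / B * (‖Y z‖ * |E z + B * cX z| * ‖Θ z‖) ≤ 1 / B * (2 * (2 * Real.pi * B * P.eta j) * (1 / κ)) := by
          refine mul_le_mul_of_nonneg_left ?_ (by positivity)
          refine mul_le_mul (mul_le_mul (bY z) hE (abs_nonneg _) (by norm_num)) (bΘ z) (norm_nonneg _) (by positivity)
      _ = _ := by field_simp; ring
  change ‖∫ z, Y z * ch m' n' z‖ ≤ _
  have c12 : Continuous fun z => Y z * ch m' n' z * ((κ ^ 2 / (cX z ^ 2 + κ ^ 2) : ℝ) : ℂ) + ((-(1 / B) : ℝ) : ℂ) * (Y z * (E z : ℂ) * Θ z) := c1.add c2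
  rw [integral_congr_ae (Eventually.of_forall dec), integral_add (integrable_of_cont _ c12) (integrable_of_cont _ c3),
    integral_add (integrable_of_cont _ c1) (integrable_of_cont _ c2)]
  exact (norm_add₃_le).trans (add_le_add (add_le_add b1 b2) b3)

lemma core (m n m' n' : ℤ) (hβ : (m * P.α + n : ℝ) ≠ 0) :
    Tendsto (fun j => ∫ z, ch m n (P.F (P.NN j) z) / P.rho (P.F (P.NN j) z) * ch m' n' z) atTop (𝓝 0) := by
  rw [Metric.tendsto_atTop]
  intro ε hε
  obtain ⟨κ, hκ, hI⟩ := Icirc_small (ε / 4) (by positivity)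
  have h1 : Tendsto (fun j => ((|(m : ℝ)| / κ + |(m' : ℝ)| / κ + 1 / κ ^ 2) / |(m * P.α + n : ℝ)|) / P.bb j) atTop (𝓝 0) :=
    tendsto_const_nhds.div_atTop P.bb_tend
  have h2 : Tendsto (fun j => 4 * Real.pi / κ * P.eta j) atTop (𝓝 0) := by
    simpa using P.eta_tend.const_mul (4 * Real.pi / κ)
  have h3 := ((h1.eventually (gt_mem_nhds (show (0 : ℝ) < ε / 4 by positivity))).and
    (h2.eventually (gt_mem_nhds (show (0 : ℝ) < ε / 4 by positivity))))
  obtain ⟨N, hN⟩ := eventually_atTop.1 h3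
  refine ⟨N, fun j hj => ?_⟩
  rw [dist_zero_right]
  have := P.core_bound m n m' n' hβ hκ j
  have := (hN j hj).1
  have := (hN j hj).2
  linarith

end Par
end

noncomputable section

namespace Par
variable (P : Par)

lemma lin_ne (m n : ℤ) (h : (m, n) ≠ 0) : (m * P.α + n : ℝ) ≠ 0 := by
  intro h0
  have key : ∀ j, (m : ℝ) * P.δ j = ((-(m * P.p j + n * P.q j) : ℤ) : ℝ) := by
    intro j
    push_cast
    have := P.δ_eq j
    have e : (m : ℝ) * P.δ j = P.q j * (m * P.α + n) - (m * P.p j + n * P.q j) := by rw [← this]; ring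
    rw [e, h0]; ring
  have ht : Tendsto (fun j => (m : ℝ) * P.δ j) atTop (𝓝 0) := by simpa using P.δ_tend.const_mul (m : ℝ)
  have hev := ht.abs.eventually (gt_mem_nhds (show |(0 : ℝ)| < 1 by simp))
  obtain ⟨j, hj⟩ := hev.exists
  rw [key j] at hj
  have hz : (-(m * P.p j + n * P.q j) : ℤ) = 0 := by
    have : |((-(m * P.p j + n * P.q j) : ℤ))| < 1 := by exact_mod_cast hj
    exact Int.abs_lt_one_iff.1 this
  have hm : (m : ℝ) * P.δ j = 0 := by rw [key j, hz]; simp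
  have hm0 : m = 0 := by
    rcases mul_eq_zero.1 hm with h1 | h1
    · exact_mod_cast h1
    · exact absurd h1 (P.δ_pos j).ne'
  subst hm0
  have hn : n = 0 := by
    have : (n : ℝ) = 0 := by simpa using h0
    exact_mod_cast this
  subst hn
  exact h rfl

def ir : C(Torus2, ℂ) := ⟨fun z => ((P.rho z : ℝ) : ℂ)⁻¹,
  (Complex.continuous_ofReal.comp P.continuous_rho).inv₀ P.rho_ne⟩

lemma rhoC_ne (z : Torus2) : ((P.rho z : ℝ) : ℂ) ≠ 0 := by
  have := P.rho_ge z
  exact_mod_cast (show P.rho z ≠ 0 by linarith)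

lemma core2 (m n : ℤ) (h : (m, n) ≠ 0) (g : C(Torus2, ℂ)) :
    Tendsto (fun j => ∫ z, (ch m n * P.ir) (P.F (P.NN j) z) * g z) atTop (𝓝 0) := by
  have cF : ∀ j : ℕ, Continuous fun z => (ch m n * P.ir) (P.F (P.NN j) z) := fun j =>
    (ch m n * P.ir).continuous.comp (P.continuous_Ft _)
  have I : ∀ (j : ℕ) (g : C(Torus2, ℂ)), Integrable (fun z => (ch m n * P.ir) (P.F (P.NN j) z) * g z) volume := fun j g =>
    integrable_of_cont _ ((cF j).mul g.continuous)
  refine dense_ind (p := fun g => Tendsto (fun j => ∫ z, (ch m n * P.ir) (P.F (P.NN j) z) * g z) atTop (𝓝 0))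
    ?_ ?_ ?_ ?_ ?_ g
  · refine isClosed_tendsto (fun j (g : C(Torus2, ℂ)) => ∫ z, (ch m n * P.ir) (P.F (P.NN j) z) * g z) (‖ch m n * P.ir‖ + 1)
      (by positivity) fun j f g => ?_
    rw [← integral_sub (I j f) (I j g)]
    have := norm_integral_le_of_norm_le_const (μ := (volume : Measure Torus2))
      (f := fun z => (ch m n * P.ir) (P.F (P.NN j) z) * f z - (ch m n * P.ir) (P.F (P.NN j) z) * g z)
      (C := (‖ch m n * P.ir‖ + 1) * ‖f - g‖) (Eventually.of_forall fun z => ?_)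
    · simpa using this
    · rw [← mul_sub, norm_mul]
      have h1 := (ch m n * P.ir).norm_coe_le_norm (P.F (P.NN j) z)
      have h2 := (f - g).norm_coe_le_norm z
      exact mul_le_mul (by linarith) h2 (norm_nonneg _) (by positivity)
  · simp
  · intro f g hf hg
    have := hf.add hg
    rw [add_zero] at this
    refine this.congr fun j => ?_
    rw [← integral_add (I j f) (I j g)]
    simp only [ContinuousMap.add_apply, mul_add]
  · intro c f hf
    have := hf.const_mul c
    rw [mul_zero] at this
    refine this.congr fun j => ?_
    rw [← integral_const_mul]
    congr 1; ext z
    simp only [ContinuousMap.smul_apply, smul_eq_mul]; ring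
  · intro m' n'
    refine (P.core m n m' n' (P.lin_ne m n h)).congr fun j => ?_
    rfl

def VV (f : C(Torus2, ℂ)) : C(Torus2, ℂ) := (f * P.ir).comp ⟨P.Kh.symm, P.Kh.symm.continuous⟩

lemma VV_cont : Continuous P.VV :=
  (ContinuousMap.continuous_precomp _).comp (continuous_id.mul continuous_const)

lemma VV_apply (f : C(Torus2, ℂ)) (z : Torus2) : P.VV f z = f (P.Kh.symm z) * P.ir (P.Kh.symm z) := rfl

lemma vol_to_mu (h : C(Torus2, ℂ)) : ∫ z, h z = ∫ z, (P.rho z : ℂ) * h (P.Kh z) := by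
  rw [← integral_mu P (fun z => h (P.Kh z))]
  conv_lhs => rw [← P.mp_K.map_eq]
  rw [integral_map P.mp_K.measurable.aemeasurable h.continuous.aestronglyMeasurable]

lemma mix_ch (m n : ℤ) (h : (m, n) ≠ 0) (g : C(Torus2, ℂ)) :
    Mix (volume : Measure Torus2) (fun j => (P.Tt 1)^[P.NN j]) (P.VV (ch m n)) g := by
  have h0 : ∫ z, P.VV (ch m n) z = 0 := by
    rw [vol_to_mu, ← integral_ch m n h]
    congr 1; ext z
    rw [VV_apply, P.Kh.symm_apply_apply]
    change (P.rho z : ℂ) * (_ * (P.rho z : ℂ)⁻¹) = _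
    have := P.rhoC_ne z
    field_simp
  unfold Mix
  simp only [h0, zero_mul, sub_zero]
  let g' : C(Torus2, ℂ) := ⟨fun z => (P.rho z : ℂ) * g (P.Kh z),
    (Complex.continuous_ofReal.comp P.continuous_rho).mul (g.continuous.comp P.Kh.continuous)⟩
  refine (P.core2 m n h g').congr fun j => ?_
  have cT : Continuous ((P.Tt 1)^[P.NN j]) := (P.continuous_Tt 1).iterate _
  have := P.vol_to_mu ⟨fun z => P.VV (ch m n) ((P.Tt 1)^[P.NN j] z) * g z,
    ((P.VV (ch m n)).continuous.comp cT).mul g.continuous⟩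
  simp only [ContinuousMap.coe_mk] at this
  rw [this]
  congr 1; ext z
  simp only [VV_apply, Tt_iter, P.Kh.symm_apply_apply, g', ContinuousMap.coe_mk, ContinuousMap.mul_apply]
  ring

lemma mix_one (g : C(Torus2, ℂ)) :
    Mix (volume : Measure Torus2) (fun j => (P.Tt 1)^[P.NN j]) 1 g := by
  simp [Mix]

lemma conj_ch (m n : ℤ) (z : Torus2) : (starRingEnd ℂ) (ch m n z) = ch (-m) (-n) z := by
  have h1 := ch_mul_conj m n z
  have h2 : ch m n z * (starRingEnd ℂ) (ch m n z) = 1 := by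
    rw [Complex.mul_conj, Complex.normSq_eq_norm_sq, norm_ch]; simp
  have h3 : ch m n z ≠ 0 := by
    intro h; rw [h, zero_mul] at h1; exact zero_ne_one h1
  exact mul_left_cancel₀ h3 (h2.trans h1.symm)

lemma mix_all (f g : C(Torus2, ℂ)) :
    Mix (volume : Measure Torus2) (fun j => (P.Tt 1)^[P.NN j]) f g := by
  have hS : ∀ j, Continuous ((P.Tt 1)^[P.NN j]) := fun j => (P.continuous_Tt 1).iterate _
  let p : C(Torus2, ℂ) → Prop := fun f => Mix (volume : Measure Torus2) (fun j => (P.Tt 1)^[P.NN j]) (P.VV f) g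
  have hcl : IsClosed {f | p f} := (Mix.closed_left hS g).preimage P.VV_cont
  have padd : ∀ f f', p f → p f' → p (f + f') := fun f f' h h' => by
    have e : P.VV (f + f') = P.VV f + P.VV f' := by
      ext z; simp only [VV_apply, ContinuousMap.add_apply]; ring
    simp only [p, e]; exact h.add_left hS h'
  have psmul : ∀ (c : ℂ) f, p f → p (c • f) := fun c f h => by
    have e : P.VV (c • f) = c • P.VV f := by
      ext z; simp only [VV_apply, ContinuousMap.smul_apply, smul_eq_mul]; ring
    simp only [p, e]; exact h.smul_left c
  have p0 : p 0 := by
    have e : P.VV 0 = 0 := by ext z; simp [VV_apply]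
    simp only [p, e]; exact Mix.zero_left g
  let rC : C(Torus2, ℂ) := ⟨fun z => (P.rho z : ℂ), Complex.continuous_ofReal.comp P.continuous_rho⟩
  have pr : p rC := by
    have e : P.VV rC = 1 := by
      ext z
      rw [VV_apply]
      exact mul_inv_cancel₀ (P.rhoC_ne _)
    simp only [p, e]; exact P.mix_one g
  let Z : ℕ → C(Torus2, ℂ) := fun i => (P.a i / 2 : ℂ) • (ch (P.q i) (-(P.p i)) + ch (-(P.q i)) (- -(P.p i)))
  have pZ : ∀ i, p (Z i) := fun i => by
    have hq : (P.q i : ℤ) ≠ 0 := by have := P.q_pos i; omega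
    refine psmul _ _ (padd _ _ (P.mix_ch _ _ ?_ g) (P.mix_ch _ _ ?_ g))
    · intro h; exact hq (congrArg Prod.fst h)
    · intro h; exact hq (neg_eq_zero.1 (congrArg Prod.fst h))
  have nch : ∀ m n, ‖ch m n‖ ≤ 1 := fun m n =>
    (ContinuousMap.norm_le _ zero_le_one).2 fun z => (norm_ch m n z).le
  have sZ : Summable Z := by
    refine Summable.of_norm_bounded (g := fun i => P.a i) (by simpa using P.a_sum 0) fun i => ?_
    rw [norm_smul]
    have h1 : ‖(P.a i / 2 : ℂ)‖ = P.a i / 2 := by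
      rw [norm_div, Complex.norm_real, Real.norm_of_nonneg (P.a_pos i).le]; norm_num
    rw [h1]
    have h2 := (norm_add_le (ch (P.q i) (-(P.p i))) (ch (-(P.q i)) (- -(P.p i)))).trans
      (add_le_add (nch _ _) (nch _ _))
    have := P.a_pos i
    nlinarith
  have pS : p (∑' i, Z i) := by
    refine hcl.mem_of_tendsto sZ.hasSum (Eventually.of_forall fun s => ?_)
    exact Finset.sum_induction Z p padd p0 fun i _ => pZ i
  have eS : rC - (∑' i, Z i) = ch 0 0 := by
    ext z
    have h1 : HasSum (fun i => Z i z) ((∑' i, Z i) z) :=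
      ContinuousMap.hasSum_apply sZ.hasSum z
    have h2 := (summable_cser P.hca z).hasSum
    have h3 := (Complex.hasSum_re h2)
    have h4 : HasSum (fun i => Z i z) ((P.psi z : ℝ) : ℂ) := by
      refine HasSum.congr_fun (f := fun i => (((P.ca i * P.X i z).re : ℝ) : ℂ)) (Complex.hasSum_ofReal.2 h3) fun i => ?_
      simp only [Z, ContinuousMap.smul_apply, ContinuousMap.add_apply, smul_eq_mul]
      rw [← conj_ch, Complex.add_conj, ca, X, Complex.re_ofReal_mul]
      push_cast; ring
    have h5 := h1.unique h4
    rw [ContinuousMap.sub_apply, h5]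
    have : ch 0 0 z = 1 := by
      have := ch_mul_conj 0 0 z
      simp [ch]
    rw [this]
    simp only [rC, ContinuousMap.coe_mk, rho]
    push_cast; ring
  have p1 : p (ch 0 0) := by
    rw [← eS, sub_eq_add_neg, ← neg_one_smul ℂ]
    exact padd _ _ pr (psmul _ _ pS)
  have pall := dense_ind hcl p0 padd psmul (fun m n => by
    by_cases h : (m, n) = 0
    · obtain ⟨rfl, rfl⟩ := Prod.mk.inj h
      exact p1
    · exact P.mix_ch m n h g)
  let f' : C(Torus2, ℂ) := ⟨fun z => (P.rho z : ℂ) * f (P.Kh z),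
    (Complex.continuous_ofReal.comp P.continuous_rho).mul (f.continuous.comp P.Kh.continuous)⟩
  have := pall f'
  have e : P.VV f' = f := by
    ext z
    rw [VV_apply]
    change (P.rho (P.Kh.symm z) : ℂ) * f (P.Kh (P.Kh.symm z)) * (P.rho (P.Kh.symm z) : ℂ)⁻¹ = f z
    have := P.rhoC_ne (P.Kh.symm z)
    rw [P.Kh.apply_symm_apply]
    field_simp
  simpa only [p, e] using this

lemma wm : WeaklyMixing (P.Tt 1) (volume : Measure Torus2) :=
  weaklyMixing_of_mix (P.continuous_Tt 1) P.mp_T P.NN fun f g => P.mix_all f g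

end Par
end

noncomputable section

lemma bowenDist_lt {X : Type*} [PseudoMetricSpace X] (T : X → X) (n : ℕ) (x y : X) {ε : ℝ} (hε : 0 < ε) :
    bowenDist T n x y < ε ↔ ∀ i < n, dist (T^[i] x) (T^[i] y) < ε := by
  lift ε to ℝ≥0 using hε.le
  rw [bowenDist, NNReal.coe_lt_coe, Finset.sup_lt_iff (by exact_mod_cast hε)]
  simp only [Finset.mem_range]
  refine forall₂_congr fun i _ => ?_
  rw [← NNReal.coe_lt_coe, coe_nndist]

lemma dist_coe_le (x y : ℝ) : dist (x : Torus1) (y : Torus1) ≤ |x - y| := by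
  rw [dist_eq_norm, ← AddCircle.coe_sub, UnitAddCircle.norm_eq]
  exact round_le (x - y) 0 |>.trans (by simp)

lemma dist_proj_le (w w' : ℝ × ℝ) {r : ℝ} (h1 : |w.1 - w'.1| ≤ r) (h2 : |w.2 - w'.2| ≤ r) :
    dist (torusProj w) (torusProj w') ≤ r :=
  max_le ((dist_coe_le _ _).trans h1) ((dist_coe_le _ _).trans h2)

namespace Par
variable (P : Par)

def WW (n : ℕ) : ℝ := 1 + ∑' i, P.q i * P.a i * min (2 * (n : ℝ) + 4) (1 / P.δ i)

lemma summ_W (n : ℕ) : Summable fun i => P.q i * P.a i * min (2 * (n : ℝ) + 4) (1 / P.δ i) := by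
  have h : Summable fun i => P.a i * (P.q i : ℝ) ^ 1 * (2 * (n : ℝ) + 4) := (P.a_sum 1).mul_right _
  refine Summable.of_nonneg_of_le (fun i => ?_) (fun i => ?_) h
  · have := P.a_pos i; have := P.δ_pos i; have := P.q_pos' i
    positivity
  · have := P.a_pos i; have := P.q_pos' i
    rw [pow_one, mul_comm (P.a i)]
    exact mul_le_mul_of_nonneg_left (min_le_left _ _) (by positivity)

lemma WW_ge (n : ℕ) : 1 ≤ P.WW n := by
  have : 0 ≤ ∑' i, P.q i * P.a i * min (2 * (n : ℝ) + 4) (1 / P.δ i) := tsum_nonneg fun i => by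
    have := P.a_pos i; have := P.δ_pos i; have := P.q_pos' i
    positivity
  rw [WW]; linarith

lemma abs_Sdx_le (n : ℕ) (u : ℝ) (z : Torus2) (hu : |u| ≤ 2 * (n : ℝ) + 4) :
    |P.S (P.dx P.ca) u z| ≤ 2 * Real.pi * P.WW n := by
  refine (abs_S_le P.hca.dx u z hu).trans ?_
  have h1 : ∑' i, ‖P.dx P.ca i‖ * min (2 * (n : ℝ) + 4) (1 / (Real.pi * P.δ i)) ≤
      ∑' i, 2 * Real.pi * (P.q i * P.a i * min (2 * (n : ℝ) + 4) (1 / P.δ i)) := by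
    refine Summable.tsum_le_tsum (fun i => ?_) (summable_min P.hca.dx _ (by positivity)) ((P.summ_W n).mul_left _)
    rw [norm_dxca, mul_assoc (2 * Real.pi)]
    have := P.a_pos i; have hδ := P.δ_pos i; have := P.q_pos' i
    have hp := Real.pi_gt_three
    refine mul_le_mul_of_nonneg_left (mul_le_mul_of_nonneg_left (min_le_min le_rfl ?_) (by positivity)) (by positivity)
    refine one_div_le_one_div_of_le hδ ?_
    nlinarith
  refine h1.trans ?_
  rw [tsum_mul_left, WW]
  have := Real.pi_pos
  nlinarith

lemma U_lip (n : ℕ) (t : ℝ) (ht : |t| ≤ n + 2) (x x' : ℝ) :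
    |P.U t (torusProj (x, 0)) - P.U t (torusProj (x', 0))| ≤ 4 * Real.pi * P.WW n * |x - x'| := by
  have hd : ∀ x : ℝ, HasDerivAt (fun h : ℝ => P.U t (torusProj (h, 0)))
      (-(P.S (P.dx P.ca) (P.U t (torusProj (x, 0))) (torusProj (x, 0))) / P.rho (P.F t (torusProj (x, 0)))) x := by
    intro x
    have h := P.hasDerivAt_U t (torusProj (x, 0))
    have h2 := HasDerivAt.comp_sub_const (a := x) (x := x) (f := fun h : ℝ => P.U t (torusProj (x, 0) + torusProj (h, 0)))
      (f' := (-(P.S (P.dx P.ca) (P.U t (torusProj (x, 0))) (torusProj (x, 0))) / P.rho (P.F t (torusProj (x, 0)))))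
      (by rw [sub_self]; exact h)
    refine h2.congr_of_eventuallyEq (Eventually.of_forall fun y => ?_)
    simp only [← torusProj_add]
    congr 2; ext <;> simp
  have := Convex.norm_image_sub_le_of_norm_hasDerivWithin_le (s := Set.univ) (C := 4 * Real.pi * P.WW n)
    (fun x _ => (hd x).hasDerivWithinAt) (fun x _ => ?_) convex_univ (mem_univ x') (mem_univ x)
  · simpa [Real.norm_eq_abs] using this
  · have hr := P.rho_ge (P.F t (torusProj (x, 0)))
    have hS := P.abs_Sdx_le n (P.U t (torusProj (x, 0))) (torusProj (x, 0))
      ((P.abs_U_le _ _).trans (by linarith))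
    rw [Real.norm_eq_abs, abs_div, abs_neg, abs_of_pos (P.rho_pos _), div_le_iff₀ (P.rho_pos _)]
    have : 0 ≤ 2 * Real.pi * P.WW n := (abs_nonneg _).trans hS
    nlinarith

lemma dist_F (t t' x x' r : ℝ)
    (h : |x - x'| + |P.U t (torusProj (x, 0)) - P.U t' (torusProj (x', 0))| ≤ r) :
    dist (P.F t (torusProj (x, 0))) (P.F t' (torusProj (x', 0))) ≤ r := by
  rw [F, F, L, L, ← torusProj_add, ← torusProj_add]
  have h0 := abs_nonneg (x - x')
  set u := P.U t (torusProj (x, 0))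
  set v := P.U t' (torusProj (x', 0))
  refine dist_proj_le _ _ ?_ ?_
  · have e : ((x, (0 : ℝ)) + (P.α * u, u)).1 - ((x', (0 : ℝ)) + (P.α * v, v)).1 = (x - x') + P.α * (u - v) := by
      simp; ring
    rw [e]
    refine (abs_add_le _ _).trans (le_trans ?_ h)
    rw [abs_mul, abs_of_pos P.α_pos]
    have := P.α_le
    have := abs_nonneg (u - v)
    nlinarith
  · have e : ((x, (0 : ℝ)) + (P.α * u, u)).2 - ((x', (0 : ℝ)) + (P.α * v, v)).2 = (u - v) := by
      simp
    rw [e]; linarith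

lemma abs_tau_le (u : ℝ) (z : Torus2) : |P.tau u z| ≤ 2 * |u| := by
  have h := abs_S_le P.hca u z (le_refl |u|)
  have h2 : ∑' i, ‖P.ca i‖ * min |u| (1 / (Real.pi * P.δ i)) ≤ ∑' i, ‖P.ca i‖ * |u| :=
    Summable.tsum_le_tsum (fun i => mul_le_mul_of_nonneg_left (min_le_left _ _) (norm_nonneg _))
      (summable_min P.hca _ (abs_nonneg _)) (P.hca.summable.mul_right _)
  rw [tsum_mul_right] at h2
  have h3 := P.sum_ca
  have h4 := abs_nonneg u
  rw [tau]
  refine (abs_add_le _ _).trans ?_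
  nlinarith

lemma fract_proj (x y : ℝ) : torusProj (Int.fract x, y) = torusProj (x, y) := by
  rw [torusProj_eq_iff]
  refine ⟨-⌊x⌋, 0, ?_⟩
  ext
  · simp [Int.fract, sub_eq_add_neg]
  · simp

lemma exists_rep (z : Torus2) : ∃ s x : ℝ, |s| ≤ 2 ∧ 0 ≤ x ∧ x < 1 ∧ P.F s (torusProj (x, 0)) = z := by
  obtain ⟨⟨x, y⟩, rfl⟩ := torusProj_surj z
  have hy : torusProj (x, Int.fract y) = torusProj (x, y) := by
    rw [torusProj_eq_iff]
    refine ⟨0, -⌊y⌋, ?_⟩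
    ext
    · simp
    · simp [Int.fract, sub_eq_add_neg]
  rw [← hy]
  set y' := Int.fract y
  refine ⟨P.tau y' (torusProj (Int.fract (x - P.α * y'), 0)), Int.fract (x - P.α * y'), ?_, Int.fract_nonneg _, Int.fract_lt_one _, ?_⟩
  · refine (P.abs_tau_le _ _).trans ?_
    rw [abs_of_nonneg (Int.fract_nonneg _)]
    have := Int.fract_lt_one y
    linarith
  · rw [F_tau, fract_proj, L, ← torusProj_add]
    congr 1; ext <;> simp

lemma cover_le {ε : ℝ} (hε : 0 < ε) : ∃ C : ℝ, 0 < C ∧ ∀ n, (bowenCoverNum (P.Tt 1) n ε : ℝ) ≤ C * P.WW n := by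
  obtain ⟨η, hη, hu⟩ := Metric.uniformContinuous_iff.1
    (CompactSpace.uniformContinuous_of_continuous P.Kh.continuous) ε hε
  obtain ⟨R, hR⟩ := exists_nat_gt (4 / η)
  have hR0 : (0 : ℝ) < R := lt_trans (by positivity) hR
  refine ⟨(28 / η + 4) * (4 * R + 1), by positivity, fun n => ?_⟩
  have hW := P.WW_ge n
  set W := P.WW n
  set M : ℕ := ⌊28 * W / η⌋₊ + 1 with hM
  have hM1 : 28 * W / η < M := by rw [hM]; push_cast; exact Nat.lt_floor_add_one _
  have hM2 : (M : ℝ) ≤ 28 * W / η + 1 := by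
    rw [hM]; push_cast
    have := Nat.floor_le (show 0 ≤ 28 * W / η by positivity)
    linarith
  have hM0 : (0 : ℝ) < M := lt_trans (by positivity) hM1
  classical
  let cen : ℕ × ℕ → Torus2 := fun k => P.Kh (P.F ((k.2 : ℝ) / R - 2) (torusProj ((k.1 : ℝ) / M, 0)))
  let Fs : Finset Torus2 := ((Finset.range M) ×ˢ (Finset.range (4 * R + 1))).image cen
  have hcard : (Fs.card : ℝ) ≤ M * (4 * R + 1) := by
    have : Fs.card ≤ M * (4 * R + 1) := Finset.card_image_le.trans (by simp)
    exact_mod_cast this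
  have hcov : bowenCoverNum (P.Tt 1) n ε ≤ Fs.card := by
    refine Nat.sInf_le ⟨Fs, rfl, fun y => ?_⟩
    obtain ⟨s, x, hs, hx0, hx1, hF⟩ := P.exists_rep (P.Kh.symm y)
    have hs' := abs_le.1 hs
    let k : ℕ := ⌊x * M⌋₊
    let l : ℕ := ⌊(s + 2) * R⌋₊
    have hk1 : (k : ℝ) ≤ x * M := Nat.floor_le (by positivity)
    have hk2 : x * M < k + 1 := Nat.lt_floor_add_one _
    have hl1 : (l : ℝ) ≤ (s + 2) * R := Nat.floor_le (mul_nonneg (by linarith) hR0.le)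
    have hl2 : (s + 2) * R < l + 1 := Nat.lt_floor_add_one _
    have hkM : k < M := by
      have : (k : ℝ) < M := by nlinarith
      exact_mod_cast this
    have hlR : l < 4 * R + 1 := by
      have : (l : ℝ) < 4 * R + 1 := by nlinarith
      exact_mod_cast this
    refine ⟨cen (k, l), Finset.mem_image.2 ⟨(k, l), by simp [hkM, hlR], rfl⟩, ?_⟩
    rw [bowenDist_lt _ _ _ _ hε]
    intro i hi
    rw [Tt_iter, Tt_iter]
    refine hu ?_
    simp only [cen]
    rw [P.Kh.symm_apply_apply, ← hF, ← F_add, ← F_add]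
    have dx : |(k : ℝ) / M - x| ≤ 1 / M := by
      rw [abs_le]
      constructor
      · rw [div_sub' hM0.ne', ← neg_div, div_le_div_iff_of_pos_right hM0]; linarith
      · rw [div_sub' hM0.ne', div_le_div_iff_of_pos_right hM0]; linarith
    have ds : |((l : ℝ) / R - 2 + i) - (s + i)| ≤ 1 / R := by
      have e : ((l : ℝ) / R - 2 + i) - (s + i) = (l - (s + 2) * R) / R := by field_simp; ring
      rw [e, abs_le]
      constructor
      · rw [← neg_div, div_le_div_iff_of_pos_right hR0]; linarith
      · rw [div_le_div_iff_of_pos_right hR0]; linarith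
    have hi' : (i : ℝ) ≤ n := by exact_mod_cast hi.le
    have hU1 := P.U_lip n (s + i) (by
      refine (abs_add_le _ _).trans ?_
      rw [abs_of_nonneg (Nat.cast_nonneg i : (0 : ℝ) ≤ (i : ℝ))]; linarith) ((k : ℝ) / M) x
    have hU2 := P.abs_U_sub_le ((l : ℝ) / R - 2 + i) (s + i) (torusProj ((k : ℝ) / M, 0))
    refine lt_of_le_of_lt (P.dist_F _ _ _ _ (14 * W * (1 / M) + 2 * (1 / R)) ?_) ?_
    · have h3 := abs_sub_le (P.U ((l : ℝ) / R - 2 + i) (torusProj ((k : ℝ) / M, 0)))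
        (P.U (s + i) (torusProj ((k : ℝ) / M, 0))) (P.U (s + i) (torusProj (x, 0)))
      have h4 : 4 * Real.pi * W * |(k : ℝ) / M - x| ≤ 13 * W * |(k : ℝ) / M - x| := by
        have := Real.pi_lt_d2
        gcongr
        linarith
      have h5 : |(k : ℝ) / M - x| ≤ W * |(k : ℝ) / M - x| := le_mul_of_one_le_left (abs_nonneg _) hW
      have h6 : 14 * W * |(k : ℝ) / M - x| ≤ 14 * W * (1 / M) := by gcongr
      nlinarith
    · have h7 : 14 * W * (1 / M) < η / 2 := by
        rw [mul_one_div, div_lt_iff₀ hM0]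
        rw [div_lt_iff₀ hη] at hM1
        linarith
      have h8 : 2 * (1 / (R : ℝ)) < η / 2 := by
        rw [mul_one_div, div_lt_iff₀ hR0]
        rw [div_lt_iff₀ hη] at hR
        linarith
      linarith
  have hcov' : (bowenCoverNum (P.Tt 1) n ε : ℝ) ≤ Fs.card := by exact_mod_cast hcov
  refine hcov'.trans (hcard.trans ?_)
  have h9 : (M : ℝ) ≤ (28 / η + 4) * W := by
    have e : (28 / η + 4) * W = 28 * W / η + 4 * W := by ring
    rw [e]; linarith
  calc (M : ℝ) * (4 * R + 1) ≤ (28 / η + 4) * W * (4 * R + 1) := by gcongr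
    _ = _ := by ring

end Par
end

noncomputable section

namespace Par
variable (P : Par)

lemma abs_lt_of_circ {d : ℝ} (h : |d| < 1 / 4) (h2 : ‖(d : Torus1)‖ < 1 / 8) : |d| < 1 / 8 := by
  rw [UnitAddCircle.norm_eq] at h2
  have hr : round d = 0 := by
    rw [round_eq_zero_iff]
    have := abs_lt.1 h
    constructor <;> linarith
  simpa [hr] using h2

lemma F_snd (t x : ℝ) : (P.F t (torusProj (x, 0))).2 = (P.U t (torusProj (x, 0)) : Torus1) := by
  simp [F, L, torusProj]

lemma exists_eps : ∃ ε₀ > 0, ∀ (N : ℕ) (x x' : ℝ),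
    (∀ i ≤ N, dist ((P.Tt 1)^[i] (P.Kh (torusProj (x, 0)))) ((P.Tt 1)^[i] (P.Kh (torusProj (x', 0)))) < ε₀) →
    |P.U N (torusProj (x, 0)) - P.U N (torusProj (x', 0))| < 1 / 8 := by
  obtain ⟨η, hη, hU⟩ := Metric.uniformContinuous_iff.1
    (CompactSpace.uniformContinuous_of_continuous (P.continuous_Ut 1)) (1 / 8) (by norm_num)
  obtain ⟨ε₀, hε, hK⟩ := Metric.uniformContinuous_iff.1
    (CompactSpace.uniformContinuous_of_continuous P.Kh.symm.continuous) (min η (1 / 8)) (by positivity)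
  refine ⟨ε₀, hε, fun N x x' h => ?_⟩
  have hd : ∀ i ≤ N, dist (P.F i (torusProj (x, 0))) (P.F i (torusProj (x', 0))) < min η (1 / 8) := by
    intro i hi
    have := hK (h i hi)
    simpa only [Tt_iter, P.Kh.symm_apply_apply] using this
  have key : ∀ i : ℕ, i ≤ N → |P.U i (torusProj (x, 0)) - P.U i (torusProj (x', 0))| < 1 / 8 := by
    intro i
    induction i with
    | zero => intro _; simp [U_zero]
    | succ i ih =>
      intro hi
      have h1 := ih (by omega)
      have h2 := hU ((hd i (by omega)).trans_le (min_le_left _ _))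
      rw [Real.dist_eq] at h2
      have h3 := (hd (i + 1) hi).trans_le (min_le_right _ _)
      refine abs_lt_of_circ ?_ ?_
      · push_cast
        rw [U_add, U_add]
        have := abs_add_le (P.U i (torusProj (x, 0)) - P.U i (torusProj (x', 0)))
          (P.U 1 (P.F i (torusProj (x, 0))) - P.U 1 (P.F i (torusProj (x', 0))))
        have e : P.U i (torusProj (x, 0)) + P.U 1 (P.F i (torusProj (x, 0))) -
          (P.U i (torusProj (x', 0)) + P.U 1 (P.F i (torusProj (x', 0)))) =
          (P.U i (torusProj (x, 0)) - P.U i (torusProj (x', 0))) +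
          (P.U 1 (P.F i (torusProj (x, 0))) - P.U 1 (P.F i (torusProj (x', 0)))) := by ring
        rw [e]
        linarith
      · rw [AddCircle.coe_sub, ← F_snd, ← F_snd, ← dist_eq_norm]
        exact lt_of_le_of_lt (le_max_right _ _) h3
  exact key N le_rfl

lemma cover_ge : ∃ ε₀ > 0, ∀ ε, 0 < ε → ε ≤ ε₀ → ∀ (N : ℕ) (x x' : ℝ),
    P.U N (torusProj (x', 0)) - P.U N (torusProj (x, 0)) ≤ bowenCoverNum (P.Tt 1) (N + 1) ε := by
  obtain ⟨ε₀, h0, hE⟩ := P.exists_eps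
  refine ⟨ε₀ / 2, by positivity, fun ε hε hle N x x' => ?_⟩
  have hne : {M : ℕ | ∃ F : Finset Torus2, F.card = M ∧ ∀ y, ∃ c ∈ F, bowenDist (P.Tt 1) (N + 1) c y < ε}.Nonempty := by
    have huc := CompactSpace.uniformContinuous_of_continuous
      (continuous_pi fun i : Fin (N + 1) => (P.continuous_Tt 1).iterate i)
    obtain ⟨r, hr, hru⟩ := Metric.uniformContinuous_iff.1 huc ε hε
    obtain ⟨t, htf, ht⟩ := Metric.totallyBounded_iff.1 (isCompact_univ (X := Torus2)).totallyBounded r hr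
    refine ⟨_, htf.toFinset, rfl, fun y => ?_⟩
    have := ht (mem_univ y)
    simp only [mem_iUnion] at this
    obtain ⟨c, hc, hcy⟩ := this
    refine ⟨c, htf.mem_toFinset.2 hc, (bowenDist_lt _ _ _ _ hε).2 fun i hi => ?_⟩
    have h1 := hru (a := c) (b := y) (by rw [dist_comm]; exact hcy)
    exact lt_of_le_of_lt (dist_le_pi_dist (fun i : Fin (N + 1) => (P.Tt 1)^[i] c) (fun i : Fin (N + 1) => (P.Tt 1)^[i] y) (⟨i, hi⟩ : Fin (N + 1))) h1
  obtain ⟨F, hF, hcov⟩ := Nat.sInf_mem hne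
  change F.card = bowenCoverNum _ _ _ at hF
  rw [← hF]
  set f : ℝ → ℝ := fun x => P.U N (torusProj (x, 0)) with hf
  have cf : Continuous f := (P.continuous_Ut N).comp (continuous_torusProj.comp (by fun_prop))
  change f x' - f x ≤ _
  by_contra! hlt
  have hpts : ∀ k : Fin (F.card + 1), ∃ w, f w = f x + (k : ℕ) := by
    intro k
    have hk : ((k : ℕ) : ℝ) ≤ F.card := by exact_mod_cast Nat.lt_succ_iff.1 k.2
    have hm : f x + ((k : ℕ) : ℝ) ∈ Set.uIcc (f x) (f x') := by
      rw [Set.uIcc_of_le (by have : (0 : ℝ) ≤ F.card := Nat.cast_nonneg _; linarith)]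
      exact ⟨by have : (0 : ℝ) ≤ (k : ℕ) := Nat.cast_nonneg _
                linarith, by linarith⟩
    obtain ⟨w, -, hw⟩ := intermediate_value_uIcc (cf.continuousOn (s := Set.uIcc x x')) hm
    exact ⟨w, hw⟩
  choose w hw using hpts
  choose c hcF hc using fun y => hcov y
  obtain ⟨k, -, l, -, hkl, hcc⟩ := Finset.exists_ne_map_eq_of_card_lt_of_maps_to (s := (Finset.univ : Finset (Fin (F.card + 1))))
    (t := F) (by simp) (f := fun k => c (P.Kh (torusProj (w k, 0)))) (fun k _ => hcF _)
  have hk := (bowenDist_lt _ _ _ _ hε).1 (hc (P.Kh (torusProj (w k, 0))))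
  have hl := (bowenDist_lt _ _ _ _ hε).1 (hc (P.Kh (torusProj (w l, 0))))
  have := hE N (w k) (w l) fun i hi => by
    have h1 := hk i (by omega)
    have h2 := hl i (by omega)
    rw [hcc, dist_comm] at h1
    have h3 := dist_triangle ((P.Tt 1)^[i] (P.Kh (torusProj (w k, 0))))
      ((P.Tt 1)^[i] (c (P.Kh (torusProj (w l, 0))))) ((P.Tt 1)^[i] (P.Kh (torusProj (w l, 0))))
    linarith
  change |f (w k) - f (w l)| < 1 / 8 at this
  rw [hw, hw, add_sub_add_left_eq_sub] at this
  have hz : |((k : ℕ) : ℤ) - ((l : ℕ) : ℤ)| < 1 := by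
    have h3 : |((k : ℕ) : ℝ) - ((l : ℕ) : ℝ)| < 1 := by linarith
    exact_mod_cast h3
  have := Int.abs_lt_one_iff.1 hz
  exact hkl (Fin.ext (by omega))

lemma osc_ge : ∀ᶠ j in atTop, P.bb j / 4 ≤ P.U (P.NN j) (torusProj (1 / (4 * P.q j), 0)) -
    P.U (P.NN j) (torusProj (3 / (4 * P.q j), 0)) := by
  filter_upwards [P.eta_tend.eventually (gt_mem_nhds (show (0 : ℝ) < 1 / 16 by norm_num))] with j hj
  have hq := P.q_pos' j
  have hb := P.bb_pos j
  have x1 : (P.X j (torusProj (1 / (4 * P.q j), 0))).im = 1 := by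
    rw [X_proj, Complex.exp_ofReal_mul_I_im]
    have : 2 * Real.pi * (P.q j * (1 / (4 * (P.q j : ℝ)), (0 : ℝ)).1 - P.p j * (1 / (4 * (P.q j : ℝ)), (0 : ℝ)).2) = Real.pi / 2 := by
      simp only; field_simp; ring
    rw [this, Real.sin_pi_div_two]
  have x2 : (P.X j (torusProj (3 / (4 * P.q j), 0))).im = -1 := by
    rw [X_proj, Complex.exp_ofReal_mul_I_im]
    have : 2 * Real.pi * (P.q j * (3 / (4 * (P.q j : ℝ)), (0 : ℝ)).1 - P.p j * (3 / (4 * (P.q j : ℝ)), (0 : ℝ)).2) = Real.pi / 2 + Real.pi := by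
      simp only; field_simp; ring
    rw [this, Real.sin_add_pi, Real.sin_pi_div_two]
  have h1 := abs_le.1 (P.U_disp j (torusProj (1 / (4 * P.q j), 0)))
  have h2 := abs_le.1 (P.U_disp j (torusProj (3 / (4 * P.q j), 0)))
  rw [x1] at h1
  rw [x2] at h2
  have h3 : P.bb j / 4 ≤ P.bb j / Real.pi := by
    have := Real.pi_le_four
    have := Real.pi_pos
    gcongr
  have h4 : P.bb j * P.eta j ≤ P.bb j * (1 / 16) := by gcongr
  linarith [h1.1, h2.2]

lemma entropy (G : ℕ → ℝ) (n₀ : ℕ) (hG : ∀ m ≥ n₀, ∀ t, intScale2 8 2 m t = Real.exp (t * G m))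
    (h1 : ∀ t > 1, Tendsto (fun n : ℕ =>
        (1 + ∑' i, P.q i * P.a i * min (2 * (n : ℝ) + 4) (1 / P.δ i)) / Real.exp (t * G n)) atTop (𝓝 0))
    (h2 : ∀ t, 0 < t → t < 1 → ∀ᶠ j in atTop,
        Real.exp (t * G (⌊1 / (2 * P.δ j)⌋₊ + 1)) ≤ P.a j / P.δ j / 4) :
    HasUpperTopSlowEntropy (P.Tt 1) (intScale2 8 2) 1 := by
  obtain ⟨ε₀, hε₀, hge⟩ := P.cover_ge
  refine tendsto_const_nhds.congr' ?_
  filter_upwards [Ioc_mem_nhdsGT hε₀] with ε hε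
  obtain ⟨C, hC, hle⟩ := P.cover_le hε.1
  have hNt : Tendsto (fun j => P.NN j + 1) atTop atTop := by
    rw [← tendsto_natCast_atTop_iff (R := ℝ)]
    have h3 : Tendsto (fun j => 1 / (2 * P.δ j)) atTop atTop := by
      have h4 : Tendsto (fun j => 2 * P.δ j) atTop (𝓝[>] 0) :=
        tendsto_nhdsWithin_iff.2 ⟨by simpa using P.δ_tend.const_mul 2,
          Eventually.of_forall fun j => by have := P.δ_pos j; simp [this]⟩
      simp only [one_div]
      exact h4.inv_tendsto_nhdsGT_zero
    refine tendsto_atTop_mono (fun j => ?_) h3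
    have := P.NN_ge j
    push_cast; exact this.le
  symm
  rw [topSlowEntFun]
  have low : ∀ t, 0 < t → t < 1 → t ∈ {t : ℝ | 0 < t ∧
      0 < Filter.atTop.limsup fun n => (bowenCoverNum (P.Tt 1) n ε : ℝ≥0∞) / ENNReal.ofReal (intScale2 8 2 n t)} := by
    intro t ht ht1
    refine ⟨ht, lt_of_lt_of_le one_pos (le_limsup_of_frequently_le ?_ (by isBoundedDefault))⟩
    refine hNt.frequently (Eventually.frequently ?_)
    filter_upwards [h2 t ht ht1, P.osc_ge, hNt.eventually_ge_atTop n₀] with j ha hb hc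
    rw [hG _ hc]
    have h5 := hge ε hε.1 hε.2 (P.NN j) (3 / (4 * P.q j)) (1 / (4 * P.q j))
    have h6 : Real.exp (t * G (P.NN j + 1)) ≤ bowenCoverNum (P.Tt 1) (P.NN j + 1) ε := (ha.trans hb).trans h5
    rw [ENNReal.le_div_iff_mul_le (Or.inl (by simp [Real.exp_pos])) (Or.inl ENNReal.ofReal_ne_top), one_mul,
      ← ENNReal.ofReal_natCast]
    exact ENNReal.ofReal_le_ofReal h6
  refine csSup_eq_of_forall_le_of_forall_lt_exists_gt ⟨1 / 2, low _ (by norm_num) (by norm_num)⟩ ?_ ?_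
  · rintro t ⟨ht, hlim⟩
    by_contra! ht1
    refine hlim.ne' (Tendsto.limsup_eq ?_)
    have h7 : Tendsto (fun n : ℕ => ENNReal.ofReal (C * (P.WW n / Real.exp (t * G n)))) atTop (𝓝 0) := by
      have := ENNReal.tendsto_ofReal ((h1 t ht1).const_mul C)
      simpa [WW] using this
    refine tendsto_of_tendsto_of_tendsto_of_le_of_le' tendsto_const_nhds h7 (Eventually.of_forall fun _ => bot_le) ?_
    filter_upwards [eventually_ge_atTop n₀] with n hn
    rw [hG n hn, ← mul_div_assoc, ENNReal.ofReal_div_of_pos (Real.exp_pos _), ← ENNReal.ofReal_natCast]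
    exact ENNReal.div_le_div_right (ENNReal.ofReal_le_ofReal (hle n)) _
  · intro w hw
    refine ⟨(max w 0 + 1) / 2, low _ ?_ ?_, ?_⟩
    · have := le_max_right w 0; linarith
    · have : max w 0 < 1 := max_lt hw one_pos
      linarith
    · have : max w 0 < 1 := max_lt hw one_pos
      have := le_max_left w 0
      linarith

end Par

end

/-- There exist an integer `q₁ ≥ 2` and a weakly mixing `C^∞`
volume-preserving diffeomorphism `T` of `𝕋²` whose upper topological slow entropy with
respect to the intermediate scaling family `a^{int2,8}` (with base `q₁`) equals `1`. -/
theorem stmt0 :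
    ∃ q₁ : ℕ, 2 ≤ q₁ ∧ ∃ T : Torus2 → Torus2,
      IsCkTorusDiffeo ⊤ T ∧
      MeasurePreserving T (volume : Measure Torus2) volume ∧
      WeaklyMixing T (volume : Measure Torus2) ∧
      HasUpperTopSlowEntropy T (intScale2 8 q₁) 1 := by
  obtain ⟨G, n₀, hn, hG, Gm, Hm, G0, Gt, Ht⟩ := exists_G
  obtain ⟨P, h1, h2⟩ := exists_par G n₀ hn Gm Hm G0 Gt Ht
  exact ⟨2, le_rfl, P.Tt 1, P.diffeo, P.mp_T, P.wm, P.entropy G n₀ hG h1 h2⟩
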